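/- arXiv:1612.08100 — 2 statements merged into one kernel-verified Lean document; each statement's English description precedes it below -/
import Mathlib

section
/- Let U be an N × N random unitary matrix distributed according to Haar measure on U(N). Then for every x > 0, P[ max_{1 ≤ k ≤ N} |𝒩_{2πk/N} − k| > x ] ≤ 2N · exp(−min{x²/(4 log(eN)), x/2}). -/
open MeasureTheory Real Filter

noncomputable section

/-- The Borel σ-algebra on the unitary group `U(N)`. -/
instance (N : ℕ) : MeasurableSpace (Matrix.unitaryGroup (Fin N) ℂ) := borel _

instance (N : ℕ) : BorelSpace (Matrix.unitaryGroup (Fin N) ℂ) := ⟨rfl⟩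

/-- The eigenvalue angles (in `[0, 2π)`, with multiplicity) of a unitary matrix `U`:
the arguments of the roots of the characteristic polynomial, shifted to lie in `[0, 2π)`. -/
def eigenAngles (N : ℕ) (U : Matrix.unitaryGroup (Fin N) ℂ) : Multiset ℝ :=
  ((U : Matrix (Fin N) (Fin N) ℂ).charpoly.roots).map
    (fun z => if 0 ≤ Complex.arg z then Complex.arg z else Complex.arg z + 2 * π)

open Classical in
/-- `𝒩_A`: the number of eigenvalue angles of `U` lying in the set `A`. -/
def countAngles (N : ℕ) (U : Matrix.unitaryGroup (Fin N) ℂ) (A : Set ℝ) : ℕ :=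
  Multiset.card ((eigenAngles N U).filter (· ∈ A))

/-- `𝒩_θ`: the number of eigenvalue angles of `U` in `[0, θ]`. -/
def countFun (N : ℕ) (U : Matrix.unitaryGroup (Fin N) ℂ) (θ : ℝ) : ℕ :=
  countAngles N U (Set.Icc 0 θ)

/-- The Kolmogorov distance between the empirical spectral measure of `U` and the
uniform measure on the circle: `sup_{0 ≤ θ < 2π} |𝒩_θ/N - θ/(2π)|`. -/
def dK (N : ℕ) (U : Matrix.unitaryGroup (Fin N) ℂ) : ℝ :=
  ⨆ θ : Set.Ico (0:ℝ) (2 * π), |(countFun N U θ : ℝ) / N - (θ : ℝ) / (2 * π)|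

/-- `max_{1 ≤ k ≤ N} |𝒩_{2πk/N} - k|`. -/
def maxDev (N : ℕ) (U : Matrix.unitaryGroup (Fin N) ℂ) : ℝ :=
  ⨆ k : (Finset.Icc 1 N : Finset ℕ), |(countFun N U (2 * π * (k : ℕ) / N) : ℝ) - ((k : ℕ) : ℝ)|

end

namespace HaarU
open MvPolynomial

/-- The linear form `(x A)_a`. -/
noncomputable def rowForm {N : ℕ} (A : Matrix (Fin N) (Fin N) ℂ) (a : Fin N) :
    MvPolynomial (Fin N) ℂ := ∑ b, C (A b a) * X b

/-- Substitution `x ↦ x A`. -/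
noncomputable def lsub {N : ℕ} (A : Matrix (Fin N) (Fin N) ℂ) :
    MvPolynomial (Fin N) ℂ →ₐ[ℂ] MvPolynomial (Fin N) ℂ := aeval (rowForm A)

lemma lsub_lsub {N : ℕ} (A B : Matrix (Fin N) (Fin N) ℂ) (p : MvPolynomial (Fin N) ℂ) :
    lsub A (lsub B p) = lsub (A * B) p := by
  have : (lsub A).comp (lsub B) = lsub (A * B) := by
    apply MvPolynomial.algHom_ext
    intro a
    simp only [lsub, AlgHom.comp_apply, aeval_X, rowForm, map_sum, map_mul, Matrix.mul_apply,
      Finset.sum_mul, Finset.mul_sum]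
    rw [Finset.sum_comm]
    refine Finset.sum_congr rfl fun b _ => Finset.sum_congr rfl fun c _ => ?_
    simp only [aeval_C, algebraMap_eq]
    ring
  rw [← this]; rfl

lemma rowForm_isHomogeneous {N : ℕ} (A : Matrix (Fin N) (Fin N) ℂ) (a : Fin N) :
    (rowForm A a).IsHomogeneous 1 := by
  refine IsHomogeneous.sum _ _ _ fun b _ => ?_
  simpa using (isHomogeneous_C (Fin N) (A b a)).mul (isHomogeneous_X ℂ b)

lemma lsub_monomial {N : ℕ} (A : Matrix (Fin N) (Fin N) ℂ) (κ : Fin N →₀ ℕ) (c : ℂ) :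
    lsub A (monomial κ c) = C c * ∏ a, rowForm A a ^ κ a := by
  rw [lsub, aeval_monomial, Finsupp.prod_fintype _ _ (by simp)]
  rfl

lemma lsub_monomial_isHomogeneous {N : ℕ} (A : Matrix (Fin N) (Fin N) ℂ) (κ : Fin N →₀ ℕ)
    (k : ℕ) (hκ : κ ∈ Finset.finsuppAntidiag Finset.univ k) :
    (lsub A (monomial κ 1)).IsHomogeneous k := by
  rw [lsub_monomial]
  simp only [map_one, one_mul]
  have h1 : ∑ a, κ a = k := (Finset.mem_finsuppAntidiag.1 hκ).1
  rw [← h1]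
  refine IsHomogeneous.prod _ _ _ fun a _ => ?_
  simpa using (rowForm_isHomogeneous A a).pow (κ a)

lemma homog_expand {N k : ℕ} (p : MvPolynomial (Fin N) ℂ) (hp : p.IsHomogeneous k) :
    p = ∑ μ ∈ Finset.finsuppAntidiag Finset.univ k, monomial μ (coeff μ p) := by
  ext ν
  rw [coeff_sum]
  simp only [coeff_monomial]
  rw [Finset.sum_ite_eq']
  split_ifs with h
  · rfl
  · by_contra hne
    apply h
    have := hp hne
    rw [Finset.mem_finsuppAntidiag]
    refine ⟨?_, Finset.subset_univ _⟩
    rw [← this, Finsupp.weight_apply, Finsupp.sum_fintype _ _ (by simp)]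
    simp

/-- Matrix coefficients of the symmetric power. -/
noncomputable def cc {N : ℕ} (A : Matrix (Fin N) (Fin N) ℂ) (κ μ : Fin N →₀ ℕ) : ℂ :=
  coeff μ (lsub A (monomial κ 1))

/-- Trace of the symmetric power. -/
noncomputable def hs {N : ℕ} (k : ℕ) (A : Matrix (Fin N) (Fin N) ℂ) : ℂ :=
  ∑ κ ∈ Finset.finsuppAntidiag Finset.univ k, cc A κ κ

lemma cc_mul {N k : ℕ} (A B : Matrix (Fin N) (Fin N) ℂ) (κ ν : Fin N →₀ ℕ)
    (hκ : κ ∈ Finset.finsuppAntidiag Finset.univ k) :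
    cc (A * B) κ ν = ∑ μ ∈ Finset.finsuppAntidiag Finset.univ k, cc B κ μ * cc A μ ν := by
  unfold cc
  rw [← lsub_lsub]
  have hh := homog_expand _ (lsub_monomial_isHomogeneous B κ k hκ)
  generalize lsub B (monomial κ 1) = p at hh ⊢
  conv_lhs => rw [hh, map_sum, coeff_sum]
  refine Finset.sum_congr rfl fun μ hμ => ?_
  rw [lsub_monomial, lsub_monomial A μ 1, coeff_C_mul, C_1, one_mul]

lemma hs_mul_comm {N : ℕ} (k : ℕ) (A B : Matrix (Fin N) (Fin N) ℂ) :
    hs k (A * B) = hs k (B * A) := by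
  unfold hs
  rw [Finset.sum_congr rfl fun κ hκ => cc_mul A B κ κ hκ,
    Finset.sum_congr rfl fun κ hκ => cc_mul B A κ κ hκ, Finset.sum_comm]
  refine Finset.sum_congr rfl fun _ _ => Finset.sum_congr rfl fun _ _ => mul_comm _ _

lemma hs_conj {N : ℕ} (k : ℕ) (V D W : Matrix (Fin N) (Fin N) ℂ) (h : W * V = 1) :
    hs k (V * D * W) = hs k D := by
  rw [mul_assoc, hs_mul_comm, mul_assoc, h, mul_one]

lemma hs_diagonal {N : ℕ} (k : ℕ) (z : Fin N → ℂ) :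
    hs k (Matrix.diagonal z) = ∑ κ ∈ Finset.finsuppAntidiag Finset.univ k, ∏ a, z a ^ κ a := by
  unfold hs
  refine Finset.sum_congr rfl fun κ _ => ?_
  have h1 : ∀ a, rowForm (Matrix.diagonal z) a = C (z a) * X a := by
    intro a
    unfold rowForm
    rw [Finset.sum_eq_single a]
    · simp
    · intro b _ hb; simp [Matrix.diagonal_apply_ne _ hb]
    · simp
  unfold cc
  rw [lsub_monomial]
  simp only [h1, mul_pow, Finset.prod_mul_distrib, map_one, one_mul]
  have h2 : (∏ a, (X a : MvPolynomial (Fin N) ℂ) ^ κ a) = monomial κ 1 := by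
    rw [monomial_eq, Finsupp.prod_fintype _ _ (by simp)]; simp
  rw [h2]
  simp only [← map_pow, ← map_prod]
  rw [coeff_C_mul, coeff_monomial]; simp

/-- generating series -/
noncomputable def HS {N : ℕ} (z : Fin N → ℂ) (S : Finset (Fin N)) : PowerSeries ℂ :=
  ∏ a ∈ S, PowerSeries.mk fun k => z a ^ k

lemma hs_diagonal_eq {N : ℕ} (k : ℕ) (z : Fin N → ℂ) :
    hs k (Matrix.diagonal z) = PowerSeries.coeff k (HS z Finset.univ) := by
  rw [hs_diagonal, HS, PowerSeries.coeff_prod]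
  simp

/-- extension by zero to negative integers -/
noncomputable def extz (h : ℕ → ℂ) (n : ℤ) : ℂ := if 0 ≤ n then h n.toNat else 0

lemma extz_step {N : ℕ} (z : Fin N → ℂ) (S : Finset (Fin N)) (a : Fin N) (ha : a ∉ S) (n : ℤ) :
    extz (fun k => PowerSeries.coeff k (HS z (insert a S))) (n + 1)
      - z a * extz (fun k => PowerSeries.coeff k (HS z (insert a S))) n
    = extz (fun k => PowerSeries.coeff k (HS z S)) (n + 1) := by
  have hH : (1 - PowerSeries.C (z a) * PowerSeries.X) * HS z (insert a S) = HS z S := by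
    rw [HS, Finset.prod_insert ha, ← mul_assoc]
    have : (1 - PowerSeries.C (z a) * PowerSeries.X) * (PowerSeries.mk fun k => z a ^ k) = 1 := by
      ext k
      rw [sub_mul, one_mul, map_sub, mul_assoc, PowerSeries.coeff_C_mul]
      cases k with
      | zero => simp
      | succ k => 
        rw [mul_comm PowerSeries.X, PowerSeries.coeff_succ_mul_X]
        simp [PowerSeries.coeff_one, pow_succ']
    rw [this, one_mul]; rfl
  have hc : ∀ k, PowerSeries.coeff k ((1 - PowerSeries.C (z a) * PowerSeries.X) * HS z (insert a S))
      = PowerSeries.coeff k (HS z S) := fun k => by rw [hH]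
  rcases lt_trichotomy (n + 1) 0 with h | h | h
  · simp [extz, not_le.2 h, show ¬ (0 ≤ n) by omega]
  · have h0 := hc 0
    rw [sub_mul, one_mul, map_sub, mul_assoc, PowerSeries.coeff_C_mul] at h0
    simp only [PowerSeries.coeff_zero_X_mul, mul_zero, sub_zero] at h0
    simp only [extz, h, show ¬ (0 ≤ n) by omega, if_false, le_refl, if_true, Int.toNat_zero, h0]
    simp
  · obtain ⟨m, rfl⟩ : ∃ m : ℕ, n = m := ⟨n.toNat, by omega⟩
    have h0 := hc (m + 1)
    rw [sub_mul, one_mul, map_sub, mul_assoc, PowerSeries.coeff_C_mul, mul_comm PowerSeries.X, 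
      PowerSeries.coeff_succ_mul_X] at h0
    have e1 : ((m : ℤ) + 1).toNat = m + 1 := by omega
    simp only [extz, e1, Int.toNat_natCast]
    rw [if_pos (by omega), if_pos (by omega), if_pos (by omega), h0]

/-- The shift operator on sequences. -/
def shiftZ : Module.End ℂ (ℤ → ℂ) where
  toFun g n := g (n + 1)
  map_add' _ _ := rfl
  map_smul' _ _ := rfl

lemma shiftZ_pow (l : ℕ) (g : ℤ → ℂ) (n : ℤ) : (shiftZ ^ l) g n = g (n + l) := by
  induction l generalizing n with
  | zero => simp
  | succ l ih =>
    rw [pow_succ', Module.End.mul_apply]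
    show (shiftZ ^ l) g (n + 1) = _
    rw [ih]; congr 1; push_cast; ring

lemma extz_annih {N : ℕ} (z : Fin N → ℂ) (S : Finset (Fin N)) :
    Polynomial.aeval shiftZ (∏ a ∈ S, (Polynomial.X - Polynomial.C (z a)))
      (extz fun k => PowerSeries.coeff k (HS z S)) = (fun n => if n = -(S.card : ℤ) then 1 else 0) := by
  induction S using Finset.induction_on with
  | empty =>
    simp only [Finset.prod_empty, map_one, Module.End.one_apply]
    funext n
    simp only [extz, HS, Finset.prod_empty, PowerSeries.coeff_one, Finset.card_empty]
    split_ifs <;> first | rfl | omega | simp_all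
  | insert a S ha ih =>
    rw [Finset.prod_insert ha, mul_comm, map_mul, Module.End.mul_apply]
    have h1 : Polynomial.aeval shiftZ (Polynomial.X - Polynomial.C (z a))
        (extz fun k => PowerSeries.coeff k (HS z (insert a S)))
        = shiftZ (extz fun k => PowerSeries.coeff k (HS z S)) := by
      funext n
      have := extz_step z S a ha n
      simpa [shiftZ] using this
    rw [h1]
    have hcomm : ∀ p : Polynomial ℂ, ∀ g, Polynomial.aeval shiftZ p (shiftZ g)
        = shiftZ (Polynomial.aeval shiftZ p g) := by
      intro p g
      have h3 : Polynomial.aeval shiftZ (p * Polynomial.X) = Polynomial.aeval shiftZ (Polynomial.X * p) := by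
        rw [mul_comm]
      simpa using congrArg (fun T => T g) h3
    rw [hcomm, ih]
    funext n
    rw [Finset.card_insert_of_notMem ha]
    show (if n + 1 = _ then (1 : ℂ) else 0) = _
    have : (n + 1 = -(S.card : ℤ)) ↔ (n = -((S.card + 1 : ℕ) : ℤ)) := by push_cast; omega
    simp only [this]

end HaarU

namespace HaarU

lemma exists_unit_notMem_finset (S : Finset ℂ) : ∃ c : ℂ, ‖c‖ = 1 ∧ c ∉ S := by
  have hinf : (Metric.sphere (0:ℂ) 1).Infinite := by
    apply Set.Infinite.mono (s := Set.range (fun n : ℕ => Complex.exp ((1 / ((n:ℝ) + 1) : ℝ) * Complex.I)))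
    · rintro _ ⟨n, rfl⟩
      simp only [mem_sphere_iff_norm, sub_zero]
      exact Complex.norm_exp_ofReal_mul_I _
    · apply Set.infinite_range_of_injective
      intro a b hab
      have harg : ∀ n : ℕ, Complex.arg (Complex.exp ((1 / ((n:ℝ) + 1) : ℝ) * Complex.I)) = 1 / ((n:ℝ) + 1) := by
        intro n
        rw [Complex.arg_exp_mul_I, toIocMod_eq_self]
        have h1 : (1:ℝ) / (n + 1) ≤ 1 := by
          rw [div_le_one (by positivity)]; linarith [(Nat.cast_nonneg n : (0:ℝ) ≤ n)]
        have h2 : (0:ℝ) < 1 / (n + 1) := by positivity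
        constructor <;> linarith [Real.pi_gt_three]
      have := congrArg Complex.arg hab
      simp only [] at this
      rw [harg, harg] at this
      have h3 : (a:ℝ) + 1 = b + 1 := by
        simpa using this
      exact_mod_cast add_right_cancel h3
  obtain ⟨c, hc, hcS⟩ := hinf.exists_notMem_finset S
  exact ⟨c, by simpa using hc, hcS⟩

lemma unitary_diag {N : ℕ} (U : Matrix (Fin N) (Fin N) ℂ) (hU : U ∈ Matrix.unitaryGroup (Fin N) ℂ) :
    ∃ (P W : Matrix (Fin N) (Fin N) ℂ) (z : Fin N → ℂ), W * P = 1 ∧ P * W = 1 ∧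
      U = P * Matrix.diagonal z * W := by
  classical
  obtain ⟨c, hc, hcS⟩ := exists_unit_notMem_finset U.charpoly.roots.toFinset
  have hcc : c * star c = 1 := by
    have := Complex.mul_conj c
    rw [Complex.normSq_eq_norm_sq, hc] at this
    simpa using this
  set M : Matrix (Fin N) (Fin N) ℂ := Matrix.scalar (Fin N) c - U with hM
  have hdet : IsUnit M.det := by
    rw [isUnit_iff_ne_zero, hM, ← Matrix.eval_charpoly]
    intro h0
    apply hcS
    rw [Multiset.mem_toFinset, Polynomial.mem_roots U.charpoly_monic.ne_zero]
    exact h0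
  have hU' : star U * U = 1 := (Matrix.mem_unitaryGroup_iff').1 hU
  have hMM : c • star M + star c • M = star M * M := by
    have hs : star M = star c • 1 - star U := by
      rw [hM, star_sub, Matrix.scalar_apply, ← Matrix.smul_one_eq_diagonal, star_smul, star_one]
    have hM' : M = c • 1 - U := by rw [hM, Matrix.scalar_apply, ← Matrix.smul_one_eq_diagonal]
    rw [hs, hM']
    simp only [sub_mul, mul_sub, smul_mul_assoc, mul_smul_comm, one_mul, mul_one, smul_sub, hU',
      smul_smul, hcc, mul_comm (star c) c, one_smul]
    abel
  have hM1 : M * M⁻¹ = 1 := Matrix.mul_nonsing_inv _ hdet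
  have hM2 : M⁻¹ * M = 1 := Matrix.nonsing_inv_mul _ hdet
  have hM3 : star M⁻¹ * star M = 1 := by rw [← star_mul, hM1, star_one]
  have key : c • M⁻¹ + star c • star M⁻¹ = 1 := by
    have := congrArg (fun X => star M⁻¹ * X * M⁻¹) hMM
    simp only [mul_add, add_mul, mul_smul_comm, smul_mul_assoc, hM3, one_mul] at this
    rw [mul_assoc (star M⁻¹) M, hM1, mul_one, ← mul_assoc, hM3, one_mul, hM1] at this
    exact this
  set G : Matrix (Fin N) (Fin N) ℂ := (2 * Complex.I * c) • M⁻¹ - Complex.I • 1 with hG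
  have hGh : G.IsHermitian := by
    show star G = G
    rw [hG, star_sub, star_smul, star_smul, star_one]
    have hk : star c • star M⁻¹ = 1 - c • M⁻¹ := by rw [← key]; abel
    simp only [star_mul', Complex.star_def, Complex.conj_I, map_ofNat]
    rw [Complex.star_def] at hk
    rw [mul_comm (2 * -Complex.I), mul_comm ((starRingEnd ℂ) c), mul_smul, hk]
    module
  have hsp := hGh.spectral_theorem
  rw [Unitary.conjStarAlgAut_apply] at hsp
  set Q := hGh.eigenvectorUnitary
  set lam := hGh.eigenvalues
  set D : Matrix (Fin N) (Fin N) ℂ := Matrix.diagonal (RCLike.ofReal ∘ lam) with hD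
  have hQ1 : (star Q : Matrix (Fin N) (Fin N) ℂ) * (Q : Matrix (Fin N) (Fin N) ℂ) = 1 :=
    Unitary.coe_star_mul_self Q
  have hQ2 : (Q : Matrix (Fin N) (Fin N) ℂ) * (star Q : Matrix (Fin N) (Fin N) ℂ) = 1 :=
    Unitary.coe_mul_star_self Q
  have hne : ∀ i, (lam i : ℂ) + Complex.I ≠ 0 := by
    intro i h
    have := congrArg Complex.im h
    simp at this
  refine ⟨Q, star Q, fun i => c - 2 * Complex.I * c / (lam i + Complex.I), hQ1, hQ2, ?_⟩
  have hGM : (G + Complex.I • 1) * M = (2 * Complex.I * c) • 1 := by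
    rw [hG, sub_add_cancel, smul_mul_assoc, hM2]
  have hE : G + Complex.I • 1 = Q * Matrix.diagonal (fun i => (lam i : ℂ) + Complex.I) * star (Q : Matrix (Fin N) (Fin N) ℂ) := by
    have : Matrix.diagonal (fun i => (lam i : ℂ) + Complex.I) = D + Complex.I • 1 := by
      rw [hD, Matrix.smul_one_eq_diagonal, Matrix.diagonal_add]; rfl
    rw [this, mul_add, add_mul, mul_smul_comm, smul_mul_assoc, mul_one, hQ2]
    congr 1
  have hM4 : M = Q * Matrix.diagonal (fun i => 2 * Complex.I * c / (lam i + Complex.I)) * star (Q : Matrix (Fin N) (Fin N) ℂ) := by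
    have h5 : (Q * Matrix.diagonal (fun i => 1 / ((lam i : ℂ) + Complex.I)) * star (Q : Matrix (Fin N) (Fin N) ℂ)) * (G + Complex.I • 1) = 1 := by
      rw [hE]
      calc _ = (Q : Matrix (Fin N) (Fin N) ℂ) * (Matrix.diagonal (fun i => 1 / ((lam i : ℂ) + Complex.I)) * (star (Q : Matrix (Fin N) (Fin N) ℂ) * Q) * Matrix.diagonal (fun i => (lam i : ℂ) + Complex.I)) * star (Q : Matrix (Fin N) (Fin N) ℂ) := by
            simp only [mul_assoc]
        _ = 1 := by
            rw [hQ1, mul_one, Matrix.diagonal_mul_diagonal]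
            have : (fun i => 1 / ((lam i : ℂ) + Complex.I) * (lam i + Complex.I)) = fun _ => 1 := by
              funext i; field_simp [hne i]
            rw [this, Matrix.diagonal_one, mul_one, hQ2]
    have h6 := congrArg (fun X => (Q * Matrix.diagonal (fun i => 1 / ((lam i : ℂ) + Complex.I)) * star (Q : Matrix (Fin N) (Fin N) ℂ)) * X) hGM
    rw [← mul_assoc, h5, one_mul, mul_smul_comm, mul_one] at h6
    rw [h6, ← smul_mul_assoc, ← mul_smul_comm, ← Matrix.diagonal_smul]
    congr 3
    funext i
    simp [div_eq_mul_inv]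
  have h7 : Matrix.diagonal (fun i => c - 2 * Complex.I * c / ((lam i : ℂ) + Complex.I)) = c • 1 - Matrix.diagonal (fun i => 2 * Complex.I * c / ((lam i : ℂ) + Complex.I)) := by
    rw [Matrix.smul_one_eq_diagonal, Matrix.diagonal_sub]
  show U = Q * Matrix.diagonal (fun i => c - 2 * Complex.I * c / ((lam i : ℂ) + Complex.I)) * star (Q : Matrix (Fin N) (Fin N) ℂ)
  rw [h7, mul_sub, sub_mul, ← hM4, mul_smul_comm, smul_mul_assoc, mul_one, hQ2, hM, Matrix.scalar_apply,
    ← Matrix.smul_one_eq_diagonal]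
  abel

lemma det_aeval {n : Type*} [Fintype n] [DecidableEq n] (A : Matrix n n ℂ) (f : Polynomial ℂ) :
    (Polynomial.aeval A f).det = (A.charpoly.roots.map fun z => f.eval z).prod := by
  have hsp : f.Splits := IsAlgClosed.splits f
  have hlin : ∀ s : ℂ, (Polynomial.aeval A (Polynomial.X - Polynomial.C s)).det
      = (A.charpoly.roots.map fun z => (Polynomial.X - Polynomial.C s).eval z).prod := by
    intro s
    have h1 : Polynomial.aeval A (Polynomial.X - Polynomial.C s) = - (Matrix.scalar n s - A) := by
      simp [Matrix.algebraMap_eq_diagonal]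
    have hs2 := IsAlgClosed.splits A.charpoly
    rw [h1, Matrix.det_neg, ← Matrix.eval_charpoly]
    conv_lhs => rw [hs2.eq_prod_roots_of_monic A.charpoly_monic]
    have hcard : Multiset.card A.charpoly.roots = Fintype.card n := by
      rw [← hs2.natDegree_eq_card_roots, A.charpoly_natDegree_eq_dim]
    rw [← hcard, Polynomial.eval_multiset_prod, Multiset.map_map, ← Multiset.prod_replicate,
      ← Multiset.map_const', ← Multiset.prod_map_mul]
    congr 1
    refine Multiset.map_congr rfl fun z _ => ?_
    simp
  have hmul : ∀ p q : Polynomial ℂ, (Polynomial.aeval A p).det = (A.charpoly.roots.map fun z => p.eval z).prod →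
      (Polynomial.aeval A q).det = (A.charpoly.roots.map fun z => q.eval z).prod →
      (Polynomial.aeval A (p * q)).det = (A.charpoly.roots.map fun z => (p * q).eval z).prod := by
    intro p q hp hq
    rw [map_mul, Matrix.det_mul, hp, hq, ← Multiset.prod_map_mul]
    simp
  rw [hsp.eq_prod_roots]
  apply hmul
  · have hcard : Multiset.card A.charpoly.roots = Fintype.card n := by
      rw [← (IsAlgClosed.splits A.charpoly).natDegree_eq_card_roots, A.charpoly_natDegree_eq_dim]
    simp [hcard, Matrix.algebraMap_eq_diagonal]
  · induction f.roots using Multiset.induction_on with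
    | empty => simp
    | cons a s ih =>
      rw [Multiset.map_cons, Multiset.prod_cons]
      exact hmul _ _ (hlin a) ih

/-- companion matrix -/
def compan (N : ℕ) (q : Polynomial ℂ) : Matrix (Fin N) (Fin N) ℂ :=
  Matrix.of fun i j => if (i : ℕ) + 1 = N then - q.coeff j else if (j : ℕ) = i + 1 then 1 else 0

lemma compan_charpoly (N : ℕ) (q : Polynomial ℂ) (hq : q.Monic) (hd : q.natDegree = N) :
    (compan N q).charpoly = q := by
  subst hd
  rw [← Matrix.charpoly_transpose]
  have h := charpoly_leftMulMatrix (AdjoinRoot.powerBasis hq.ne_zero)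
  have hm := AdjoinRoot.minpoly_powerBasis_gen_of_monic hq
  rw [PowerBasis.leftMulMatrix, PowerBasis.minpolyGen_eq, hm] at h
  exact h
end HaarU

namespace HaarU

lemma aeval_shift_apply (q : Polynomial ℂ) (g : ℤ → ℂ) (n : ℤ) :
    Polynomial.aeval shiftZ q g n = ∑ b ∈ Finset.range (q.natDegree + 1), q.coeff b * g (n + b) := by
  rw [Polynomial.aeval_eq_sum_range]
  simp [LinearMap.sum_apply, Finset.sum_apply, shiftZ_pow]

lemma roots_prod_fin {N : ℕ} (z : Fin N → ℂ) :
    (∏ a, (Polynomial.X - Polynomial.C (z a))).roots = Finset.univ.val.map z := by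
  rw [Finset.prod_eq_multiset_prod, ← Polynomial.roots_multiset_prod_X_sub_C (Finset.univ.val.map z),
    Multiset.map_map]
  rfl

/-- Toeplitz block -/
noncomputable def TT (N : ℕ) (h : ℤ → ℂ) (b : ℕ) : Matrix (Fin N) (Fin N) ℂ :=
  Matrix.of fun i j => h ((b : ℤ) + i - j)

lemma TT_succ (N : ℕ) (z : Fin N → ℂ) (b : ℕ) :
    TT N (extz fun k => PowerSeries.coeff k (HS z Finset.univ)) (b + 1)
      = compan N (∏ a, (Polynomial.X - Polynomial.C (z a))) *
        TT N (extz fun k => PowerSeries.coeff k (HS z Finset.univ)) b := by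
  set q := ∏ a, (Polynomial.X - Polynomial.C (z a)) with hq
  set h := extz fun k => PowerSeries.coeff k (HS z Finset.univ) with hh
  have hmon : q.Monic := Polynomial.monic_prod_of_monic _ _ fun a _ => Polynomial.monic_X_sub_C _
  have hdeg : q.natDegree = N := by
    rw [hq, Polynomial.natDegree_prod_of_monic _ _ fun a _ => Polynomial.monic_X_sub_C _]
    simp
  have hann : ∀ n : ℤ, n ≠ -(N:ℤ) → h (n + N) = - ∑ l : Fin N, q.coeff l * h (n + (l:ℕ)) := by
    intro n hn
    have h1 := congrFun (extz_annih z Finset.univ) n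
    rw [← hq, ← hh, aeval_shift_apply, hdeg, Finset.sum_range_succ, Finset.card_univ,
      Fintype.card_fin, if_neg hn] at h1
    have h2 : q.coeff N = 1 := by rw [← hdeg]; exact hmon
    rw [h2, one_mul, Finset.sum_range] at h1
    linear_combination h1
  ext i j
  rw [Matrix.mul_apply]
  simp only [TT, compan, Matrix.of_apply]
  by_cases hi : (i : ℕ) + 1 = N
  · simp only [hi, if_true]
    have hn : (b : ℤ) - j ≠ -(N:ℤ) := by have := j.2; omega
    have := hann _ hn
    rw [show (((b + 1 : ℕ) : ℤ) + i - j) = (b:ℤ) - j + N by push_cast; omega, this, ← Finset.sum_neg_distrib]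
    refine Finset.sum_congr rfl fun l _ => ?_
    rw [show (b:ℤ) - j + (l:ℕ) = b + l - j by ring]
    ring
  · simp only [hi, if_false]
    have hi2 : (i:ℕ) + 1 < N := by have := i.2; omega
    rw [Finset.sum_eq_single ⟨i + 1, hi2⟩]
    · simp only [if_true, one_mul]
      congr 1; push_cast; ring
    · intro l _ hl
      rw [if_neg, zero_mul]
      intro h; exact hl (Fin.ext h)
    · simp

lemma HS_coeff_zero {N : ℕ} (z : Fin N → ℂ) (S : Finset (Fin N)) :
    PowerSeries.coeff 0 (HS z S) = 1 := by
  rw [HS, PowerSeries.coeff_zero_eq_constantCoeff, map_prod]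
  apply Finset.prod_eq_one
  intro a _
  rw [← PowerSeries.coeff_zero_eq_constantCoeff_apply, PowerSeries.coeff_mk, pow_zero]

lemma TT_zero_det (N : ℕ) (z : Fin N → ℂ) :
    (TT N (extz fun k => PowerSeries.coeff k (HS z Finset.univ)) 0).det = 1 := by
  rw [Matrix.det_of_isLowerTriangular]
  · apply Finset.prod_eq_one
    intro i _
    simp [TT, extz, HS_coeff_zero]
  · intro i j hij
    have : (i:ℕ) < j := by simpa using hij
    simp only [TT, Matrix.of_apply, extz]
    rw [if_neg]; push_cast; omega

lemma det_toeplitz_diag (N : ℕ) (z : Fin N → ℂ) (f : Polynomial ℂ) :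
    (Matrix.of fun i j : Fin N => ∑ b ∈ Finset.range (f.natDegree + 1),
      f.coeff b * extz (fun k => hs k (Matrix.diagonal z)) ((b:ℤ) + i - j)).det
      = ∏ a, f.eval (z a) := by
  simp only [hs_diagonal_eq]
  set h := extz fun k => PowerSeries.coeff k (HS z Finset.univ) with hh
  set q := ∏ a, (Polynomial.X - Polynomial.C (z a)) with hq
  have hmon : q.Monic := Polynomial.monic_prod_of_monic _ _ fun a _ => Polynomial.monic_X_sub_C _
  have hdeg : q.natDegree = N := by
    rw [hq, Polynomial.natDegree_prod_of_monic _ _ fun a _ => Polynomial.monic_X_sub_C _]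
    simp
  have hpow : ∀ b, TT N h b = (compan N q) ^ b * TT N h 0 := by
    intro b
    induction b with
    | zero => simp
    | succ b ih => rw [hh, TT_succ, ← hh, ih, pow_succ', mul_assoc]
  have h1 : (Matrix.of fun i j : Fin N => ∑ b ∈ Finset.range (f.natDegree + 1),
      f.coeff b * h ((b:ℤ) + i - j)) = Polynomial.aeval (compan N q) f * TT N h 0 := by
    rw [Polynomial.aeval_eq_sum_range, Finset.sum_mul]
    ext i j
    rw [Matrix.sum_apply]
    show ∑ b ∈ Finset.range (f.natDegree + 1), f.coeff b * h ((b:ℤ) + i - j) = _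
    refine Finset.sum_congr rfl fun b _ => ?_
    rw [smul_mul_assoc, ← hpow]
    rfl
  rw [h1, Matrix.det_mul, hh, TT_zero_det, mul_one, det_aeval, compan_charpoly N q hmon hdeg, hq,
    roots_prod_fin, Multiset.map_map]
  rfl

/-- Main algebraic identity. -/
lemma det_aeval_unitary {N : ℕ} (U : Matrix (Fin N) (Fin N) ℂ) (hU : U ∈ Matrix.unitaryGroup (Fin N) ℂ)
    (f : Polynomial ℂ) :
    (Polynomial.aeval U f).det = (Matrix.of fun i j : Fin N => ∑ b ∈ Finset.range (f.natDegree + 1),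
      f.coeff b * extz (fun k => hs k U) ((b:ℤ) + i - j)).det := by
  obtain ⟨P, W, z, hWP, hPW, rfl⟩ := unitary_diag U hU
  have h1 : ∀ k, hs k (P * Matrix.diagonal z * W) = hs k (Matrix.diagonal z) := fun k => hs_conj k P _ W hWP
  simp only [h1]
  rw [det_toeplitz_diag, det_aeval]
  have h2 : (P * Matrix.diagonal z * W).charpoly = ∏ a, (Polynomial.X - Polynomial.C (z a)) := by
    rw [Matrix.charpoly_mul_comm, ← mul_assoc, hWP, one_mul, Matrix.charpoly_diagonal]
  rw [h2, roots_prod_fin, Multiset.map_map]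
  rfl
end HaarU

namespace HaarU

lemma infinite_sphere : {c : ℂ | ‖c‖ = 1}.Infinite := by
  intro hf
  obtain ⟨c, hc, hcS⟩ := exists_unit_notMem_finset hf.toFinset
  exact hcS (by simpa using hc)

lemma diag_unitary {N : ℕ} (d : Fin N → ℂ) (hd : ∀ i, ‖d i‖ = 1) :
    Matrix.diagonal d ∈ Matrix.unitaryGroup (Fin N) ℂ := by
  rw [Matrix.mem_unitaryGroup_iff, Matrix.star_eq_conjTranspose, Matrix.diagonal_conjTranspose,
    Matrix.diagonal_mul_diagonal, ← Matrix.diagonal_one]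
  congr 1
  funext i
  have := Complex.mul_conj (d i)
  rw [Complex.normSq_eq_norm_sq, hd] at this
  simpa using this

lemma zariski_diag {N : ℕ} (p : MvPolynomial (Fin N × Fin N) ℂ)
    (h : ∀ U ∈ Matrix.unitaryGroup (Fin N) ℂ, MvPolynomial.eval (fun ij => U ij.1 ij.2) p = 0)
    (Q1 Q2 : Matrix (Fin N) (Fin N) ℂ) (h1 : Q1 ∈ Matrix.unitaryGroup (Fin N) ℂ)
    (h2 : Q2 ∈ Matrix.unitaryGroup (Fin N) ℂ) (d : Fin N → ℂ) :
    MvPolynomial.eval (fun ij => (Q1 * Matrix.diagonal d * Q2) ij.1 ij.2) p = 0 := by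
  set r : MvPolynomial (Fin N) ℂ := MvPolynomial.aeval (fun ij : Fin N × Fin N =>
    ∑ a, MvPolynomial.C (Q1 ij.1 a) * MvPolynomial.X a * MvPolynomial.C (Q2 a ij.2)) p with hr
  have hev : ∀ e : Fin N → ℂ, MvPolynomial.eval e r =
      MvPolynomial.eval (fun ij => (Q1 * Matrix.diagonal e * Q2) ij.1 ij.2) p := by
    intro e
    rw [hr]
    have : (MvPolynomial.eval e) ((MvPolynomial.aeval (fun ij : Fin N × Fin N =>
      ∑ a, MvPolynomial.C (Q1 ij.1 a) * MvPolynomial.X a * MvPolynomial.C (Q2 a ij.2))) p)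
      = MvPolynomial.eval (fun ij : Fin N × Fin N => MvPolynomial.eval e (∑ a, MvPolynomial.C (Q1 ij.1 a) * MvPolynomial.X a * MvPolynomial.C (Q2 a ij.2))) p := by
      have hhom : (MvPolynomial.eval e).comp (MvPolynomial.aeval (fun ij : Fin N × Fin N =>
          ∑ a, MvPolynomial.C (Q1 ij.1 a) * MvPolynomial.X a * MvPolynomial.C (Q2 a ij.2))).toRingHom
          = MvPolynomial.eval (fun ij : Fin N × Fin N => MvPolynomial.eval e
            (∑ a, MvPolynomial.C (Q1 ij.1 a) * MvPolynomial.X a * MvPolynomial.C (Q2 a ij.2))) := by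
        apply MvPolynomial.ringHom_ext
        · intro c; simp
        · intro ij; simp
      exact congrArg (fun F => F p) hhom
    rw [this]
    congr 2
    funext ij
    simp [Matrix.mul_apply, Matrix.diagonal_apply]
  have hr0 : r = 0 := by
    apply MvPolynomial.funext_set (fun _ => {c : ℂ | ‖c‖ = 1}) (fun _ => infinite_sphere)
    intro e he
    rw [hev, map_zero]
    apply h
    refine mul_mem (mul_mem h1 (diag_unitary e fun i => ?_)) h2
    exact he i (Set.mem_univ i)
  rw [← hev, hr0, map_zero]

open scoped ComplexOrder in
lemma zariski {N : ℕ} (p : MvPolynomial (Fin N × Fin N) ℂ)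
    (h : ∀ U ∈ Matrix.unitaryGroup (Fin N) ℂ, MvPolynomial.eval (fun ij => U ij.1 ij.2) p = 0) :
    p = 0 := by
  have hinv : ∀ V : Matrix (Fin N) (Fin N) ℂ, IsUnit V →
      MvPolynomial.eval (fun ij => V ij.1 ij.2) p = 0 := by
    intro V hV
    have hpd : (V * V.conjTranspose).PosDef :=
      Matrix.PosDef.mul_conjTranspose_self V (Matrix.vecMul_injective_of_isUnit hV)
    have hsp := hpd.1.spectral_theorem
    have hpos := hpd.eigenvalues_pos
    rw [Unitary.conjStarAlgAut_apply] at hsp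
    have hQu := hpd.1.eigenvectorUnitary.2
    have hQ1 := Unitary.coe_star_mul_self hpd.1.eigenvectorUnitary
    have hQ2 := Unitary.coe_mul_star_self hpd.1.eigenvectorUnitary
    set Q : Matrix (Fin N) (Fin N) ℂ := (hpd.1.eigenvectorUnitary : Matrix (Fin N) (Fin N) ℂ)
    set lam := hpd.1.eigenvalues
    replace hQ2 : Q * star Q = 1 := hQ2
    set s : Fin N → ℂ := fun i => ((√(lam i) : ℝ) : ℂ) with hs
    set t : Fin N → ℂ := fun i => (((√(lam i))⁻¹ : ℝ) : ℂ) with ht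
    have hst : Matrix.diagonal s * Matrix.diagonal t = 1 := by
      rw [Matrix.diagonal_mul_diagonal, ← Matrix.diagonal_one]
      congr 1; funext i
      simp only [hs, ht, ← Complex.ofReal_mul]
      rw [mul_inv_cancel₀ (Real.sqrt_pos.2 (hpos i)).ne']; simp
    set Q2 : Matrix (Fin N) (Fin N) ℂ := Matrix.diagonal t * star Q * V with hQ2d
    have hQ2u : Q2 ∈ Matrix.unitaryGroup (Fin N) ℂ := by
      rw [Matrix.mem_unitaryGroup_iff, hQ2d, star_mul, star_mul, star_star]
      calc _ = Matrix.diagonal t * star Q * (V * star V) * (Q * star (Matrix.diagonal t)) := by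
            simp only [mul_assoc]
        _ = Matrix.diagonal t * ((star Q * Q) * Matrix.diagonal (RCLike.ofReal ∘ lam) * (star Q * Q)) * star (Matrix.diagonal t) := by
            rw [Matrix.star_eq_conjTranspose V, hsp]
            simp only [mul_assoc]
        _ = 1 := by
            rw [hQ1, one_mul, mul_one, Matrix.star_eq_conjTranspose, Matrix.diagonal_conjTranspose,
              Matrix.diagonal_mul_diagonal, Matrix.diagonal_mul_diagonal, ← Matrix.diagonal_one]
            congr 1; funext i
            have h3 : (lam i : ℂ) = ((√(lam i) * √(lam i) : ℝ) : ℂ) := by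
              rw [Real.mul_self_sqrt (hpos i).le]
            have h4 : √(lam i) ≠ 0 := (Real.sqrt_pos.2 (hpos i)).ne'
            simp only [ht, Function.comp_apply, Pi.star_apply, Complex.star_def, Complex.conj_ofReal]
            show ((√(lam i))⁻¹ : ℝ) * (lam i : ℂ) * ((√(lam i))⁻¹ : ℝ) = 1
            rw [h3]
            push_cast
            have h5 : ((√(lam i) : ℝ) : ℂ) ≠ 0 := by exact_mod_cast h4
            field_simp
    have hV2 : V = Q * Matrix.diagonal s * Q2 := by
      rw [hQ2d]
      calc V = (Q * star Q) * V := by rw [hQ2, one_mul]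
        _ = Q * (Matrix.diagonal s * Matrix.diagonal t) * star Q * V := by
          rw [hst, mul_one]
        _ = _ := by simp only [mul_assoc]
    rw [hV2]
    exact zariski_diag p h Q Q2 hQu hQ2u s
  have hprod : p * (Matrix.mvPolynomialX (Fin N) (Fin N) ℂ).det = 0 := by
    apply MvPolynomial.funext
    intro v
    rw [map_mul, Matrix.eval_det_mvPolynomialX, map_zero]
    by_cases hd : (Matrix.of fun i j => v (i, j)).det = 0
    · rw [hd, mul_zero]
    · have := hinv (Matrix.of fun i j => v (i, j)) ((Matrix.isUnit_iff_isUnit_det _).2 (isUnit_iff_ne_zero.2 hd))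
      have h6 : MvPolynomial.eval v p = 0 := this
      rw [h6, zero_mul]
  rcases mul_eq_zero.1 hprod with h0 | h0
  · exact h0
  · exact absurd h0 (Matrix.det_mvPolynomialX_ne_zero _ _)
end HaarU

namespace HaarU

/-- Polynomial families with continuous coefficients. -/
def CP {X : Type*} [TopologicalSpace X] {N : ℕ} (P : X → MvPolynomial (Fin N) ℂ) : Prop :=
  ∀ μ, Continuous fun x => MvPolynomial.coeff μ (P x)

lemma CP.mul {X : Type*} [TopologicalSpace X] {N : ℕ} {P Q : X → MvPolynomial (Fin N) ℂ}
    (hP : CP P) (hQ : CP Q) : CP fun x => P x * Q x := by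
  classical
  intro μ
  simp only [MvPolynomial.coeff_mul]
  exact continuous_finsetSum _ fun i _ => (hP _).mul (hQ _)

lemma CP.one {X : Type*} [TopologicalSpace X] {N : ℕ} : CP (fun _ : X => (1 : MvPolynomial (Fin N) ℂ)) :=
  fun _ => continuous_const

lemma CP.pow {X : Type*} [TopologicalSpace X] {N : ℕ} {P : X → MvPolynomial (Fin N) ℂ}
    (hP : CP P) (n : ℕ) : CP fun x => P x ^ n := by
  induction n with
  | zero => simpa using CP.one
  | succ n ih => simpa only [pow_succ] using ih.mul hP

lemma CP.prod {X : Type*} [TopologicalSpace X] {N : ℕ} {ι : Type*} (s : Finset ι)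
    {P : ι → X → MvPolynomial (Fin N) ℂ} (hP : ∀ i, CP (P i)) : CP fun x => ∏ i ∈ s, P i x := by
  classical
  induction s using Finset.induction_on with
  | empty => simpa using CP.one
  | insert a s ha ih => simpa only [Finset.prod_insert ha] using (hP a).mul ih

lemma continuous_cc {N : ℕ} (κ μ : Fin N →₀ ℕ) :
    Continuous fun A : Matrix (Fin N) (Fin N) ℂ => cc A κ μ := by
  have : CP fun A : Matrix (Fin N) (Fin N) ℂ => ∏ a, rowForm A a ^ κ a := by
    apply CP.prod
    intro a
    apply CP.pow
    intro ν
    simp only [rowForm, MvPolynomial.coeff_sum, MvPolynomial.coeff_C_mul]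
    exact continuous_finsetSum _ fun b _ => (continuous_id.matrix_elem b a).mul continuous_const
  have h2 := this μ
  simpa only [cc, lsub_monomial, MvPolynomial.C_1, one_mul] using h2

lemma continuous_hs {N : ℕ} (k : ℕ) : Continuous fun A : Matrix (Fin N) (Fin N) ℂ => hs k A :=
  continuous_finsetSum _ fun _ _ => continuous_cc _ _

lemma compactSpace_unitary (N : ℕ) : CompactSpace (Matrix.unitaryGroup (Fin N) ℂ) := by
  apply isCompact_iff_compactSpace.1
  have hc : IsCompact (Set.univ.pi fun _ : Fin N => Set.univ.pi fun _ : Fin N => Metric.closedBall (0:ℂ) 1) :=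
    isCompact_univ_pi fun _ => isCompact_univ_pi fun _ => isCompact_closedBall 0 1
  refine IsCompact.of_isClosed_subset (s := (Set.univ.pi fun _ : Fin N => Set.univ.pi fun _ : Fin N => Metric.closedBall (0:ℂ) 1 : Set (Matrix (Fin N) (Fin N) ℂ))) hc ?_ ?_
  · have : ((Matrix.unitaryGroup (Fin N) ℂ : Submonoid (Matrix (Fin N) (Fin N) ℂ)) : Set (Matrix (Fin N) (Fin N) ℂ))
        = {A | A * star A = 1} := by
      ext A; exact Matrix.mem_unitaryGroup_iff
    rw [this]
    exact isClosed_eq (by fun_prop) continuous_const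
  · intro U hU i _ j _
    simpa using entry_norm_bound_of_unitary hU i j

lemma integrable_of_cont {N : ℕ} {E : Type*} [NormedAddCommGroup E] [NormedSpace ℝ E] [SecondCountableTopology E]
    (ℙ : Measure (Matrix.unitaryGroup (Fin N) ℂ))
    [IsProbabilityMeasure ℙ] (F : Matrix.unitaryGroup (Fin N) ℂ → E) (hF : Continuous F) :
    Integrable F ℙ := by
  have := compactSpace_unitary N
  exact hF.integrable_of_hasCompactSupport (HasCompactSupport.of_compactSpace F)

lemma continuous_F {N : ℕ} (m : ℕ) (F : Matrix (Fin N) (Fin N) ℂ → ℂ) (hF : Continuous F) :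
    Continuous fun U : Matrix.unitaryGroup (Fin N) ℂ => F U * star (U : Matrix (Fin N) (Fin N) ℂ).det ^ m := by
  refine (hF.comp continuous_subtype_val).mul (Continuous.pow (Continuous.star ?_) m)
  exact Continuous.matrix_det continuous_subtype_val

lemma eval_lsub {N : ℕ} (A : Matrix (Fin N) (Fin N) ℂ) (κ : Fin N →₀ ℕ) (v : Fin N → ℂ) :
    MvPolynomial.eval v (lsub A (MvPolynomial.monomial κ 1)) = ∏ a, (∑ b, v b * A b a) ^ κ a := by
  rw [lsub_monomial, MvPolynomial.C_1, one_mul, map_prod]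
  refine Finset.prod_congr rfl fun a _ => ?_
  simp [rowForm, mul_comm]

lemma eval_lsub_expand {N k : ℕ} (A : Matrix (Fin N) (Fin N) ℂ) (κ : Fin N →₀ ℕ) (v : Fin N → ℂ)
    (hκ : κ ∈ Finset.finsuppAntidiag Finset.univ k) :
    ∏ a, (∑ b, v b * A b a) ^ κ a =
      ∑ μ ∈ Finset.finsuppAntidiag Finset.univ k, cc A κ μ * ∏ a, v a ^ μ a := by
  rw [← eval_lsub]
  conv_lhs => rw [homog_expand _ (lsub_monomial_isHomogeneous A κ k hκ), map_sum]
  refine Finset.sum_congr rfl fun μ _ => ?_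
  rw [MvPolynomial.eval_monomial, Finsupp.prod_fintype _ _ (by simp)]
  rfl

lemma star_det_mul {N : ℕ} (g U : Matrix (Fin N) (Fin N) ℂ) (hg : g ∈ Matrix.unitaryGroup (Fin N) ℂ) :
    star U.det = g.det * star (g * U).det := by
  have h1 : g.det * star g.det = 1 := by
    rw [← Matrix.det_conjTranspose, ← Matrix.det_mul, ← Matrix.star_eq_conjTranspose,
      Matrix.mem_unitaryGroup_iff.1 hg, Matrix.det_one]
  rw [Matrix.det_mul, star_mul']
  linear_combination (-star U.det) * h1

lemma I_one_zero {N : ℕ} (ℙ : Measure (Matrix.unitaryGroup (Fin N) ℂ))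
    [IsProbabilityMeasure ℙ] [ℙ.IsHaarMeasure] (m : ℕ) (κ : Fin N → Fin N →₀ ℕ) (k : Fin N → ℕ)
    (hκ : ∀ i, κ i ∈ Finset.finsuppAntidiag Finset.univ (k i)) (i0 : Fin N) (hi0 : k i0 ≠ m)
    (g : Matrix (Fin N) (Fin N) ℂ) (hg : g ∈ Matrix.unitaryGroup (Fin N) ℂ) :
    ∫ U : Matrix.unitaryGroup (Fin N) ℂ, (∏ i, ∏ a, (∑ b, g i b * (U : Matrix (Fin N) (Fin N) ℂ) b a) ^ κ i a)
      * star (U : Matrix (Fin N) (Fin N) ℂ).det ^ m ∂ℙ = 0 := by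
  set Φ : Matrix (Fin N) (Fin N) ℂ → ℂ := fun U => (∏ i, ∏ a, U i a ^ κ i a) * star U.det ^ m with hΦ
  have hinv : ∀ (g : Matrix (Fin N) (Fin N) ℂ), g ∈ Matrix.unitaryGroup (Fin N) ℂ → 
      ∫ U : Matrix.unitaryGroup (Fin N) ℂ, (∏ i, ∏ a, (∑ b, g i b * (U : Matrix (Fin N) (Fin N) ℂ) b a) ^ κ i a)
      * star (U : Matrix (Fin N) (Fin N) ℂ).det ^ m ∂ℙ = g.det ^ m * ∫ U : Matrix.unitaryGroup (Fin N) ℂ, Φ U ∂ℙ := by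
    intro g hg
    rw [← integral_mul_left_eq_self (fun U : Matrix.unitaryGroup (Fin N) ℂ => Φ U) ⟨g, hg⟩, ← integral_const_mul]
    refine integral_congr_ae (Eventually.of_forall fun U => ?_)
    simp only [hΦ, Matrix.UnitaryGroup.mul_val]
    rw [star_det_mul g U hg, mul_pow]
    simp only [Matrix.mul_apply]
    ring
  obtain ⟨ζ, hζ1, hζ⟩ := exists_unit_notMem_finset
    ((Polynomial.X ^ (k i0) - Polynomial.X ^ m : Polynomial ℂ).roots.toFinset)
  have hζ2 : ζ ^ k i0 ≠ ζ ^ m := by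
    intro h
    apply hζ
    rw [Multiset.mem_toFinset, Polynomial.mem_roots]
    · simp [h]
    · intro h0
      have h1 := sub_eq_zero.1 h0
      have h2 := congrArg Polynomial.natDegree h1
      simp only [Polynomial.natDegree_X_pow] at h2
      exact hi0 h2
  set d : Fin N → ℂ := Function.update (fun _ => 1) i0 ζ with hd
  have hdu : Matrix.diagonal d ∈ Matrix.unitaryGroup (Fin N) ℂ := by
    apply diag_unitary
    intro i
    by_cases h : i = i0
    · subst h; simp [hd, hζ1]
    · simp [hd, h]
  have h1 := hinv _ hdu
  have hdet : (Matrix.diagonal d).det = ζ := by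
    rw [Matrix.det_diagonal, hd, Finset.prod_update_of_mem (Finset.mem_univ _)]; simp
  have h2 : ∀ U : Matrix.unitaryGroup (Fin N) ℂ, (∏ i, ∏ a, (∑ b, Matrix.diagonal d i b * (U : Matrix (Fin N) (Fin N) ℂ) b a) ^ κ i a)
      * star (U : Matrix (Fin N) (Fin N) ℂ).det ^ m = ζ ^ k i0 * Φ U := by
    intro U
    have h3 : ∀ i, ∏ a, (∑ b, Matrix.diagonal d i b * (U : Matrix (Fin N) (Fin N) ℂ) b a) ^ κ i a
        = d i ^ k i * ∏ a, (U : Matrix (Fin N) (Fin N) ℂ) i a ^ κ i a := by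
      intro i
      have h4 : ∑ a, κ i a = k i := (Finset.mem_finsuppAntidiag.1 (hκ i)).1
      simp only [Matrix.diagonal_apply, ite_mul, zero_mul, Finset.sum_ite_eq, Finset.mem_univ, if_true,
        mul_pow, Finset.prod_mul_distrib]
      rw [Finset.prod_pow_eq_pow_sum, h4]
    simp only [h3, Finset.prod_mul_distrib, hΦ]
    have h5 : ∏ i, d i ^ k i = ζ ^ k i0 := by
      rw [Finset.prod_eq_single i0]
      · simp [hd]
      · intro i _ hi; simp [hd, hi]
      · simp
    rw [h5]; ring
  simp only [h2] at h1
  rw [integral_const_mul, hdet] at h1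
  have h0 : ∫ U : Matrix.unitaryGroup (Fin N) ℂ, Φ U ∂ℙ = 0 := by
    have : (ζ ^ k i0 - ζ ^ m) * ∫ U : Matrix.unitaryGroup (Fin N) ℂ, Φ U ∂ℙ = 0 := by
      rw [sub_mul, h1, sub_self]
    exact (mul_eq_zero.1 this).resolve_left (sub_ne_zero.2 hζ2)
  rw [hinv g hg, h0, mul_zero]

lemma hs_orth {N : ℕ} (ℙ : Measure (Matrix.unitaryGroup (Fin N) ℂ))
    [IsProbabilityMeasure ℙ] [ℙ.IsHaarMeasure] (m : ℕ) (k : Fin N → ℕ)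
    (i0 : Fin N) (hi0 : k i0 ≠ m) :
    ∫ U : Matrix.unitaryGroup (Fin N) ℂ, (∏ i, hs (k i) (U : Matrix (Fin N) (Fin N) ℂ))
      * star (U : Matrix (Fin N) (Fin N) ℂ).det ^ m ∂ℙ = 0 := by
  classical
  set T : Finset (Fin N → Fin N →₀ ℕ) :=
    Fintype.piFinset fun i => Finset.finsuppAntidiag Finset.univ (k i) with hT
  have hintg : ∀ κ μ : Fin N → Fin N →₀ ℕ, Integrable (fun U : Matrix.unitaryGroup (Fin N) ℂ =>
      (∏ i, cc (U : Matrix (Fin N) (Fin N) ℂ) (κ i) (μ i)) * star (U : Matrix (Fin N) (Fin N) ℂ).det ^ m) ℙ :=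
    fun κ μ => integrable_of_cont ℙ _ (continuous_F m (fun A => ∏ i, cc A (κ i) (μ i))
      (continuous_finsetProd _ fun i _ => continuous_cc _ _))
  have key : ∀ κ ∈ T, ∀ μ ∈ T, ∫ U : Matrix.unitaryGroup (Fin N) ℂ,
      (∏ i, cc (U : Matrix (Fin N) (Fin N) ℂ) (κ i) (μ i)) * star (U : Matrix (Fin N) (Fin N) ℂ).det ^ m ∂ℙ = 0 := by
    intro κ hκ
    have hκ' := Fintype.mem_piFinset.1 hκ
    set r : (Fin N → Fin N →₀ ℕ) → ℂ := fun μ => ∫ U : Matrix.unitaryGroup (Fin N) ℂ,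
      (∏ i, cc (U : Matrix (Fin N) (Fin N) ℂ) (κ i) (μ i)) * star (U : Matrix (Fin N) (Fin N) ℂ).det ^ m ∂ℙ with hr
    set ee : (Fin N → Fin N →₀ ℕ) → (Fin N × Fin N →₀ ℕ) := fun μ =>
      Finsupp.equivFunOnFinite.symm fun ia => μ ia.1 ia.2 with hee
    have heinj : Function.Injective ee := by
      intro μ ν h
      funext i
      ext a
      have := congrArg (fun f => f (i, a)) h
      simpa [hee] using this
    set R : MvPolynomial (Fin N × Fin N) ℂ := ∑ μ ∈ T, MvPolynomial.monomial (ee μ) (r μ) with hR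
    have hR0 : R = 0 := by
      apply zariski
      intro g hg
      rw [← I_one_zero ℙ m κ k hκ' i0 hi0 g hg, hR, map_sum]
      have h1 : ∀ U : Matrix.unitaryGroup (Fin N) ℂ, (∏ i, ∏ a, (∑ b, g i b * (U : Matrix (Fin N) (Fin N) ℂ) b a) ^ κ i a)
          * star (U : Matrix (Fin N) (Fin N) ℂ).det ^ m
          = ∑ μ ∈ T, (∏ i, ∏ a, g i a ^ μ i a) * ((∏ i, cc (U : Matrix (Fin N) (Fin N) ℂ) (κ i) (μ i)) * star (U : Matrix (Fin N) (Fin N) ℂ).det ^ m) := by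
        intro U
        simp only [fun i => eval_lsub_expand (U : Matrix (Fin N) (Fin N) ℂ) (κ i) (g i) (hκ' i)]
        rw [Finset.prod_univ_sum, Finset.sum_mul]
        refine Finset.sum_congr rfl fun μ _ => ?_
        rw [Finset.prod_mul_distrib]; ring
      simp only [h1]
      rw [integral_finsetSum _ fun μ _ => (hintg κ μ).const_mul _]
      refine Finset.sum_congr rfl fun μ _ => ?_
      rw [integral_const_mul, MvPolynomial.eval_monomial, Finsupp.prod_fintype _ _ (by simp), Fintype.prod_prod_type,
        mul_comm]
      rfl
    intro μ hμ
    have h2 : MvPolynomial.coeff (ee μ) R = r μ := by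
      rw [hR, MvPolynomial.coeff_sum]
      simp only [MvPolynomial.coeff_monomial, heinj.eq_iff]
      rw [Finset.sum_ite_eq', if_pos hμ]
    rw [hR0, MvPolynomial.coeff_zero] at h2
    exact h2.symm
  have h1 : ∀ U : Matrix.unitaryGroup (Fin N) ℂ, (∏ i, hs (k i) (U : Matrix (Fin N) (Fin N) ℂ))
      * star (U : Matrix (Fin N) (Fin N) ℂ).det ^ m
      = ∑ κ ∈ T, (∏ i, cc (U : Matrix (Fin N) (Fin N) ℂ) (κ i) (κ i)) * star (U : Matrix (Fin N) (Fin N) ℂ).det ^ m := by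
    intro U
    simp only [hs]
    rw [Finset.prod_univ_sum, Finset.sum_mul]
  simp only [h1]
  rw [integral_finsetSum _ fun μ _ => hintg μ μ]
  exact Finset.sum_eq_zero fun κ hκ => key κ hκ κ hκ
end HaarU

namespace HaarU

lemma continuous_extz_hs {N : ℕ} (n : ℤ) :
    Continuous fun A : Matrix (Fin N) (Fin N) ℂ => extz (fun k => hs k A) n := by
  unfold extz
  split_ifs
  · exact continuous_hs _
  · exact continuous_const

lemma hs_orthZ {N : ℕ} (ℙ : Measure (Matrix.unitaryGroup (Fin N) ℂ))
    [IsProbabilityMeasure ℙ] [ℙ.IsHaarMeasure] (m : ℕ) : ∃ c : ℂ, ∀ n : Fin N → ℤ,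
    ∫ U : Matrix.unitaryGroup (Fin N) ℂ, (∏ i, extz (fun k => hs k (U : Matrix (Fin N) (Fin N) ℂ)) (n i))
      * star (U : Matrix (Fin N) (Fin N) ℂ).det ^ m ∂ℙ = c * ∏ i, if n i = m then 1 else 0 := by
  refine ⟨∫ U : Matrix.unitaryGroup (Fin N) ℂ, (∏ i : Fin N, hs m (U : Matrix (Fin N) (Fin N) ℂ))
      * star (U : Matrix (Fin N) (Fin N) ℂ).det ^ m ∂ℙ, fun n => ?_⟩
  by_cases hall : ∀ i, n i = m
  · simp [hall, extz]
  · push Not at hall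
    obtain ⟨i0, hi0⟩ := hall
    rw [Finset.prod_eq_zero (Finset.mem_univ i0) (if_neg hi0), mul_zero]
    by_cases hneg : ∃ i, n i < 0
    · obtain ⟨i, hi⟩ := hneg
      have : ∀ U : Matrix.unitaryGroup (Fin N) ℂ, ∏ i, extz (fun k => hs k (U : Matrix (Fin N) (Fin N) ℂ)) (n i) = 0 := by
        intro U
        apply Finset.prod_eq_zero (Finset.mem_univ i)
        simp [extz, not_le.2 hi]
      simp [this]
    · push Not at hneg
      have : ∀ U : Matrix.unitaryGroup (Fin N) ℂ, ∏ i, extz (fun k => hs k (U : Matrix (Fin N) (Fin N) ℂ)) (n i)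
          = ∏ i, hs (n i).toNat (U : Matrix (Fin N) (Fin N) ℂ) := by
        intro U
        refine Finset.prod_congr rfl fun i _ => ?_
        simp [extz, hneg i]
      simp only [this]
      apply hs_orth ℙ m (fun i => (n i).toNat) i0
      have := hneg i0
      omega

lemma sum_pick (f : Polynomial ℂ) (m : ℕ) (s : ℤ) :
    ∑ b ∈ Finset.range (f.natDegree + 1), f.coeff b * (if (b : ℤ) + s = m then (1:ℂ) else 0)
      = extz f.coeff (m - s) := by
  unfold extz
  split_ifs with h
  · have : ∀ b : ℕ, (b : ℤ) + s = m ↔ b = ((m : ℤ) - s).toNat := by intro b; omega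
    simp only [this, mul_ite, mul_one, mul_zero]
    rw [Finset.sum_ite_eq']
    split_ifs with h2
    · rfl
    · rw [Polynomial.coeff_eq_zero_of_natDegree_lt]
      rw [Finset.mem_range] at h2
      omega
  · apply Finset.sum_eq_zero
    intro b _
    rw [if_neg, mul_zero]; omega

lemma heine_aux {N : ℕ} (ℙ : Measure (Matrix.unitaryGroup (Fin N) ℂ))
    [IsProbabilityMeasure ℙ] [ℙ.IsHaarMeasure] (m : ℕ) : ∃ c : ℂ, ∀ f : Polynomial ℂ,
    ∫ U : Matrix.unitaryGroup (Fin N) ℂ, (Polynomial.aeval (U : Matrix (Fin N) (Fin N) ℂ) f).det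
      * star (U : Matrix (Fin N) (Fin N) ℂ).det ^ m ∂ℙ
      = c * (Matrix.of fun i j : Fin N => extz f.coeff ((m:ℤ) + j - i)).det := by
  obtain ⟨c, hc⟩ := hs_orthZ ℙ m
  refine ⟨c, fun f => ?_⟩
  set T : Finset (Fin N → ℕ) := Fintype.piFinset fun _ => Finset.range (f.natDegree + 1) with hT
  have h1 : ∀ U : Matrix.unitaryGroup (Fin N) ℂ, (Polynomial.aeval (U : Matrix (Fin N) (Fin N) ℂ) f).det
      * star (U : Matrix (Fin N) (Fin N) ℂ).det ^ m =
      ∑ σ : Equiv.Perm (Fin N), ∑ β ∈ T, (((Equiv.Perm.sign σ : ℤ) : ℂ) * ∏ i, f.coeff (β i)) *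
        ((∏ i, extz (fun k => hs k (U : Matrix (Fin N) (Fin N) ℂ)) ((β i : ℤ) + (σ i - i)))
          * star (U : Matrix (Fin N) (Fin N) ℂ).det ^ m) := by
    intro U
    rw [det_aeval_unitary _ U.2, Matrix.det_apply', Finset.sum_mul]
    refine Finset.sum_congr rfl fun σ _ => ?_
    simp only [Matrix.of_apply]
    rw [Finset.prod_univ_sum, Finset.mul_sum, Finset.sum_mul]
    refine Finset.sum_congr rfl fun β _ => ?_
    rw [Finset.prod_mul_distrib]
    simp only [add_sub_assoc]
    ring
  have hintg : ∀ n : Fin N → ℤ, Integrable (fun U : Matrix.unitaryGroup (Fin N) ℂ =>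
      (∏ i, extz (fun k => hs k (U : Matrix (Fin N) (Fin N) ℂ)) (n i)) * star (U : Matrix (Fin N) (Fin N) ℂ).det ^ m) ℙ :=
    fun n => integrable_of_cont ℙ _ (continuous_F m (fun A => ∏ i, extz (fun k => hs k A) (n i))
      (continuous_finsetProd _ fun i _ => continuous_extz_hs _))
  simp only [h1]
  rw [integral_finsetSum _ fun σ _ => integrable_finsetSum _ fun β _ => (hintg _).const_mul _]
  rw [Matrix.det_apply', Finset.mul_sum]
  refine Finset.sum_congr rfl fun σ _ => ?_
  rw [integral_finsetSum _ fun β _ => (hintg _).const_mul _]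
  simp only [integral_const_mul, hc, Matrix.of_apply]
  have h2 : ∀ i : Fin N, extz f.coeff ((m:ℤ) + (i:ℕ) - ((σ i : Fin N) : ℕ))
      = ∑ b ∈ Finset.range (f.natDegree + 1), f.coeff b * (if (b : ℤ) + (((σ i : Fin N) : ℕ) - (i:ℕ)) = m then (1:ℂ) else 0) := by
    intro i
    rw [sum_pick]; congr 1; ring
  simp only [h2]
  rw [Finset.prod_univ_sum, Finset.mul_sum, Finset.mul_sum]
  refine Finset.sum_congr rfl fun β _ => ?_
  rw [Finset.prod_mul_distrib]
  ring

lemma heine {N : ℕ} (ℙ : Measure (Matrix.unitaryGroup (Fin N) ℂ))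
    [IsProbabilityMeasure ℙ] [ℙ.IsHaarMeasure] (m : ℕ) (f : Polynomial ℂ) :
    ∫ U : Matrix.unitaryGroup (Fin N) ℂ, (Polynomial.aeval (U : Matrix (Fin N) (Fin N) ℂ) f).det
      * star (U : Matrix (Fin N) (Fin N) ℂ).det ^ m ∂ℙ
      = (Matrix.of fun i j : Fin N => extz f.coeff ((m:ℤ) + j - i)).det := by
  obtain ⟨c, hc⟩ := heine_aux ℙ m
  have h1 := hc (Polynomial.X ^ m)
  have h2 : (Matrix.of fun i j : Fin N => extz (Polynomial.X ^ m : Polynomial ℂ).coeff ((m:ℤ) + j - i)) = 1 := by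
    ext i j
    rw [Matrix.one_apply, Matrix.of_apply, extz]
    simp only [Polynomial.coeff_X_pow]
    have : i = j ↔ (i:ℕ) = j := Fin.ext_iff
    split_ifs <;> first | rfl | omega
  have h3 : ∀ U : Matrix.unitaryGroup (Fin N) ℂ, (Polynomial.aeval (U : Matrix (Fin N) (Fin N) ℂ) (Polynomial.X ^ m : Polynomial ℂ)).det
      * star (U : Matrix (Fin N) (Fin N) ℂ).det ^ m = 1 := by
    intro U
    have h4 : (U : Matrix (Fin N) (Fin N) ℂ).det * star (U : Matrix (Fin N) (Fin N) ℂ).det = 1 := by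
      rw [← Matrix.det_conjTranspose, ← Matrix.det_mul, ← Matrix.star_eq_conjTranspose,
        Matrix.mem_unitaryGroup_iff.1 U.2, Matrix.det_one]
    rw [map_pow, Polynomial.aeval_X, Matrix.det_pow, ← mul_pow, h4, one_pow]
  simp only [h3] at h1
  rw [h2, Matrix.det_one, integral_const] at h1
  simp at h1
  rw [hc f, ← h1, one_mul]
end HaarU

namespace HaarU

instance fact_two_pi : Fact (0 < 2 * π) := ⟨Real.two_pi_pos⟩

open scoped Matrix.Norms.L2Operator in
lemma norm_root {N : ℕ} (U : Matrix.unitaryGroup (Fin N) ℂ) (z : ℂ)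
    (hz : z ∈ (U : Matrix (Fin N) (Fin N) ℂ).charpoly.roots) : ‖z‖ = 1 := by
  rw [Polynomial.mem_roots (Matrix.charpoly_monic _).ne_zero] at hz
  have := spectrum.subset_circle_of_unitary U.2 (Matrix.mem_spectrum_of_isRoot_charpoly hz)
  simpa using this

/-- product of `g` over the eigenvalue angles -/
noncomputable def PP {N : ℕ} (U : Matrix.unitaryGroup (Fin N) ℂ) (g : AddCircle (2 * π) → ℂ) : ℂ :=
  ((eigenAngles N U).map fun θ : ℝ => g (θ : AddCircle (2 * π))).prod

lemma fourier_ang (z : ℂ) (hz : ‖z‖ = 1) (n : ℤ) :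
    fourier n (((if 0 ≤ Complex.arg z then Complex.arg z else Complex.arg z + 2 * π : ℝ)) : AddCircle (2 * π))
      = z ^ n := by
  have h1 : (((if 0 ≤ Complex.arg z then Complex.arg z else Complex.arg z + 2 * π : ℝ)) : AddCircle (2 * π))
      = (Complex.arg z : AddCircle (2 * π)) := by
    split_ifs
    · rfl
    · rw [AddCircle.coe_add, AddCircle.coe_period, add_zero]
  rw [h1, fourier_coe_apply]
  have h2 : z = Complex.exp (Complex.arg z * Complex.I) := by
    have := Complex.norm_mul_exp_arg_mul_I z
    rw [hz] at this
    simpa using this.symm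
  conv_rhs => rw [h2, ← Complex.exp_int_mul]
  congr 1
  have : (π : ℂ) ≠ 0 := by exact_mod_cast Real.pi_ne_zero
  push_cast
  field_simp

lemma det_star_det {N : ℕ} (U : Matrix.unitaryGroup (Fin N) ℂ) :
    (U : Matrix (Fin N) (Fin N) ℂ).det * star (U : Matrix (Fin N) (Fin N) ℂ).det = 1 := by
  rw [← Matrix.det_conjTranspose, ← Matrix.det_mul, ← Matrix.star_eq_conjTranspose,
    Matrix.mem_unitaryGroup_iff.1 U.2, Matrix.det_one]

lemma trig {N : ℕ} (g : C(AddCircle (2 * π), ℂ)) (hg : g ∈ Submodule.span ℂ (Set.range (@fourier (2 * π)))) :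
    ∃ (m : ℕ) (f : Polynomial ℂ), (∀ U : Matrix.unitaryGroup (Fin N) ℂ,
      PP U g = (Polynomial.aeval (U : Matrix (Fin N) (Fin N) ℂ) f).det * star (U : Matrix (Fin N) (Fin N) ℂ).det ^ m)
      ∧ ∀ n : ℤ, fourierCoeff g n = extz f.coeff (m + n) := by
  obtain ⟨c, rfl⟩ := Finsupp.mem_span_range_iff_exists_finsupp.1 hg
  set m : ℕ := ∑ n ∈ c.support, n.natAbs with hm
  have hmn : ∀ n ∈ c.support, 0 ≤ (m:ℤ) + n := by
    intro n hn
    have : n.natAbs ≤ m := Finset.single_le_sum (f := fun n : ℤ => n.natAbs) (fun _ _ => Nat.zero_le _) hn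
    omega
  set f : Polynomial ℂ := ∑ n ∈ c.support, Polynomial.C (c n) * Polynomial.X ^ ((m:ℤ) + n).toNat with hf
  set g : C(AddCircle (2 * π), ℂ) := c.sum fun i a => a • fourier i with hg
  have hgx : ∀ x, g x = ∑ n ∈ c.support, c n * fourier n x := by
    intro x
    rw [hg, Finsupp.sum, ContinuousMap.sum_apply]
    rfl
  refine ⟨m, f, fun U => ?_, fun k => ?_⟩
  · rw [det_aeval, PP, eigenAngles, Multiset.map_map]
    have h1 : ∀ z ∈ (U : Matrix (Fin N) (Fin N) ℂ).charpoly.roots, f.eval z =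
        z ^ m * g (((if 0 ≤ Complex.arg z then Complex.arg z else Complex.arg z + 2 * π : ℝ)) : AddCircle (2 * π)) := by
      intro z hz
      have hz1 := norm_root U z hz
      have hz0 : z ≠ 0 := by rintro rfl; simp at hz1
      rw [hgx, hf, Polynomial.eval_finsetSum, Finset.mul_sum]
      refine Finset.sum_congr rfl fun n hn => ?_
      rw [fourier_ang z hz1]
      simp only [Polynomial.eval_mul, Polynomial.eval_C, Polynomial.eval_pow, Polynomial.eval_X]
      rw [← zpow_natCast z (((m:ℤ) + n).toNat), Int.toNat_of_nonneg (hmn n hn), zpow_add₀ hz0, zpow_natCast]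
      ring
    rw [Multiset.map_congr rfl h1, Multiset.prod_map_mul, Multiset.prod_map_pow, Multiset.map_id',
      ← Matrix.det_eq_prod_roots_charpoly]
    have := det_star_det U
    rw [mul_right_comm, ← mul_pow, this, one_pow, one_mul]
    rfl
  · have h1 : (g : AddCircle (2 * π) → ℂ) = ∑ n ∈ c.support, c n • (fourier n : AddCircle (2 * π) → ℂ) := by
      funext x
      rw [hgx, Finset.sum_apply]; rfl
    rw [h1, fourierCoeff.sum, Finset.sum_apply]
    · simp only [fourierCoeff.const_smul, fourierCoeff_fourier]
      unfold extz
      split_ifs with h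
      · rw [hf, Polynomial.finsetSum_coeff]
        refine Finset.sum_congr rfl fun n hn => ?_
        have := hmn n hn
        have h2 : (((m:ℤ) + k).toNat = ((m:ℤ) + n).toNat) ↔ k = n := by omega
        simp only [Polynomial.coeff_C_mul, Polynomial.coeff_X_pow, Pi.single_apply, smul_eq_mul, h2]
      · apply Finset.sum_eq_zero
        intro n hn
        have := hmn n hn
        rw [Pi.single_apply, if_neg (by omega), smul_zero]
    · intro n _
      exact Integrable.smul _ ((map_continuous (fourier n)).integrable_of_hasCompactSupport (HasCompactSupport.of_compactSpace _))

/-- Toeplitz matrix of Fourier coefficients -/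
noncomputable def TF (N : ℕ) (g : AddCircle (2 * π) → ℂ) : Matrix (Fin N) (Fin N) ℂ :=
  Matrix.of fun i j => fourierCoeff g ((j : ℤ) - i)

lemma trig_int {N : ℕ} (ℙ : Measure (Matrix.unitaryGroup (Fin N) ℂ))
    [IsProbabilityMeasure ℙ] [ℙ.IsHaarMeasure] (g : C(AddCircle (2 * π), ℂ))
    (hg : g ∈ Submodule.span ℂ (Set.range (@fourier (2 * π)))) :
    Continuous (fun U : Matrix.unitaryGroup (Fin N) ℂ => PP U g) ∧ ∫ U, PP U g ∂ℙ = (TF N g).det := by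
  obtain ⟨m, f, h1, h2⟩ := trig (N := N) g hg
  simp only [h1]
  constructor
  · refine continuous_F m (fun A => (Polynomial.aeval A f).det) (Continuous.matrix_det ?_)
    simp only [Polynomial.aeval_eq_sum_range]
    fun_prop
  · rw [heine]
    congr 1
    ext i j
    rw [TF, Matrix.of_apply, Matrix.of_apply, h2, add_sub_assoc]

lemma card_eigenAngles {N : ℕ} (U : Matrix.unitaryGroup (Fin N) ℂ) : Multiset.card (eigenAngles N U) = N := by
  rw [eigenAngles, Multiset.card_map, ← (IsAlgClosed.splits _).natDegree_eq_card_roots,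
    Matrix.charpoly_natDegree_eq_dim, Fintype.card_fin]

lemma norm_PP_le {N : ℕ} (U : Matrix.unitaryGroup (Fin N) ℂ) (g : AddCircle (2 * π) → ℂ) (C : ℝ)
    (hC : ∀ x, ‖g x‖ ≤ C) : ‖PP U g‖ ≤ C ^ N := by
  have : ∀ s : Multiset ℝ, ‖(s.map fun θ : ℝ => g (θ : AddCircle (2 * π))).prod‖ ≤ C ^ (Multiset.card s) := by
    intro s
    induction s using Multiset.induction_on with
    | empty => simp
    | cons a s ih =>
      rw [Multiset.map_cons, Multiset.prod_cons, norm_mul, Multiset.card_cons, pow_succ']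
      exact mul_le_mul (hC _) ih (norm_nonneg _) ((norm_nonneg _).trans (hC 0))
  have h := this (eigenAngles N U)
  rwa [card_eigenAngles] at h

lemma fourierCoeff_tendsto (g : ℕ → AddCircle (2 * π) → ℂ) (G : AddCircle (2 * π) → ℂ) (C : ℝ)
    (hm : ∀ k, AEStronglyMeasurable (g k) AddCircle.haarAddCircle)
    (hC : ∀ k x, ‖g k x‖ ≤ C) (hlim : ∀ x, Tendsto (fun k => g k x) atTop (nhds (G x))) (n : ℤ) :
    Tendsto (fun k => fourierCoeff (g k) n) atTop (nhds (fourierCoeff G n)) := by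
  unfold fourierCoeff
  refine tendsto_integral_of_dominated_convergence (fun _ => C) (fun k => ?_) (integrable_const C) (fun k => ?_) ?_
  · exact (map_continuous (fourier (-n))).aestronglyMeasurable.smul (hm k)
  · refine Eventually.of_forall fun x => ?_
    rw [norm_smul]
    have : ‖fourier (-n) x‖ = 1 := by rw [fourier_apply, Circle.norm_coe]
    rw [this, one_mul]
    exact hC k x
  · exact Eventually.of_forall fun x => (hlim x).const_smul _

lemma TF_det_tendsto {N : ℕ} (g : ℕ → AddCircle (2 * π) → ℂ) (G : AddCircle (2 * π) → ℂ) (C : ℝ)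
    (hm : ∀ k, AEStronglyMeasurable (g k) AddCircle.haarAddCircle)
    (hC : ∀ k x, ‖g k x‖ ≤ C) (hlim : ∀ x, Tendsto (fun k => g k x) atTop (nhds (G x))) :
    Tendsto (fun k => (TF N (g k)).det) atTop (nhds (TF N G).det) := by
  have h : Tendsto (fun k => TF N (g k)) atTop (nhds (TF N G)) := by
    refine tendsto_pi_nhds.2 fun i => tendsto_pi_nhds.2 fun j => ?_
    exact fourierCoeff_tendsto g G C hm hC hlim _
  exact ((Continuous.matrix_det continuous_id).tendsto _).comp h

lemma PP_tendsto {N : ℕ} (U : Matrix.unitaryGroup (Fin N) ℂ) (g : ℕ → AddCircle (2 * π) → ℂ) (G : AddCircle (2 * π) → ℂ)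
    (hlim : ∀ x, Tendsto (fun k => g k x) atTop (nhds (G x))) :
    Tendsto (fun k => PP U (g k)) atTop (nhds (PP U G)) :=
  tendsto_multiset_prod (f := fun (θ : ℝ) k => g k θ) (a := fun θ : ℝ => G θ) (eigenAngles N U) fun θ _ => hlim θ

lemma cont_int {N : ℕ} (ℙ : Measure (Matrix.unitaryGroup (Fin N) ℂ))
    [IsProbabilityMeasure ℙ] [ℙ.IsHaarMeasure] (g : C(AddCircle (2 * π), ℂ)) :
    Integrable (fun U : Matrix.unitaryGroup (Fin N) ℂ => PP U g) ℙ ∧ ∫ U, PP U g ∂ℙ = (TF N g).det := by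
  have hmem : g ∈ closure ((Submodule.span ℂ (Set.range (@fourier (2 * π))) : Submodule ℂ C(AddCircle (2 * π), ℂ)) : Set C(AddCircle (2 * π), ℂ)) := by
    rw [← Submodule.topologicalClosure_coe, span_fourier_closure_eq_top]
    trivial
  obtain ⟨u, hu, hlim⟩ := mem_closure_iff_seq_limit.1 hmem
  obtain ⟨C, hC⟩ := (hlim.norm.bddAbove_range)
  have hC' : ∀ k x, ‖u k x‖ ≤ C := fun k x => ((u k).norm_coe_le_norm x).trans (hC ⟨k, rfl⟩)
  have hptw : ∀ x, Tendsto (fun k => u k x) atTop (nhds (g x)) := fun x =>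
    ((continuous_eval_const x).tendsto g).comp hlim
  have hmeas : ∀ k, AEStronglyMeasurable (fun U : Matrix.unitaryGroup (Fin N) ℂ => PP U (u k)) ℙ := fun k =>
    (integrable_of_cont ℙ _ (trig_int ℙ (u k) (hu k)).1).aestronglyMeasurable
  have hm : AEStronglyMeasurable (fun U : Matrix.unitaryGroup (Fin N) ℂ => PP U g) ℙ :=
    aestronglyMeasurable_of_tendsto_ae atTop hmeas (Eventually.of_forall fun U => PP_tendsto U _ _ hptw)
  refine ⟨?_, ?_⟩
  · refine Integrable.of_bound hm (‖g‖ ^ N) (Eventually.of_forall fun U => norm_PP_le U g _ fun x => g.norm_coe_le_norm x)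
  · have h1 : Tendsto (fun k => ∫ U, PP U (u k) ∂ℙ) atTop (nhds (∫ U, PP U g ∂ℙ)) :=
      tendsto_integral_of_dominated_convergence (fun _ => C ^ N) hmeas (integrable_const _)
        (fun k => Eventually.of_forall fun U => norm_PP_le U _ _ (hC' k))
        (Eventually.of_forall fun U => PP_tendsto U _ _ hptw)
    simp only [fun k => (trig_int (N := N) ℙ (u k) (hu k)).2] at h1
    exact tendsto_nhds_unique h1 (TF_det_tendsto _ _ C (fun k => (map_continuous (u k)).aestronglyMeasurable) hC' hptw)
end HaarU

namespace HaarU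

open Classical in
lemma tail_arc {N : ℕ} (ℙ : Measure (Matrix.unitaryGroup (Fin N) ℂ))
    [IsProbabilityMeasure ℙ] [ℙ.IsHaarMeasure] (B : Set (AddCircle (2 * π))) (hB : IsClosed B) (t : ℝ)
    (S : Set (Matrix.unitaryGroup (Fin N) ℂ))
    (hS : ∀ U ∈ S, t ≤ (Multiset.card ((eigenAngles N U).filter fun θ : ℝ => (θ : AddCircle (2 * π)) ∈ B) : ℝ)) :
    (ℙ S).toReal ≤ Real.exp (-t) *
      (TF N (fun x => 1 + ((Real.exp 1 - 1 : ℝ) : ℂ) * B.indicator (fun _ => (1:ℂ)) x)).det.re := by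
  set c : ℝ := Real.exp 1 - 1 with hc
  have hc0 : 0 ≤ c := by rw [hc]; linarith [Real.add_one_le_exp 1]
  set a : ℕ → AddCircle (2 * π) → ℝ := fun n x => (hB.apprSeq n x : ℝ) with ha
  have hacont : ∀ n, Continuous (a n) := fun n => NNReal.continuous_coe.comp (map_continuous (hB.apprSeq n))
  have ha0 : ∀ n x, 0 ≤ a n x := fun n x => NNReal.coe_nonneg _
  have ha1 : ∀ n x, a n x ≤ 1 := fun n x => by
    exact_mod_cast HasOuterApproxClosed.apprSeq_apply_le_one hB n x
  have haB : ∀ n, ∀ x ∈ B, a n x = 1 := fun n x hx => by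
    simp only [ha]
    rw [HasOuterApproxClosed.apprSeq_apply_eq_one hB n hx]; rfl
  have halim : ∀ x, Tendsto (fun n => a n x) atTop (nhds (B.indicator (fun _ => (1:ℝ)) x)) := by
    intro x
    have h1 := tendsto_pi_nhds.1 (HasOuterApproxClosed.tendsto_apprSeq hB) x
    have h2 := (NNReal.continuous_coe.tendsto _).comp h1
    have e : B.indicator (fun _ => (1:ℝ)) x = ((B.indicator (fun _ => (1:NNReal)) x : NNReal) : ℝ) := by
      by_cases hx : x ∈ B <;> simp [hx]
    rw [e]; exact h2
  set g : ℕ → C(AddCircle (2 * π), ℂ) := fun n => ⟨fun x => ((1 + c * a n x : ℝ) : ℂ),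
    Complex.continuous_ofReal.comp (continuous_const.add (continuous_const.mul (hacont n)))⟩ with hg
  set R : ℕ → Matrix.unitaryGroup (Fin N) ℂ → ℝ := fun n U =>
    ((eigenAngles N U).map fun θ : ℝ => 1 + c * a n (θ : AddCircle (2 * π))).prod with hR
  have hRP : ∀ n U, PP U (g n) = (R n U : ℂ) := by
    intro n U
    simp only [hR, PP, hg]
    rw [← Complex.ofRealHom_eq_coe, map_multiset_prod, Multiset.map_map]
    rfl
  have hRint : ∀ n, Integrable (R n) ℙ := by
    intro n
    have := (cont_int ℙ (g n)).1.re
    simpa [hRP] using this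
  have hRval : ∀ n, ∫ U, R n U ∂ℙ = (TF N (g n)).det.re := by
    intro n
    have := (cont_int ℙ (g n)).2
    simp only [hRP] at this
    rw [integral_complex_ofReal] at this
    rw [← this]; simp
  have hRge : ∀ n U, Real.exp (Multiset.card ((eigenAngles N U).filter fun θ : ℝ => (θ : AddCircle (2 * π)) ∈ B)) ≤ R n U := by
    intro n U
    simp only [hR]
    generalize eigenAngles N U = s
    induction s using Multiset.induction_on with
    | empty => simp
    | cons θ s ih =>
      rw [Multiset.map_cons, Multiset.prod_cons]
      by_cases hθ : (θ : AddCircle (2 * π)) ∈ B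
      · rw [Multiset.filter_cons_of_pos (p := fun θ : ℝ => (θ : AddCircle (2 * π)) ∈ B) _ hθ, Multiset.card_cons, haB n _ hθ]
        push_cast
        rw [add_comm, Real.exp_add]
        refine mul_le_mul ?_ ih (Real.exp_pos _).le ?_
        · rw [hc]; linarith
        · linarith
      · rw [Multiset.filter_cons_of_neg (p := fun θ : ℝ => (θ : AddCircle (2 * π)) ∈ B) _ hθ]
        have h1 : 1 ≤ 1 + c * a n (θ : AddCircle (2 * π)) := by
          have := mul_nonneg hc0 (ha0 n θ); linarith
        calc _ = 1 * Real.exp (Multiset.card (s.filter fun θ : ℝ => (θ : AddCircle (2 * π)) ∈ B)) := by rw [one_mul]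
          _ ≤ _ := mul_le_mul h1 ih (Real.exp_pos _).le (by linarith)
  have hmarkov : ∀ n, (ℙ S).toReal ≤ Real.exp (-t) * (TF N (g n)).det.re := by
    intro n
    have hnn : 0 ≤ᵐ[ℙ] R n := Eventually.of_forall fun U => (Real.exp_pos _).le.trans (hRge n U)
    have h1 := mul_meas_ge_le_integral_of_nonneg hnn (hRint n) (Real.exp t)
    rw [hRval] at h1
    have h2 : (ℙ S).toReal ≤ ℙ.real {U | Real.exp t ≤ R n U} := by
      apply measureReal_mono _ (measure_ne_top _ _)
      intro U hU
      exact (Real.exp_le_exp.2 (hS U hU)).trans (hRge n U)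
    have h3 : Real.exp t * (ℙ S).toReal ≤ (TF N (g n)).det.re :=
      (mul_le_mul_of_nonneg_left h2 (Real.exp_pos t).le).trans h1
    calc (ℙ S).toReal = Real.exp (-t) * (Real.exp t * (ℙ S).toReal) := by
          rw [← mul_assoc, ← Real.exp_add]; simp
      _ ≤ _ := mul_le_mul_of_nonneg_left h3 (Real.exp_pos _).le
  have hlim : Tendsto (fun n => (TF N (g n)).det) atTop
      (nhds (TF N (fun x => 1 + (c : ℂ) * B.indicator (fun _ => (1:ℂ)) x)).det) := by
    refine TF_det_tendsto (fun n => g n) _ (1 + c) (fun n => (map_continuous (g n)).aestronglyMeasurable) ?_ ?_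
    · intro n x
      simp only [hg, ContinuousMap.coe_mk, Complex.norm_real, Real.norm_eq_abs]
      have h1 := mul_nonneg hc0 (ha0 n x)
      have h2 := mul_le_mul_of_nonneg_left (ha1 n x) hc0
      rw [abs_of_nonneg] <;> linarith
    · intro x
      have h1 : Tendsto (fun n => 1 + c * a n x) atTop (nhds (1 + c * B.indicator (fun _ => (1:ℝ)) x)) :=
        ((halim x).const_mul c).const_add 1
      have h2 := (Complex.continuous_ofReal.tendsto _).comp h1
      have e : 1 + (c : ℂ) * B.indicator (fun _ => (1:ℂ)) x
          = ((1 + c * B.indicator (fun _ => (1:ℝ)) x : ℝ) : ℂ) := by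
        by_cases hx : x ∈ B <;> simp [hx]
      rw [e]; exact h2
  have hlim2 : Tendsto (fun n => Real.exp (-t) * (TF N (g n)).det.re) atTop
      (nhds (Real.exp (-t) * (TF N (fun x => 1 + (c : ℂ) * B.indicator (fun _ => (1:ℂ)) x)).det.re)) :=
    ((Complex.continuous_re.tendsto _).comp hlim).const_mul _
  exact ge_of_tendsto' hlim2 hmarkov

lemma TF_affine {N : ℕ} (B : Set (AddCircle (2 * π))) (hB : MeasurableSet B) (c : ℂ) :
    TF N (fun x => 1 + c * B.indicator (fun _ => (1:ℂ)) x) = 1 + c • TF N (B.indicator fun _ => (1:ℂ)) := by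
  have hi : Integrable (B.indicator fun _ => (1:ℂ)) (@AddCircle.haarAddCircle (2 * π) _) :=
    (integrable_const _).indicator hB
  have h1 : (fun x => 1 + c * B.indicator (fun _ => (1:ℂ)) x) =
      (fourier 0 : AddCircle (2 * π) → ℂ) + (c • (B.indicator fun _ => (1:ℂ)) : AddCircle (2 * π) → ℂ) := by
    funext x; simp
  have h0 : Integrable (fourier 0 : AddCircle (2 * π) → ℂ) (@AddCircle.haarAddCircle (2 * π) _) :=
    (map_continuous (fourier 0)).integrable_of_hasCompactSupport (HasCompactSupport.of_compactSpace _)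
  ext i j
  rw [TF, Matrix.of_apply, h1, fourierCoeff.add h0 (hi.smul c), Pi.add_apply, fourierCoeff.const_smul,
    fourierCoeff_fourier, Matrix.add_apply, Matrix.smul_apply, TF, Matrix.of_apply, Matrix.one_apply, Pi.single_apply]
  congr 1
  have : (i = j) ↔ ((j:ℤ) - i = 0) := by rw [Fin.ext_iff]; omega
  simp only [this]
end HaarU

namespace HaarU
open scoped ComplexOrder

lemma scalar_ineq (l : ℝ) (h0 : 0 ≤ l) (h1 : l ≤ 1) :
    1 + (Real.exp 1 - 1) * l ≤ Real.exp (l + 2 * (l - l * l)) := by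
  have he1 : Real.exp 1 < 2.7182818286 := Real.exp_one_lt_d9
  have he2 : 2.7182818283 < Real.exp 1 := Real.exp_one_gt_d9
  by_cases h : l ≤ 1 / 2
  · calc 1 + (Real.exp 1 - 1) * l ≤ Real.exp ((Real.exp 1 - 1) * l) := by
          rw [add_comm]; exact Real.add_one_le_exp _
      _ ≤ _ := Real.exp_le_exp.2 (by nlinarith)
  · push Not at h
    set c := (Real.exp 1 - 1) / Real.exp 1 with hc
    have hepos := Real.exp_pos 1
    have hce : c * Real.exp 1 = Real.exp 1 - 1 := by rw [hc]; field_simp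
    have hc0 : 0 ≤ c := by rw [hc]; apply div_nonneg <;> linarith
    have e1 : 1 + (Real.exp 1 - 1) * l = Real.exp 1 * (-(c * (1 - l)) + 1) := by
      have : Real.exp 1 * (-(c * (1 - l)) + 1) = -(c * Real.exp 1) * (1 - l) + Real.exp 1 := by ring
      rw [this, hce]; ring
    rw [e1]
    calc Real.exp 1 * (-(c * (1 - l)) + 1) ≤ Real.exp 1 * Real.exp (-(c * (1 - l))) :=
          mul_le_mul_of_nonneg_left (Real.add_one_le_exp _) hepos.le
      _ = Real.exp (1 - c * (1 - l)) := by rw [← Real.exp_add]; ring_nf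
      _ ≤ _ := Real.exp_le_exp.2 (by nlinarith [mul_nonneg hc0 (sub_nonneg.2 h1)])

lemma det_bound {N : ℕ} (K : Matrix (Fin N) (Fin N) ℂ) (h1 : K.PosSemidef) (h2 : (1 - K).PosSemidef) :
    (1 + ((Real.exp 1 - 1 : ℝ) : ℂ) • K).det.re ≤
      Real.exp (K.trace.re + 2 * (K.trace.re - (K * K).trace.re)) := by
  set l := h1.1.eigenvalues with hl
  have hl0 : ∀ i, 0 ≤ l i := h1.eigenvalues_nonneg
  have hl1 : ∀ i, l i ≤ 1 := by
    intro i
    have a := h2.re_dotProduct_nonneg (h1.1.eigenvectorBasis i).ofLp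
    rw [Matrix.sub_mulVec, Matrix.one_mulVec, h1.1.mulVec_eigenvectorBasis, dotProduct_sub] at a
    have b : star (h1.1.eigenvectorBasis i).ofLp ⬝ᵥ (h1.1.eigenvectorBasis i).ofLp = 1 := by
      have := h1.1.eigenvectorBasis.orthonormal.1 i
      have h3 := inner_self_eq_norm_sq_to_K (𝕜 := ℂ) (h1.1.eigenvectorBasis i)
      rw [this, EuclideanSpace.inner_eq_star_dotProduct, dotProduct_comm] at h3
      simpa using h3
    rw [dotProduct_smul, b] at a
    simp at a
    linarith
  have hsp := h1.1.spectral_theorem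
  rw [Unitary.conjStarAlgAut_apply] at hsp
  set V : Matrix (Fin N) (Fin N) ℂ := (h1.1.eigenvectorUnitary).1 with hV
  set D : Matrix (Fin N) (Fin N) ℂ := Matrix.diagonal (RCLike.ofReal ∘ h1.1.eigenvalues) with hD
  have hVV : star V * V = 1 := Unitary.coe_star_mul_self h1.1.eigenvectorUnitary
  have hVV' : V * star V = 1 := Unitary.coe_mul_star_self h1.1.eigenvectorUnitary
  change K = V * D * star V at hsp
  have htr : K.trace.re = ∑ i, l i := by
    rw [h1.1.trace_eq_sum_eigenvalues]; simp [hl]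
  have htr2 : (K * K).trace.re = ∑ i, l i * l i := by
    have : K * K = V * (D * D) * star V := by
      calc K * K = (V * D * star V) * (V * D * star V) := by rw [← hsp]
        _ = V * D * (star V * V) * D * star V := by simp only [Matrix.mul_assoc]
        _ = _ := by rw [hVV]; simp only [Matrix.mul_assoc, Matrix.mul_one]
    rw [this, Matrix.trace_mul_cycle, hVV, Matrix.one_mul, hD, Matrix.diagonal_mul_diagonal, Matrix.trace_diagonal]
    simp [hl]
  have hdet : (1 + ((Real.exp 1 - 1 : ℝ) : ℂ) • K).det = ((∏ i, (1 + (Real.exp 1 - 1) * l i) : ℝ) : ℂ) := by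
    have : 1 + ((Real.exp 1 - 1 : ℝ) : ℂ) • K = V * (1 + ((Real.exp 1 - 1 : ℝ) : ℂ) • D) * star V := by
      rw [Matrix.mul_add, Matrix.add_mul, Matrix.mul_one, hVV', Matrix.mul_smul, Matrix.smul_mul, ← hsp]
    rw [this, Matrix.det_mul, mul_comm, ← Matrix.det_mul, ← Matrix.mul_assoc, hVV, Matrix.one_mul]
    have h3 : 1 + ((Real.exp 1 - 1 : ℝ) : ℂ) • D =
        Matrix.diagonal fun i => ((1 + (Real.exp 1 - 1) * l i : ℝ) : ℂ) := by
      ext i j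
      by_cases hij : i = j
      · subst hij; simp [hD, hl]
      · simp [hD, hij, Matrix.one_apply_ne hij]
    rw [h3, Matrix.det_diagonal]
    push_cast; rfl
  rw [hdet, Complex.ofReal_re, htr, htr2, ← Finset.sum_sub_distrib, Finset.mul_sum, ← Finset.sum_add_distrib,
    Real.exp_sum]
  apply Finset.prod_le_prod
  · intro i _
    have := Real.add_one_le_exp 1
    have := hl0 i
    nlinarith
  · intro i _
    exact scalar_ineq _ (hl0 i) (hl1 i)

lemma TF_psd {N : ℕ} (B : Set (AddCircle (2 * π))) (hB : MeasurableSet B) :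
    (TF N (B.indicator fun _ => (1:ℂ))).PosSemidef := by
  have hent : ∀ i j : Fin N, TF N (B.indicator fun _ => (1:ℂ)) i j =
      ∫ t in B, fourier (i:ℤ) t * star (fourier (j:ℤ) t : ℂ) ∂(@AddCircle.haarAddCircle (2 * π) _) := by
    intro i j
    rw [TF, Matrix.of_apply, fourierCoeff, ← integral_indicator hB]
    congr 1
    funext t
    by_cases ht : t ∈ B
    · simp only [Set.indicator_of_mem ht, smul_eq_mul, mul_one]
      rw [show -((j:ℤ) - (i:ℤ)) = i + -j by ring, fourier_add, fourier_neg]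
      rfl
    · simp [ht]
  refine Matrix.posSemidef_iff_dotProduct_mulVec.2 ⟨?_, ?_⟩
  · ext i j
    rw [Matrix.conjTranspose_apply, hent, hent]
    rw [← starRingEnd_apply, ← integral_conj]
    congr 1
    funext t
    simp [mul_comm]
  · intro v
    have hI : ∀ i j : Fin N, Integrable (fun t => star (v i) * (fourier (i:ℤ) t * star (fourier (j:ℤ) t : ℂ)) * v j)
        ((@AddCircle.haarAddCircle (2 * π) _).restrict B) := by
      intro i j
      refine Integrable.restrict ?_
      refine Continuous.integrable_of_hasCompactSupport ?_ (HasCompactSupport.of_compactSpace _)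
      fun_prop
    have : star v ⬝ᵥ (TF N (B.indicator fun _ => (1:ℂ))).mulVec v =
        ∫ t in B, ((Complex.normSq (∑ i : Fin N, star (v i) * fourier (i:ℤ) t) : ℝ) : ℂ) ∂(@AddCircle.haarAddCircle (2 * π) _) := by
      calc star v ⬝ᵥ (TF N (B.indicator fun _ => (1:ℂ))).mulVec v
          = ∑ i : Fin N, ∑ j : Fin N, ∫ t in B, star (v i) * (fourier (i:ℤ) t * star (fourier (j:ℤ) t : ℂ)) * v j
              ∂(@AddCircle.haarAddCircle (2 * π) _) := by
            simp only [dotProduct, Matrix.mulVec, Finset.mul_sum, hent]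
            refine Finset.sum_congr rfl fun i _ => Finset.sum_congr rfl fun j _ => ?_
            rw [integral_mul_const, integral_const_mul]
            simp [mul_assoc]
        _ = ∫ t in B, ∑ i : Fin N, ∑ j : Fin N, star (v i) * (fourier (i:ℤ) t * star (fourier (j:ℤ) t : ℂ)) * v j
              ∂(@AddCircle.haarAddCircle (2 * π) _) := by
            rw [integral_finsetSum _ fun i _ => integrable_finsetSum _ fun j _ => hI i j]
            refine Finset.sum_congr rfl fun i _ => ?_
            rw [integral_finsetSum _ fun j _ => hI i j]
        _ = _ := by
            congr 1
            funext t
            rw [← Complex.mul_conj, map_sum, Finset.sum_mul_sum]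
            refine Finset.sum_congr rfl fun i _ => Finset.sum_congr rfl fun j _ => ?_
            simp
            ring
    rw [this, integral_complex_ofReal]
    exact_mod_cast integral_nonneg fun t => Complex.normSq_nonneg _

lemma TF_psd' {N : ℕ} (B : Set (AddCircle (2 * π))) (hB : MeasurableSet B) :
    (1 - TF N (B.indicator fun _ => (1:ℂ))).PosSemidef := by
  have h := TF_psd (N := N) Bᶜ hB.compl
  have h2 := TF_affine (N := N) B hB (-1)
  rw [neg_one_smul, ← sub_eq_add_neg] at h2
  rw [← h2]
  convert h using 2
  funext x
  by_cases hx : x ∈ B <;> simp [hx]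
end HaarU

namespace HaarU

lemma tail_one (f : ℕ → ℝ) (hf : ∀ n, 0 ≤ f n) (c m : ℝ) (hc : 0 ≤ c) (hm : 1 ≤ m)
    (h : ∀ n : ℕ, f n ≤ c * (1 / (n + m) ^ 2)) : ∑' n, f n ≤ c * (1 / (m - 1 / 2)) := by
  apply Real.tsum_le_of_sum_range_le hf
  intro k
  have key : ∀ k : ℕ, ∑ n ∈ Finset.range k, f n ≤ c * (1 / (m - 1 / 2) - 1 / (k + m - 1 / 2)) := by
    intro k
    induction k with
    | zero => simp
    | succ k ih =>
      rw [Finset.sum_range_succ]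
      have h1 := h k
      have hk : (0:ℝ) ≤ k := Nat.cast_nonneg k
      have h2 : 1 / ((k:ℝ) + m) ^ 2 ≤ 1 / (k + m - 1 / 2) - 1 / ((k + 1 : ℕ) + m - 1 / 2) := by
        push_cast
        have h3 : 0 < (k:ℝ) + m - 1 / 2 := by linarith
        have h4 : 0 < (k:ℝ) + 1 + m - 1 / 2 := by linarith
        rw [div_sub_div _ _ h3.ne' h4.ne', div_le_div_iff₀ (by positivity) (by positivity)]
        nlinarith
      have h5 := mul_le_mul_of_nonneg_left h2 hc
      linarith
  refine (key k).trans (mul_le_mul_of_nonneg_left ?_ hc)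
  have hk : (0:ℝ) ≤ k := Nat.cast_nonneg k
  have : 0 ≤ 1 / ((k:ℝ) + m - 1 / 2) := by apply div_nonneg <;> linarith
  linarith

lemma tail_two (s : ℤ → ℝ) (p : ℝ) (hs : HasSum s p) (hpos : ∀ d, 0 ≤ s d) (c : ℝ) (hc : 0 ≤ c)
    (hb : ∀ d : ℤ, d ≠ 0 → s d ≤ c * (1 / (d:ℝ) ^ 2)) (N i : ℕ) (hi : i < N) :
    p ≤ ∑ j ∈ Finset.range N, s ((j:ℤ) - i) + c * (1 / ((N:ℝ) - i - 1 / 2) + 1 / ((i:ℝ) + 1 / 2)) := by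
  have hs1 : HasSum (fun d : ℤ => s (d - i)) p := (Equiv.subRight (i:ℤ)).hasSum_iff.2 hs
  have hsm := hs1.summable
  have hn1 : Summable fun n : ℕ => s ((n:ℤ) - i) := hsm.comp_injective Nat.cast_injective
  have hn2 : Summable fun n : ℕ => s (-((n:ℤ) + 1) - i) :=
    hsm.comp_injective (i := fun n : ℕ => -((n:ℤ) + 1)) (fun a b h => by simpa using h)
  have h1 : p = ∑' n : ℕ, s ((n:ℤ) - i) + ∑' n : ℕ, s (-((n:ℤ) + 1) - i) := by
    rw [← hs1.tsum_eq]
    exact tsum_of_nat_of_neg_add_one hn1 hn2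
  rw [← hn1.sum_add_tsum_nat_add N] at h1
  have hiN : (i:ℝ) + 1 ≤ N := by exact_mod_cast hi
  have h2 : ∑' n : ℕ, s (((n + N : ℕ) : ℤ) - i) ≤ c * (1 / ((N:ℝ) - i - 1 / 2)) := by
    refine tail_one _ (fun n => hpos _) c _ hc (by linarith) fun n => ?_
    refine (hb _ (by omega)).trans (le_of_eq ?_)
    push_cast; ring_nf
  have h3 : ∑' n : ℕ, s (-((n:ℤ) + 1) - i) ≤ c * (1 / ((i + 1 : ℝ) - 1 / 2)) := by
    refine tail_one _ (fun n => hpos _) c _ hc (by linarith [(Nat.cast_nonneg i : (0:ℝ) ≤ i)]) fun n => ?_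
    refine (hb _ (by omega)).trans (le_of_eq ?_)
    push_cast; ring_nf
  have h4 : (i + 1 : ℝ) - 1 / 2 = (i:ℝ) + 1 / 2 := by ring
  rw [h4] at h3
  rw [mul_add]
  linarith

lemma harm (N : ℕ) (hN : 1 ≤ N) : ∑ i ∈ Finset.range N, 1 / ((i:ℝ) + 1 / 2) ≤ 2 + Real.log N := by
  induction N, hN using Nat.le_induction with
  | base => norm_num
  | succ n hn ih =>
    rw [Finset.sum_range_succ]
    have hn0 : (0:ℝ) < n := by exact_mod_cast hn
    have h := Real.le_log_one_add_of_nonneg (x := 1 / (n:ℝ)) (by positivity)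
    have h1 : Real.log ((n + 1 : ℕ) : ℝ) = Real.log n + Real.log (1 + 1 / (n:ℝ)) := by
      rw [← Real.log_mul hn0.ne' (by positivity)]
      congr 1; push_cast; field_simp
    have h2 : 2 * (1 / (n:ℝ)) / (1 / (n:ℝ) + 2) = 1 / ((n:ℝ) + 1 / 2) := by field_simp; ring
    rw [h2] at h
    rw [h1]; linarith

lemma tail_all (s : ℤ → ℝ) (p : ℝ) (hs : HasSum s p) (hpos : ∀ d, 0 ≤ s d)
    (hb : ∀ d : ℤ, d ≠ 0 → s d ≤ (1 / π ^ 2) * (1 / (d:ℝ) ^ 2)) (N : ℕ) (hN : 2 ≤ N) :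
    2 * (N * p - ∑ i ∈ Finset.range N, ∑ j ∈ Finset.range N, s ((j:ℤ) - i)) ≤ Real.log (2 * N) := by
  have hc : 0 ≤ 1 / π ^ 2 := by positivity
  have h1 : N * p ≤ ∑ i ∈ Finset.range N, (∑ j ∈ Finset.range N, s ((j:ℤ) - i)
      + 1 / π ^ 2 * (1 / ((N:ℝ) - i - 1 / 2) + 1 / ((i:ℝ) + 1 / 2))) := by
    calc N * p = ∑ i ∈ Finset.range N, p := by simp
      _ ≤ _ := Finset.sum_le_sum fun i hi => tail_two s p hs hpos _ hc hb N i (Finset.mem_range.1 hi)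
  rw [Finset.sum_add_distrib, ← Finset.mul_sum, Finset.sum_add_distrib] at h1
  have h2 : ∑ i ∈ Finset.range N, 1 / ((N:ℝ) - i - 1 / 2) = ∑ i ∈ Finset.range N, 1 / ((i:ℝ) + 1 / 2) := by
    rw [← Finset.sum_range_reflect]
    refine Finset.sum_congr rfl fun i hi => ?_
    have := Finset.mem_range.1 hi
    congr 1
    rw [Nat.sub_sub, Nat.cast_sub (by omega)]
    push_cast; ring
  rw [h2] at h1
  have h3 := harm N (by omega)
  have hL : Real.log 2 ≤ Real.log N := Real.log_le_log (by norm_num) (by exact_mod_cast hN)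
  have hl2 := Real.log_two_gt_d9
  rw [Real.log_mul (by norm_num) (by positivity)]
  have hpi : 1 / π ^ 2 ≤ 1 / 9.85 := by
    apply one_div_le_one_div_of_le (by norm_num)
    nlinarith [Real.pi_gt_d2]
  have h5 : 1 / π ^ 2 * (∑ i ∈ Finset.range N, 1 / ((i:ℝ) + 1 / 2) + ∑ i ∈ Finset.range N, 1 / ((i:ℝ) + 1 / 2))
      ≤ 1 / 9.85 * (2 * (2 + Real.log N)) := by
    refine mul_le_mul hpi (by linarith) ?_ (by norm_num)
    positivity
  linarith

end HaarU

namespace HaarU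

/-- closed arc -/
def arc (a b : ℝ) : Set (AddCircle (2 * π)) := (fun x : ℝ => (x : AddCircle (2 * π))) '' Set.Icc a b

lemma arc_closed (a b : ℝ) : IsClosed (arc a b) :=
  (isCompact_Icc.image (AddCircle.continuous_mk' (2 * π))).isClosed

lemma mem_arc {a b : ℝ} (ha : 0 ≤ a) (hb : b ≤ 2 * π) {x : ℝ} (hx0 : 0 < x) (hx1 : x < 2 * π) :
    (x : AddCircle (2 * π)) ∈ arc a b ↔ x ∈ Set.Icc a b := by
  constructor
  · rintro ⟨y, ⟨hy1, hy2⟩, hy⟩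
    have hp := Real.two_pi_pos
    have h0 : ((y - x : ℝ) : AddCircle (2 * π)) = 0 := by
      rw [AddCircle.coe_sub]; exact sub_eq_zero.2 hy
    obtain ⟨n, hn⟩ := (AddCircle.coe_eq_zero_iff _).1 h0
    rw [zsmul_eq_mul] at hn
    have h1 : (n:ℝ) < 1 := by nlinarith
    have h2 : (-1:ℝ) < n := by nlinarith
    have h3 : n < 1 := by exact_mod_cast h1
    have h4 : -1 < n := by exact_mod_cast h2
    have h5 : n = 0 := by omega
    subst h5
    simp at hn
    have : x = y := by linarith
    subst this; exact ⟨hy1, hy2⟩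
  · intro h; exact ⟨x, h, rfl⟩

lemma coeff_arc {a b : ℝ} (ha : 0 ≤ a) (hab : a ≤ b) (hb : b ≤ 2 * π) (n : ℤ) :
    fourierCoeff ((arc a b).indicator fun _ => (1:ℂ)) n =
      (1 / (2 * π)) • ∫ x in a..b, (fourier (-n) (x : AddCircle (2 * π)) : ℂ) := by
  rw [fourierCoeff_eq_intervalIntegral _ n 0, zero_add]
  congr 1
  rw [intervalIntegral.integral_of_le Real.two_pi_pos.le, intervalIntegral.integral_of_le hab]
  have h1 : ∫ x in Set.Ioc 0 (2 * π), (fourier (-n) (x : AddCircle (2 * π)) : ℂ) •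
      (arc a b).indicator (fun _ => (1:ℂ)) (x : AddCircle (2 * π)) =
      ∫ x in Set.Ioc 0 (2 * π), (Set.Ioc a b).indicator (fun x : ℝ => (fourier (-n) (x : AddCircle (2 * π)) : ℂ)) x := by
    apply setIntegral_congr_ae measurableSet_Ioc
    have e1 : ∀ᵐ x : ℝ, x ≠ 2 * π := by simp [ae_iff, measure_singleton]
    have e2 : ∀ᵐ x : ℝ, x ≠ a := by simp [ae_iff, measure_singleton]
    filter_upwards [e1, e2] with x hx1 hx2 hx
    have hm := mem_arc ha hb hx.1 (lt_of_le_of_ne hx.2 hx1)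
    by_cases h : x ∈ Set.Icc a b
    · have h' : x ∈ Set.Ioc a b := ⟨lt_of_le_of_ne h.1 (Ne.symm hx2), h.2⟩
      rw [Set.indicator_of_mem (hm.2 h), Set.indicator_of_mem h']; simp
    · have h' : x ∉ Set.Ioc a b := fun h'' => h ⟨h''.1.le, h''.2⟩
      rw [Set.indicator_of_notMem (fun h'' => h (hm.1 h'')), Set.indicator_of_notMem h']; simp
  rw [h1, setIntegral_indicator measurableSet_Ioc]
  congr 2
  rw [Set.inter_eq_right]
  exact Set.Ioc_subset_Ioc ha hb

lemma coeff_arc_zero {a b : ℝ} (ha : 0 ≤ a) (hab : a ≤ b) (hb : b ≤ 2 * π) :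
    fourierCoeff ((arc a b).indicator fun _ => (1:ℂ)) 0 = (((b - a) / (2 * π) : ℝ) : ℂ) := by
  rw [coeff_arc ha hab hb]
  simp
  ring

lemma coeff_arc_bound {a b : ℝ} (ha : 0 ≤ a) (hab : a ≤ b) (hb : b ≤ 2 * π) (n : ℤ) (hn : n ≠ 0) :
    ‖fourierCoeff ((arc a b).indicator fun _ => (1:ℂ)) n‖ ^ 2 ≤ (1 / π ^ 2) * (1 / (n:ℝ) ^ 2) := by
  rw [coeff_arc ha hab hb]
  have hintg : ∫ x in a..b, (fourier (-n) (x : AddCircle (2 * π)) : ℂ) =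
      ((2 * π : ℝ) : ℂ) / (-2 * π * Complex.I * n) * fourier (-n) (b : AddCircle (2 * π)) -
      ((2 * π : ℝ) : ℂ) / (-2 * π * Complex.I * n) * fourier (-n) (a : AddCircle (2 * π)) := by
    refine intervalIntegral.integral_eq_sub_of_hasDerivAt
      (f := fun y : ℝ => ((2 * π : ℝ) : ℂ) / (-2 * π * Complex.I * n) * fourier (-n) (y : AddCircle (2 * π)))
      (fun x _ => has_antideriv_at_fourier_neg fact_two_pi hn x) ?_
    apply Continuous.intervalIntegrable
    exact (map_continuous (fourier (-n))).comp (AddCircle.continuous_mk' (2 * π))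
  rw [hintg, ← mul_sub, norm_smul, norm_mul]
  have h1 : ‖(fourier (-n) (b : AddCircle (2 * π)) : ℂ) - fourier (-n) (a : AddCircle (2 * π))‖ ≤ 2 := by
    refine (norm_sub_le _ _).trans ?_
    rw [fourier_apply, fourier_apply, Circle.norm_coe, Circle.norm_coe]; norm_num
  have hn' : 0 < |(n:ℝ)| := abs_pos.2 (by exact_mod_cast hn)
  have h2 : ‖((2 * π : ℝ) : ℂ) / (-2 * π * Complex.I * n)‖ = 1 / |(n:ℝ)| := by
    have hp := Real.pi_pos
    rw [norm_div, Complex.norm_real]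
    simp [abs_of_pos hp]
    field_simp
  have h3 : ‖(1 / (2 * π) : ℝ)‖ = 1 / (2 * π) := by
    rw [Real.norm_eq_abs, abs_of_pos]; positivity
  rw [h2, h3]
  have hp := Real.pi_pos
  have h4 : 1 / (2 * π) * (1 / |(n:ℝ)| * ‖(fourier (-n) (b : AddCircle (2 * π)) : ℂ) - fourier (-n) (a : AddCircle (2 * π))‖)
      ≤ 1 / (π * |(n:ℝ)|) := by
    calc _ ≤ 1 / (2 * π) * (1 / |(n:ℝ)| * 2) := by gcongr
      _ = _ := by field_simp
  calc _ ≤ (1 / (π * |(n:ℝ)|)) ^ 2 := by gcongr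
    _ = _ := by rw [div_pow, mul_pow, sq_abs]; field_simp

lemma parseval_arc {a b : ℝ} (ha : 0 ≤ a) (hab : a ≤ b) (hb : b ≤ 2 * π) :
    HasSum (fun d : ℤ => ‖fourierCoeff ((arc a b).indicator fun _ => (1:ℂ)) d‖ ^ 2) ((b - a) / (2 * π)) := by
  have hB : MeasurableSet (arc a b) := (arc_closed a b).measurableSet
  have hm : MemLp ((arc a b).indicator fun _ => (1:ℂ)) 2 (@AddCircle.haarAddCircle (2 * π) _) :=
    (memLp_const (1:ℂ)).indicator hB
  obtain ⟨F, hF⟩ : ∃ F : Lp ℂ 2 (@AddCircle.haarAddCircle (2 * π) _),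
      F =ᵐ[@AddCircle.haarAddCircle (2 * π) _] ((arc a b).indicator fun _ => (1:ℂ)) := ⟨hm.toLp, hm.coeFn_toLp⟩
  have h := hasSum_sq_fourierCoeff F
  have e1 : ∀ d, fourierCoeff F d = fourierCoeff ((arc a b).indicator fun _ => (1:ℂ)) d := fun d =>
    congrFun (fourierCoeff_congr_ae hF) d
  simp only [e1] at h
  convert h using 1
  have h0 := coeff_arc_zero ha hab hb
  have : ((∫ t, ‖F t‖ ^ 2 ∂(@AddCircle.haarAddCircle (2 * π) _) : ℝ) : ℂ) =
      fourierCoeff ((arc a b).indicator fun _ => (1:ℂ)) 0 := by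
    rw [← integral_complex_ofReal, fourierCoeff]
    apply integral_congr_ae
    filter_upwards [hF] with t ht
    rw [ht]
    by_cases h : t ∈ arc a b <;> simp [h]
  rw [h0] at this
  exact_mod_cast this.symm

lemma arc_det {N : ℕ} (hN : 2 ≤ N) {a b : ℝ} (ha : 0 ≤ a) (hab : a ≤ b) (hb : b ≤ 2 * π) :
    (TF N (fun x => 1 + ((Real.exp 1 - 1 : ℝ) : ℂ) * (arc a b).indicator (fun _ => (1:ℂ)) x)).det.re ≤
      2 * N * Real.exp (N * ((b - a) / (2 * π))) := by
  have hB : MeasurableSet (arc a b) := (arc_closed a b).measurableSet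
  rw [TF_affine _ hB]
  have h := det_bound (TF N ((arc a b).indicator fun _ => (1:ℂ))) (TF_psd _ hB) (TF_psd' _ hB)
  have htr : (TF N ((arc a b).indicator fun _ => (1:ℂ))).trace.re = N * ((b - a) / (2 * π)) := by
    simp only [Matrix.trace, Matrix.diag_apply, TF, Matrix.of_apply, sub_self, coeff_arc_zero ha hab hb]
    rw [Complex.re_sum]
    simp only [Complex.ofReal_re, Finset.sum_const, Finset.card_univ, Fintype.card_fin, nsmul_eq_mul]
  have htr2 : ((TF N ((arc a b).indicator fun _ => (1:ℂ))) * (TF N ((arc a b).indicator fun _ => (1:ℂ)))).trace.re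
      = ∑ i ∈ Finset.range N, ∑ j ∈ Finset.range N,
        ‖fourierCoeff ((arc a b).indicator fun _ => (1:ℂ)) ((j:ℤ) - i)‖ ^ 2 := by
    rw [← Fin.sum_univ_eq_sum_range (fun i => ∑ j ∈ Finset.range N,
        ‖fourierCoeff ((arc a b).indicator fun _ => (1:ℂ)) ((j:ℤ) - i)‖ ^ 2), Matrix.trace, Complex.re_sum]
    refine Finset.sum_congr rfl fun i _ => ?_
    rw [← Fin.sum_univ_eq_sum_range (fun j =>
        ‖fourierCoeff ((arc a b).indicator fun _ => (1:ℂ)) ((j:ℤ) - (i:ℕ))‖ ^ 2), Matrix.diag_apply, Matrix.mul_apply,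
        Complex.re_sum]
    refine Finset.sum_congr rfl fun j _ => ?_
    have hherm := (TF_psd (N := N) _ hB).1.apply j i
    rw [← hherm]
    have : (TF N ((arc a b).indicator fun _ => (1:ℂ))) i j
      = fourierCoeff ((arc a b).indicator fun _ => (1:ℂ)) ((j:ℤ) - (i:ℕ)) := by simp [TF]
    rw [this, ← starRingEnd_apply, Complex.mul_conj, Complex.ofReal_re, Complex.normSq_eq_norm_sq]
  have ht := tail_all _ _ (parseval_arc ha hab hb) (fun d => sq_nonneg _) (coeff_arc_bound ha hab hb) N hN
  rw [htr, htr2] at h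
  refine h.trans ?_
  rw [Real.exp_add, mul_comm]
  refine mul_le_mul_of_nonneg_right ?_ (Real.exp_pos _).le
  rw [← Real.exp_log (show (0:ℝ) < 2 * N by positivity)]
  exact Real.exp_le_exp.2 ht

end HaarU

namespace HaarU

lemma angle_mem {N : ℕ} (U : Matrix.unitaryGroup (Fin N) ℂ) (θ : ℝ) (h : θ ∈ eigenAngles N U) :
    0 ≤ θ ∧ θ ≤ 2 * π := by
  rw [eigenAngles, Multiset.mem_map] at h
  obtain ⟨z, -, rfl⟩ := h
  have h1 := Complex.neg_pi_lt_arg z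
  have h2 := Complex.arg_le_pi z
  have := Real.pi_pos
  split_ifs with h
  · exact ⟨h, by linarith⟩
  · push Not at h
    exact ⟨by linarith, by linarith⟩

open Classical in
lemma count_le {N : ℕ} (U : Matrix.unitaryGroup (Fin N) ℂ) (A : Set ℝ) (p : ℝ → Prop) (h : ∀ θ ∈ A, p θ) :
    countAngles N U A ≤ Multiset.card ((eigenAngles N U).filter p) := by
  rw [countAngles]
  exact Multiset.card_le_card (Multiset.monotone_filter_right _ h)

open Classical in
lemma count_ge {N : ℕ} (U : Matrix.unitaryGroup (Fin N) ℂ) (A : Set ℝ) (p : ℝ → Prop)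
    (h : ∀ θ ∈ eigenAngles N U, θ ∉ A → p θ) :
    N ≤ countAngles N U A + Multiset.card ((eigenAngles N U).filter p) := by
  rw [countAngles]
  conv_lhs => rw [← card_eigenAngles U, ← Multiset.filter_add_not (· ∈ A) (eigenAngles N U),
          Multiset.card_add]
  refine Nat.add_le_add_left (Multiset.card_le_card ?_) _
  rw [Multiset.le_filter]
  refine ⟨Multiset.filter_le _ _, fun θ hθ => ?_⟩
  rw [Multiset.mem_filter] at hθ
  exact h θ hθ.1 hθ.2

open Classical in
lemma count_all {N : ℕ} (U : Matrix.unitaryGroup (Fin N) ℂ) (A : Set ℝ)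
    (h : ∀ θ ∈ eigenAngles N U, θ ∈ A) : countAngles N U A = N := by
  rw [countAngles, Multiset.filter_eq_self.2 h, card_eigenAngles]

open Classical in
lemma upper_tail {N : ℕ} (hN : 2 ≤ N) (ℙ : Measure (Matrix.unitaryGroup (Fin N) ℂ))
    [IsProbabilityMeasure ℙ] [ℙ.IsHaarMeasure] (x : ℝ) (k : ℕ) (hk : k ≤ N) :
    (ℙ {U | x < (countFun N U (2 * π * k / N) : ℝ) - k}).toReal ≤ 2 * N * Real.exp (-x) := by
  have hN0 : (0:ℝ) < N := by exact_mod_cast (by omega : 0 < N)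
  have hkN : (k:ℝ) ≤ N := by exact_mod_cast hk
  have hp := Real.pi_pos
  have h0 : 0 ≤ 2 * π * k / N := by positivity
  have h1 : 2 * π * k / N ≤ 2 * π := by rw [div_le_iff₀ hN0]; gcongr
  have h := tail_arc ℙ (arc 0 (2 * π * k / N)) (arc_closed _ _) (x + k)
    {U | x < (countFun N U (2 * π * k / N) : ℝ) - k} (by
      intro U hU
      have hU' : x < (countFun N U (2 * π * k / N) : ℝ) - k := hU
      have : countFun N U (2 * π * k / N) ≤ Multiset.card ((eigenAngles N U).filter
          fun θ : ℝ => (θ : AddCircle (2 * π)) ∈ arc 0 (2 * π * k / N)) := by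
        exact count_le U _ _ fun θ hθ => ⟨θ, hθ, rfl⟩
      have : (countFun N U (2 * π * k / N) : ℝ) ≤ Multiset.card ((eigenAngles N U).filter
          fun θ : ℝ => (θ : AddCircle (2 * π)) ∈ arc 0 (2 * π * k / N)) := by exact_mod_cast this
      linarith)
  refine h.trans ((mul_le_mul_of_nonneg_left (arc_det hN le_rfl h0 h1) (Real.exp_pos _).le).trans (le_of_eq ?_))
  have e : (N:ℝ) * ((2 * π * k / N - 0) / (2 * π)) = k := by field_simp; ring
  rw [e, mul_left_comm, ← Real.exp_add]
  ring_nf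

open Classical in
lemma lower_tail {N : ℕ} (hN : 2 ≤ N) (ℙ : Measure (Matrix.unitaryGroup (Fin N) ℂ))
    [IsProbabilityMeasure ℙ] [ℙ.IsHaarMeasure] (x : ℝ) (k : ℕ) (hk : k ≤ N) :
    (ℙ {U | x < k - (countFun N U (2 * π * k / N) : ℝ)}).toReal ≤ 2 * N * Real.exp (-x) := by
  have hN0 : (0:ℝ) < N := by exact_mod_cast (by omega : 0 < N)
  have hkN : (k:ℝ) ≤ N := by exact_mod_cast hk
  have hp := Real.pi_pos
  have h0 : 0 ≤ 2 * π * k / N := by positivity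
  have h1 : 2 * π * k / N ≤ 2 * π := by rw [div_le_iff₀ hN0]; gcongr
  have h := tail_arc ℙ (arc (2 * π * k / N) (2 * π)) (arc_closed _ _) (x + N - k)
    {U | x < k - (countFun N U (2 * π * k / N) : ℝ)} (by
      intro U hU
      have hU' : x < k - (countFun N U (2 * π * k / N) : ℝ) := hU
      have h2 : N ≤ countFun N U (2 * π * k / N) + Multiset.card ((eigenAngles N U).filter
          fun θ : ℝ => (θ : AddCircle (2 * π)) ∈ arc (2 * π * k / N) (2 * π)) := by
        refine count_ge U _ _ fun θ hθ hθ2 => ?_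
        have hb := angle_mem U θ hθ
        refine ⟨θ, ⟨?_, hb.2⟩, rfl⟩
        by_contra hc
        push Not at hc
        exact hθ2 ⟨hb.1, hc.le⟩
      have h3 : (N : ℝ) ≤ countFun N U (2 * π * k / N) + Multiset.card ((eigenAngles N U).filter
          fun θ : ℝ => (θ : AddCircle (2 * π)) ∈ arc (2 * π * k / N) (2 * π)) := by exact_mod_cast h2
      linarith)
  refine h.trans ((mul_le_mul_of_nonneg_left (arc_det hN h0 h1 le_rfl) (Real.exp_pos _).le).trans (le_of_eq ?_))
  have e : (N:ℝ) * ((2 * π - 2 * π * k / N) / (2 * π)) = N - k := by field_simp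
  rw [e, mul_left_comm, ← Real.exp_add]
  ring_nf

lemma maxDev_lt {N : ℕ} (hN : 1 ≤ N) (U : Matrix.unitaryGroup (Fin N) ℂ) (x : ℝ) (h : x < maxDev N U) :
    ∃ k ∈ Finset.Icc 1 N, x < |(countFun N U (2 * π * (k:ℕ) / N) : ℝ) - k| := by
  rw [maxDev] at h
  have : Nonempty (Finset.Icc 1 N : Finset ℕ) := ⟨⟨1, Finset.mem_Icc.2 ⟨le_rfl, hN⟩⟩⟩
  obtain ⟨k, hk⟩ := exists_lt_of_lt_ciSup h
  exact ⟨k, k.2, hk⟩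

lemma main_bound (N : ℕ) (hN : 1 ≤ N) (ℙ : Measure (Matrix.unitaryGroup (Fin N) ℂ))
    [IsProbabilityMeasure ℙ] [ℙ.IsHaarMeasure] (x : ℝ) (hx : 0 < x) (m : ℝ) (hm : m ≤ x / 2) :
    (ℙ {U | x < maxDev N U}).toReal ≤ 2 * N * Real.exp (-m) := by
  have hN0 : (0:ℝ) < N := by exact_mod_cast hN
  by_cases h1 : 1 ≤ 2 * N * Real.exp (-m)
  · exact (measureReal_le_one (μ := ℙ)).trans h1
  push Not at h1
  by_cases hN1 : N = 1
  · have : {U : Matrix.unitaryGroup (Fin N) ℂ | x < maxDev N U} = ∅ := by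
      ext U
      simp only [Set.mem_ofPred_eq, Set.mem_empty_iff_false, iff_false]
      intro h
      obtain ⟨k, hk, hk2⟩ := maxDev_lt hN U x h
      rw [Finset.mem_Icc] at hk
      have hkN : k = N := by omega
      have hc : countFun N U (2 * π * (k:ℕ) / N) = N := by
        rw [countFun, hkN, mul_div_assoc, div_self hN0.ne', mul_one]
        exact count_all U _ fun θ hθ => angle_mem U θ hθ
      rw [hc, hkN, sub_self, abs_zero] at hk2
      linarith
    rw [this]; simp; positivity
  have hN2 : 2 ≤ N := by omega
  have hsmall : 2 * N * Real.exp (-x) ≤ Real.exp (-m) := by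
    have h2 : 2 * N * Real.exp (-(x / 2)) ≤ 1 := by
      refine le_trans ?_ h1.le
      gcongr
    calc 2 * N * Real.exp (-x) = 2 * N * Real.exp (-(x / 2)) * Real.exp (-(x / 2)) := by
          rw [mul_assoc (2 * (N:ℝ)), ← Real.exp_add]; ring_nf
      _ ≤ 1 * Real.exp (-(x / 2)) := mul_le_mul_of_nonneg_right h2 (Real.exp_pos _).le
      _ ≤ Real.exp (-m) := by rw [one_mul]; gcongr
  have hsub : {U : Matrix.unitaryGroup (Fin N) ℂ | x < maxDev N U} ⊆
      ⋃ k ∈ Finset.Icc 1 N, ({U | x < (countFun N U (2 * π * (k:ℕ) / N) : ℝ) - k} ∪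
        {U | x < k - (countFun N U (2 * π * (k:ℕ) / N) : ℝ)}) := by
    intro U hU
    obtain ⟨k, hk, hk2⟩ := maxDev_lt hN U x hU
    simp only [Set.mem_iUnion]
    refine ⟨k, hk, ?_⟩
    rcases lt_abs.1 hk2 with h | h
    · exact Or.inl h
    · have h' : x < (k:ℝ) - (countFun N U (2 * π * (k:ℕ) / N) : ℝ) := by linarith
      exact Or.inr h'
  calc (ℙ {U | x < maxDev N U}).toReal ≤ ℙ.real (⋃ k ∈ Finset.Icc 1 N, ({U | x < (countFun N U (2 * π * (k:ℕ) / N) : ℝ) - k} ∪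
        {U | x < k - (countFun N U (2 * π * (k:ℕ) / N) : ℝ)})) := measureReal_mono hsub (measure_ne_top _ _)
    _ ≤ ∑ k ∈ Finset.Icc 1 N, ℙ.real ({U | x < (countFun N U (2 * π * (k:ℕ) / N) : ℝ) - k} ∪
        {U | x < k - (countFun N U (2 * π * (k:ℕ) / N) : ℝ)}) := measureReal_biUnion_finset_le _ _
    _ ≤ ∑ k ∈ Finset.Icc 1 N, (Real.exp (-m) + Real.exp (-m)) := by
        refine Finset.sum_le_sum fun k hk => ?_
        have hkN := (Finset.mem_Icc.1 hk).2
        refine (measureReal_union_le _ _).trans (add_le_add ?_ ?_)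
        · exact (upper_tail hN2 ℙ x k hkN).trans hsmall
        · exact (lower_tail hN2 ℙ x k hkN).trans hsmall
    _ = _ := by simp; ring

end HaarU

/-- For a Haar-distributed `N × N` unitary matrix and `x > 0`,
`P[max_{1 ≤ k ≤ N} |𝒩_{2πk/N} − k| > x] ≤ 2N exp(−min{x²/(4 log(eN)), x/2})`. -/
theorem max_deviation_tail_bound
    (N : ℕ) (hN : 1 ≤ N) (ℙ : Measure (Matrix.unitaryGroup (Fin N) ℂ))
    (hprob : IsProbabilityMeasure ℙ) (hhaar : ℙ.IsHaarMeasure)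
    (x : ℝ) (hx : 0 < x) :
    (ℙ {U | x < maxDev N U}).toReal ≤
      2 * N * Real.exp (-(min (x ^ 2 / (4 * Real.log (Real.exp 1 * N))) (x / 2))) := by
  exact HaarU.main_bound N hN ℙ x hx _ (min_le_right _ _)
end

section
/- Let U be an N × N random unitary matrix distributed according to Haar measure on U(N). Then E[ max_{1 ≤ k ≤ N} |𝒩_{2πk/N} − k| ] ≤ 4 log(eN) + 2/e². -/
open MeasureTheory Real Filter

noncomputable section
namespace HaarDev

variable {m : Type*} [Fintype m] [DecidableEq m]

/-- `z ↦ det(1 - zA)` on the reals. -/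
def dfun (A : Matrix m m ℂ) (z : ℝ) : ℂ := (1 - (z : ℂ) • A).det

def logDer (A : Matrix m m ℂ) (z : ℝ) : ℂ := deriv (dfun A) z / dfun A z

def logDet (A : Matrix m m ℂ) : ℂ := ∫ z in (0:ℝ)..1, logDer A z

def S (A : Matrix m m ℂ) : ℝ := (logDet A).im

def adjF (A : Matrix m m ℂ) (z : ℝ) : ℂ := -((1 - (z : ℂ) • A).adjugate * A).trace

lemma logDet_congr {m' : Type*} [Fintype m'] [DecidableEq m'] (A : Matrix m m ℂ)
    (B : Matrix m' m' ℂ) (h : ∀ z : ℂ, (1 - z • A).det = (1 - z • B).det) : S A = S B := by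
  have : dfun A = dfun B := by ext z; exact h z
  simp only [S, logDet, logDer, this]

lemma hasDerivAt_dfun (A : Matrix m m ℂ) (z : ℝ) (hz : dfun A z ≠ 0) :
    HasDerivAt (dfun A) (adjF A z) z := by
  set M := 1 - (z : ℂ) • A with hM
  have hMu : IsUnit M.det := isUnit_iff_ne_zero.mpr hz
  have key : ∀ w : ℝ, dfun A w = M.det * (1 + ((z - w : ℝ) : ℂ) • (M⁻¹ * A)).det := by
    intro w
    rw [← Matrix.det_mul, Matrix.mul_add, Matrix.mul_smul, ← Matrix.mul_assoc,
      Matrix.mul_nonsing_inv _ hMu, dfun, hM]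
    congr 1
    push_cast
    rw [Matrix.one_mul, Matrix.mul_one, sub_smul]
    abel
  have h2 : dfun A = fun w : ℝ => M.det * (1 + (M⁻¹ * A).trace * ((z - w : ℝ) : ℂ) +
      (((1 + (Polynomial.X : Polynomial ℂ) • (M⁻¹ * A).map Polynomial.C).det.divX.divX).eval
        ((z - w : ℝ) : ℂ)) * ((z - w : ℝ) : ℂ) ^ 2) := by
    ext w
    rw [key, Matrix.det_one_add_smul]
  have hA : adjF A z = M.det * -(M⁻¹ * A).trace := by
    rw [adjF, ← hM, Matrix.inv_def, Matrix.smul_mul, Matrix.trace_smul, smul_eq_mul,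
      Ring.inverse_eq_inv']
    have := hMu.ne_zero
    field_simp
  rw [h2, hA]
  set Q := ((1 + (Polynomial.X : Polynomial ℂ) • (M⁻¹ * A).map Polynomial.C).det.divX.divX)
  have hl : HasDerivAt (fun w : ℝ => ((z - w : ℝ) : ℂ)) (-1) z := by
    have := ((hasDerivAt_id z).const_sub z).ofReal_comp
    simpa using this
  have hq : HasDerivAt (fun w : ℝ => Q.eval ((z - w : ℝ) : ℂ)) (Q.derivative.eval ((z - z : ℝ) : ℂ) * -1) z :=
    (Q.hasDerivAt _).comp z hl
  have := ((hl.const_mul (M⁻¹ * A).trace).const_add 1 |>.add (hq.mul (hl.pow 2))).const_mul M.det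
  refine this.congr_deriv ?_
  simp

lemma logDer_eq (A : Matrix m m ℂ) (z : ℝ) (hz : dfun A z ≠ 0) :
    logDer A z = adjF A z / dfun A z := by
  rw [logDer, (hasDerivAt_dfun A z hz).deriv]

lemma continuous_dfun : Continuous (fun p : Matrix m m ℂ × ℝ => dfun p.1 p.2) := by
  unfold dfun
  apply Continuous.matrix_det
  fun_prop

lemma continuous_adjF : Continuous (fun p : Matrix m m ℂ × ℝ => adjF p.1 p.2) := by
  unfold adjF
  apply Continuous.neg
  apply Continuous.matrix_trace
  apply Continuous.matrix_mul _ (by fun_prop)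
  apply Continuous.matrix_adjugate
  fun_prop

lemma hasDerivAt_msum (Λ : Multiset ℂ) (z : ℝ) (h : ∀ l ∈ Λ, 1 - (z : ℂ) * l ∈ Complex.slitPlane) :
    HasDerivAt (fun w : ℝ => (Λ.map (fun l => Complex.log (1 - (w : ℂ) * l))).sum)
      ((Λ.map (fun l => -l / (1 - (z : ℂ) * l))).sum) z := by
  induction Λ using Multiset.induction_on with
  | empty => simpa using hasDerivAt_const z (0:ℂ)
  | cons a s ih =>
    simp only [Multiset.map_cons, Multiset.sum_cons]
    refine HasDerivAt.add ?_ (ih fun l hl => h l (Multiset.mem_cons_of_mem hl))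
    have h1 : HasDerivAt (fun w : ℝ => 1 - (w : ℂ) * a) (-a) z := by
      have := ((Complex.ofRealCLM.hasDerivAt (x := z)).mul_const a).const_sub 1
      simpa using this
    exact h1.clog_real (h a (Multiset.mem_cons_self a s))

lemma exp_msum (Λ : Multiset ℂ) (z : ℂ) (h : (Λ.map (fun l => 1 - z * l)).prod ≠ 0) :
    Complex.exp ((Λ.map (fun l => Complex.log (1 - z * l))).sum) =
      (Λ.map (fun l => 1 - z * l)).prod := by
  induction Λ using Multiset.induction_on with
  | empty => simp
  | cons a s ih =>
    simp only [Multiset.map_cons, Multiset.sum_cons, Multiset.prod_cons] at h ⊢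
    rw [Complex.exp_add, Complex.exp_log (left_ne_zero_of_mul h), ih (right_ne_zero_of_mul h)]

lemma mem_slit (l : ℂ) (h : ∀ z : ℝ, 0 ≤ z → z ≤ 1 → 1 - (z : ℂ) * l ≠ 0) (z : ℝ)
    (h0 : 0 ≤ z) (h1 : z ≤ 1) : 1 - (z : ℂ) * l ∈ Complex.slitPlane := by
  by_contra hc
  rw [Complex.mem_slitPlane_iff] at hc
  push Not at hc
  obtain ⟨hre, him⟩ := hc
  simp at hre him
  have hz : z ≠ 0 := by rintro rfl; simp at hre; linarith
  have hl : l.im = 0 := by tauto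
  have hzp : 0 < z := lt_of_le_of_ne h0 (Ne.symm hz)
  have hlr : 1 ≤ l.re := by nlinarith
  refine h (l.re)⁻¹ (by positivity) (inv_le_one_of_one_le₀ hlr) ?_
  have : l = (l.re : ℂ) := by apply Complex.ext <;> simp [hl]
  rw [this]
  simp
  rw [inv_mul_cancel₀, sub_self]
  norm_cast
  linarith

lemma logDet_eq (A : Matrix m m ℂ) (Λ : Multiset ℂ)
    (hΛ : ∀ z : ℂ, (1 - z • A).det = (Λ.map (fun l => 1 - z * l)).prod)
    (hne : ∀ z : ℝ, 0 ≤ z → z ≤ 1 → dfun A z ≠ 0) :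
    logDet A = (Λ.map (fun l => Complex.log (1 - l))).sum := by
  have hΛ' : ∀ z : ℝ, dfun A z = (Λ.map (fun l => 1 - (z:ℂ) * l)).prod := fun z => hΛ z
  have hsl : ∀ z : ℝ, 0 ≤ z → z ≤ 1 → ∀ l ∈ Λ, 1 - (z : ℂ) * l ∈ Complex.slitPlane := by
    intro z h0 h1 l hl
    refine mem_slit l (fun w hw0 hw1 hw => hne w hw0 hw1 ?_) z h0 h1
    rw [hΛ', Multiset.prod_eq_zero_iff, Multiset.mem_map]
    exact ⟨l, hl, hw⟩
  set F : ℝ → ℂ := fun w : ℝ => (Λ.map (fun l => Complex.log (1 - (w : ℂ) * l))).sum with hF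
  have hcont : Continuous (fun w : ℝ => dfun A w) :=
    continuous_dfun.comp (by fun_prop : Continuous fun w : ℝ => (A, w))
  have hder : ∀ z ∈ Set.uIcc (0:ℝ) 1, HasDerivAt F (logDer A z) z := by
    intro z hz
    rw [Set.uIcc_of_le zero_le_one] at hz
    have h1 := hasDerivAt_msum Λ z (hsl z hz.1 hz.2)
    have h2 := h1.cexp
    have hev : (fun w : ℝ => Complex.exp (F w)) =ᶠ[nhds z] dfun A := by
      filter_upwards [hcont.continuousAt.eventually_ne (hne z hz.1 hz.2)] with w hw
      rw [hΛ'] at hw ⊢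
      exact exp_msum Λ w hw
    have h3 := h2.congr_of_eventuallyEq hev.symm
    have h4 : logDer A z = (Λ.map (fun l => -l / (1 - (z : ℂ) * l))).sum := by
      rw [logDer, h3.deriv, ← hev.eq_of_nhds]
      exact mul_div_cancel_left₀ _ (Complex.exp_ne_zero _)
    rw [h4]
    exact h1
  have hIntg : IntervalIntegrable (logDer A) volume 0 1 := by
    apply ContinuousOn.intervalIntegrable
    rw [Set.uIcc_of_le zero_le_one]
    have : ContinuousOn (fun z => adjF A z / dfun A z) (Set.Icc 0 1) := by
      apply ContinuousOn.div
      · exact (continuous_adjF.comp (by fun_prop : Continuous fun w : ℝ => (A, w))).continuousOn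
      · exact hcont.continuousOn
      · intro z hz; exact hne z hz.1 hz.2
    refine this.congr fun z hz => logDer_eq A z (hne z hz.1 hz.2)
  rw [logDet, intervalIntegral.integral_eq_sub_of_hasDerivAt hder hIntg, hF]
  simp

lemma det_eq_roots (A : Matrix m m ℂ) (z : ℂ) :
    (1 - z • A).det = (A.charpoly.roots.map (fun l => 1 - z * l)).prod := by
  have hcard : A.charpoly.roots.card = Fintype.card m := by
    rw [← A.charpoly_natDegree_eq_dim]
    exact ((IsAlgClosed.splits A.charpoly).natDegree_eq_card_roots).symm
  have hp := (IsAlgClosed.splits A.charpoly).eq_prod_roots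
  rw [A.charpoly_monic.leadingCoeff, Polynomial.C_1, one_mul] at hp
  rcases eq_or_ne z 0 with rfl | hz
  · simp
  have h1 : (1 - z • A) = z • (Matrix.scalar m z⁻¹ - A) := by
    rw [smul_sub]
    congr 1
    ext i j
    by_cases h : i = j <;> simp [h, hz, Matrix.one_apply]
  have h2 : A.charpoly.eval z⁻¹ = (A.charpoly.roots.map (fun l => z⁻¹ - l)).prod := by
    conv_lhs => rw [hp]
    rw [Polynomial.eval_multiset_prod, Multiset.map_map]
    simp
  rw [h1, Matrix.det_smul, ← Matrix.eval_charpoly, ← hcard, h2]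
  generalize A.charpoly.roots = s
  induction s using Multiset.induction_on with
  | empty => simp
  | cons a s ih =>
    simp only [Multiset.map_cons, Multiset.prod_cons, Multiset.card_cons] at ih ⊢
    rw [← ih, pow_succ]
    have : 1 - z * a = z * (z⁻¹ - a) := by field_simp
    rw [this]
    ring

lemma exp_logDet (A : Matrix m m ℂ) (hne : ∀ z : ℝ, 0 ≤ z → z ≤ 1 → dfun A z ≠ 0) :
    Complex.exp (logDet A) = dfun A 1 := by
  rw [logDet_eq A _ (det_eq_roots A) hne]
  have := hne 1 zero_le_one le_rfl
  rw [dfun, det_eq_roots] at this ⊢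
  have h := exp_msum _ _ this
  simp only [Complex.ofReal_one, one_mul] at h ⊢
  exact h

end HaarDev

end

noncomputable section
namespace HaarDev
variable {m : Type*} [Fintype m] [DecidableEq m]

def qn {m : Type*} [Fintype m] (v : m → ℂ) : ℝ := ∑ i, ‖v i‖ ^ 2

lemma qn_eq (v : m → ℂ) : ((qn v : ℝ) : ℂ) = star v ⬝ᵥ v := by
  simp only [qn, dotProduct, Pi.star_apply, RCLike.star_def, Complex.conj_mul']
  push_cast
  rfl

lemma qn_pos (v : m → ℂ) (hv : v ≠ 0) : 0 < qn v := by
  obtain ⟨i, hi⟩ := Function.ne_iff.mp hv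
  have : 0 < ‖v i‖ ^ 2 := by have := norm_pos_iff.mpr hi; positivity
  exact this.trans_le (Finset.single_le_sum (f := fun i => ‖v i‖ ^ 2)
    (fun i _ => by positivity) (Finset.mem_univ i))

lemma qn_smul (z : ℂ) (v : m → ℂ) : qn (z • v) = ‖z‖ ^ 2 * qn v := by
  simp [qn, Finset.mul_sum, mul_pow]

lemma qn_mulVec (U : Matrix m m ℂ) (hU : U ∈ Matrix.unitaryGroup m ℂ) (v : m → ℂ) :
    qn (U.mulVec v) = qn v := by
  have h : ((qn (U.mulVec v) : ℝ) : ℂ) = (qn v : ℝ) := by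
    rw [qn_eq, qn_eq, Matrix.star_mulVec, Matrix.dotProduct_mulVec, Matrix.vecMul_vecMul]
    rw [Matrix.mem_unitaryGroup_iff', Matrix.star_eq_conjTranspose] at hU
    rw [hU, Matrix.vecMul_one]
  exact_mod_cast h

lemma det_ne (A : Matrix m m ℂ) (hA : ∀ v, qn (A.mulVec v) ≤ qn v) (z : ℂ) (hz : ‖z‖ < 1) :
    (1 - z • A).det ≠ 0 := by
  intro h
  obtain ⟨v, hv, hv0⟩ := Matrix.exists_mulVec_eq_zero_iff.mpr h
  rw [Matrix.sub_mulVec, Matrix.one_mulVec, Matrix.smul_mulVec, sub_eq_zero] at hv0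
  have h1 : qn v = ‖z‖ ^ 2 * qn (A.mulVec v) := by rw [← qn_smul, ← hv0]
  have h2 := hA v
  have h3 := qn_pos v hv
  have h4 : ‖z‖ ^ 2 < 1 := by nlinarith [norm_nonneg z]
  nlinarith [sq_nonneg ‖z‖]

/-- The feedback transform. -/
def Wt (U : Matrix (Unit ⊕ m) (Unit ⊕ m) ℂ) : Matrix m m ℂ :=
  U.toBlocks₂₂ + (1 - U (Sum.inl ()) (Sum.inl ()))⁻¹ • (U.toBlocks₂₁ * U.toBlocks₁₂)

lemma Wt_unitary (U : Matrix (Unit ⊕ m) (Unit ⊕ m) ℂ) (hU : U ∈ Matrix.unitaryGroup _ ℂ)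
    (hg : U (Sum.inl ()) (Sum.inl ()) ≠ 1) : Wt U ∈ Matrix.unitaryGroup m ℂ := by
  set g := U (Sum.inl ()) (Sum.inl ()) with hgd
  have hg' : 1 - g ≠ 0 := sub_ne_zero.mpr (Ne.symm hg)
  set X : Matrix Unit m ℂ := (1 - g)⁻¹ • U.toBlocks₁₂ with hX
  have hA : U.toBlocks₁₁ = g • (1 : Matrix Unit Unit ℂ) := by
    ext i j; simp [Matrix.toBlocks₁₁, hgd]
  obtain ⟨J, hJd⟩ : ∃ J : Matrix (Unit ⊕ m) m ℂ, J = Matrix.fromRows X (1 : Matrix m m ℂ) := ⟨_, rfl⟩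
  have hJ : U * J = Matrix.fromRows X (Wt U) := by
    conv_lhs => rw [← Matrix.fromBlocks_toBlocks U]
    rw [hJd, Matrix.fromBlocks_mul_fromRows, hA]
    congr 1
    · rw [hX, Matrix.smul_mul, Matrix.one_mul, Matrix.mul_one, smul_smul]
      ext i j
      simp only [Matrix.add_apply, Matrix.smul_apply, smul_eq_mul]
      field_simp
      ring
    · rw [hX, Matrix.mul_smul, Matrix.mul_one, Wt, add_comm]
  have h1 : (U * J).conjTranspose * (U * J) =
      (J).conjTranspose * J := by
    rw [Matrix.conjTranspose_mul, Matrix.mul_assoc, ← Matrix.mul_assoc U.conjTranspose]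
    rw [Matrix.mem_unitaryGroup_iff', Matrix.star_eq_conjTranspose] at hU
    rw [hU, Matrix.one_mul]
  rw [hJ, hJd, Matrix.conjTranspose_fromRows_eq_fromCols_conjTranspose,
    Matrix.conjTranspose_fromRows_eq_fromCols_conjTranspose,
    Matrix.fromCols_mul_fromRows, Matrix.fromCols_mul_fromRows] at h1
  rw [Matrix.mem_unitaryGroup_iff', Matrix.star_eq_conjTranspose]
  simpa using h1

def Ts (s : ℂ) : Matrix (Unit ⊕ m) (Unit ⊕ m) ℂ := Matrix.fromBlocks 1 0 0 (s • 1)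

lemma det_Us (U : Matrix (Unit ⊕ m) (Unit ⊕ m) ℂ)
    (hg : U (Sum.inl ()) (Sum.inl ()) ≠ 1) (s : ℂ) :
    (1 - U * Ts s).det = (1 - U (Sum.inl ()) (Sum.inl ())) * (1 - s • Wt U).det := by
  set g := U (Sum.inl ()) (Sum.inl ()) with hgd
  have hg' : 1 - g ≠ 0 := sub_ne_zero.mpr (Ne.symm hg)
  have hA : U.toBlocks₁₁ = g • (1 : Matrix Unit Unit ℂ) := by
    ext i j; simp [Matrix.toBlocks₁₁, hgd]
  have h1 : 1 - U * Ts s = Matrix.fromBlocks ((1 - g) • 1) (-(s • U.toBlocks₁₂))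
      (-U.toBlocks₂₁) (1 - s • U.toBlocks₂₂) := by
    conv_lhs => rw [← Matrix.fromBlocks_toBlocks U]
    rw [Ts, Matrix.fromBlocks_multiply, ← Matrix.fromBlocks_one, sub_eq_add_neg,
      Matrix.fromBlocks_neg, Matrix.fromBlocks_add, hA]
    congr 1 <;> simp [add_smul, sub_eq_add_neg]
  let inv : Invertible ((1 - g) • (1 : Matrix Unit Unit ℂ)) :=
    ⟨(1 - g)⁻¹ • 1, by simp [smul_smul, hg'], by simp [smul_smul, hg']⟩
  rw [h1, Matrix.det_fromBlocks₁₁]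
  congr 1
  · simp
  · congr 1
    change _ - _ * ((1 - g)⁻¹ • 1) * _ = _
    rw [Wt, ← hgd]
    simp [smul_smul, smul_add, sub_sub, mul_comm]

lemma Us_contr (U : Matrix (Unit ⊕ m) (Unit ⊕ m) ℂ) (hU : U ∈ Matrix.unitaryGroup _ ℂ)
    (s : ℝ) (h0 : 0 ≤ s) (h1 : s ≤ 1) (v : Unit ⊕ m → ℂ) :
    qn ((U * Ts (s : ℂ)).mulVec v) ≤ qn v := by
  rw [← Matrix.mulVec_mulVec, qn_mulVec U hU, Ts, Matrix.fromBlocks_mulVec]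
  simp only [qn, Fintype.sum_sum_type]
  apply add_le_add
  · simp
  · apply Finset.sum_le_sum
    intro i _
    simp [Matrix.smul_mulVec]
    rw [mul_pow, sq_abs]
    have : s ^ 2 ≤ 1 := by nlinarith
    nlinarith [sq_nonneg ‖v (Sum.inr i)‖]

lemma dfun_ne_of_contr (A : Matrix m m ℂ) (hA : ∀ v, qn (A.mulVec v) ≤ qn v)
    (h1 : (1 - A).det ≠ 0) (z : ℝ) (hz0 : 0 ≤ z) (hz1 : z ≤ 1) : dfun A z ≠ 0 := by
  rcases hz1.lt_or_eq with h | rfl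
  · exact det_ne A hA z (by simpa [abs_of_nonneg hz0] using h)
  · simpa [dfun] using h1

lemma dfun_ne_of_unitary (A : Matrix m m ℂ) (hA : A ∈ Matrix.unitaryGroup m ℂ)
    (h1 : (1 - A).det ≠ 0) (z : ℝ) (hz0 : 0 ≤ z) (hz1 : z ≤ 1) : dfun A z ≠ 0 :=
  dfun_ne_of_contr A (fun v => (qn_mulVec A hA v).le) h1 z hz0 hz1

def clamp (s : ℝ) : ℝ := max 0 (min 1 s)
lemma clamp_nonneg (s : ℝ) : 0 ≤ clamp s := le_max_left _ _
lemma clamp_le (s : ℝ) : clamp s ≤ 1 := max_le zero_le_one (min_le_left _ _)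
lemma clamp_of (s : ℝ) (h0 : 0 ≤ s) (h1 : s ≤ 1) : clamp s = s := by
  simp [clamp, h0, h1]
lemma continuous_clamp : Continuous clamp := by unfold clamp; fun_prop

/-- continuity of `logDet` along a path of matrices -/
lemma continuous_logDet (A : ℝ → Matrix m m ℂ) (hA : Continuous A)
    (hne : ∀ s z : ℝ, 0 ≤ z → z ≤ 1 → dfun (A s) z ≠ 0) :
    Continuous (fun s => logDet (A s)) := by
  have h1 : ∀ s, logDet (A s) = ∫ z in (0:ℝ)..1, adjF (A s) (clamp z) / dfun (A s) (clamp z) := by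
    intro s
    apply intervalIntegral.integral_congr
    intro z hz
    rw [Set.uIcc_of_le zero_le_one] at hz
    simp only [clamp_of z hz.1 hz.2]
    exact logDer_eq _ _ (hne s z hz.1 hz.2)
  simp_rw [h1]
  apply intervalIntegral.continuous_parametric_intervalIntegral_of_continuous'
  have hc : Continuous fun p : ℝ × ℝ => (A p.1, clamp p.2) :=
    (hA.comp continuous_fst).prodMk (continuous_clamp.comp continuous_snd)
  exact (continuous_adjF.comp hc).div (continuous_dfun.comp hc)
    (fun p => hne _ _ (clamp_nonneg _) (clamp_le _))

lemma const_of_two_pi (f : ℝ → ℝ) (hf : Continuous f) (h : ∀ s, ∃ n : ℤ, f s = n * (2 * π)) :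
    f 1 = f 0 := by
  have h2 : (2 * π) ≠ 0 := by positivity
  have hg : ∀ s, ((round (f s / (2 * π)) : ℤ) : ℝ) = f s / (2 * π) := by
    intro s
    obtain ⟨n, hn⟩ := h s
    rw [hn, mul_div_cancel_right₀ _ h2, round_intCast]
  have hc : Continuous (fun s => (round (f s / (2 * π)) : ℤ)) := by
    rw [Int.isClosedEmbedding_coe_real.isEmbedding.continuous_iff]
    simp only [Function.comp_def, hg]
    fun_prop
  have := isPreconnected_univ.constant hc.continuousOn (Set.mem_univ (1:ℝ)) (Set.mem_univ (0:ℝ))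
  have h3 : f 1 / (2 * π) = f 0 / (2 * π) := by
    rw [← hg 1, ← hg 0]; exact_mod_cast this
  field_simp at h3
  exact h3

theorem S_rec (U : Matrix (Unit ⊕ m) (Unit ⊕ m) ℂ) (hU : U ∈ Matrix.unitaryGroup _ ℂ)
    (hg : U (Sum.inl ()) (Sum.inl ()) ≠ 1) (hd : (1 - U).det ≠ 0) :
    S U = Complex.arg (1 - U (Sum.inl ()) (Sum.inl ())) + S (Wt U) := by
  set g := U (Sum.inl ()) (Sum.inl ()) with hgd
  have hg' : 1 - g ≠ 0 := sub_ne_zero.mpr (Ne.symm hg)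
  have hW := Wt_unitary U hU hg
  have hT1 : U * Ts 1 = U := by simp [Ts]
  have hdW : (1 - Wt U).det ≠ 0 := by
    have := det_Us U hg 1
    rw [hT1, one_smul] at this
    rw [this] at hd
    exact right_ne_zero_of_mul hd
  have hsW : ∀ s : ℝ, 0 ≤ s → s ≤ 1 → (1 - (s : ℂ) • Wt U).det ≠ 0 :=
    dfun_ne_of_unitary _ hW hdW
  let A : ℝ → Matrix (Unit ⊕ m) (Unit ⊕ m) ℂ := fun s => U * Ts ((clamp s : ℝ) : ℂ)
  let B : ℝ → Matrix m m ℂ := fun s => ((clamp s : ℝ) : ℂ) • Wt U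
  have hclc : Continuous fun s : ℝ => ((clamp s : ℝ) : ℂ) :=
    Complex.continuous_ofReal.comp continuous_clamp
  have hAc : Continuous A := by
    apply Continuous.matrix_mul continuous_const
    unfold Ts
    apply Continuous.matrix_fromBlocks <;> fun_prop
  have hBc : Continuous B := by
    show Continuous fun s => ((clamp s : ℝ) : ℂ) • Wt U
    fun_prop
  have hA1 : ∀ s, (1 - A s).det = (1 - g) * (1 - B s).det := fun s => det_Us U hg _
  have hBd : ∀ s, (1 - B s).det ≠ 0 := fun s => hsW _ (clamp_nonneg s) (clamp_le s)
  have hAne : ∀ s z : ℝ, 0 ≤ z → z ≤ 1 → dfun (A s) z ≠ 0 := fun s =>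
    dfun_ne_of_contr _ (Us_contr U hU _ (clamp_nonneg s) (clamp_le s))
      (by rw [hA1]; exact mul_ne_zero hg' (hBd s))
  have hBne : ∀ s z : ℝ, 0 ≤ z → z ≤ 1 → dfun (B s) z ≠ 0 := by
    intro s z h0 h1
    have := hsW (z * clamp s) (mul_nonneg h0 (clamp_nonneg s))
      (mul_le_one₀ h1 (clamp_nonneg s) (clamp_le s))
    simp only [dfun, B, smul_smul]
    rwa [Complex.ofReal_mul] at this
  have hfc : Continuous fun s => S (A s) - S (B s) - Complex.arg (1 - g) :=
    ((Complex.continuous_im.comp (continuous_logDet A hAc hAne)).sub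
      (Complex.continuous_im.comp (continuous_logDet B hBc hBne))).sub continuous_const
  have hf := const_of_two_pi _ hfc (by
    intro s
    have e1 : Complex.exp (logDet (A s)) = Complex.exp (Complex.log (1 - g) + logDet (B s)) := by
      rw [Complex.exp_add, exp_logDet _ (hAne s), exp_logDet _ (hBne s), Complex.exp_log hg']
      simpa [dfun] using hA1 s
    obtain ⟨n, hn⟩ := Complex.exp_eq_exp_iff_exists_int.mp e1
    refine ⟨n, ?_⟩
    have := congrArg Complex.im hn
    simp [Complex.log_im] at this
    simp only [S, this]
    ring)
  have c1 : clamp 1 = 1 := clamp_of 1 zero_le_one le_rfl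
  have c0 : clamp 0 = 0 := clamp_of 0 le_rfl zero_le_one
  have A1 : A 1 = U := by simp only [A, c1, Complex.ofReal_one, hT1]
  have B1 : B 1 = Wt U := by simp [B, c1]
  have B0 : S (B 0) = 0 := by
    have : B 0 = 0 := by simp [B, c0]
    rw [this, S, logDet_eq 0 0 (by simp) (by simp [dfun])]
    simp
  have A0 : S (A 0) = Complex.arg (1 - g) := by
    rw [S, logDet_eq (A 0) {g} _ (hAne 0)]
    · simp [Complex.log_im]
    · intro z
      have hA : U.toBlocks₁₁ = g • (1 : Matrix Unit Unit ℂ) := by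
        ext i j; simp [Matrix.toBlocks₁₁, hgd]
      have : 1 - z • A 0 = Matrix.fromBlocks ((1 - z * g) • 1) 0 (-(z • U.toBlocks₂₁)) 1 := by
        simp only [A, c0]
        conv_lhs => rw [← Matrix.fromBlocks_toBlocks U]
        rw [Ts, Matrix.fromBlocks_multiply, ← Matrix.fromBlocks_one, sub_eq_add_neg,
          Matrix.fromBlocks_smul, Matrix.fromBlocks_neg, Matrix.fromBlocks_add, hA]
        congr 1 <;> simp [add_smul, sub_eq_add_neg, smul_smul]
      rw [this, Matrix.det_fromBlocks_zero₁₂]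
      simp
  simp only [A1, B1, A0, B0] at hf
  linarith
end HaarDev
end

noncomputable section
namespace HaarDev
variable {m : Type*} [Fintype m] [DecidableEq m]

lemma arg_one_sub_exp (x : ℝ) (h0 : 0 < x) (h1 : x < 2 * π) :
    Complex.arg (1 - Complex.exp (x * Complex.I)) = (x - π) / 2 := by
  have key : 1 - Complex.exp (x * Complex.I) = ((2 * Real.sin (x / 2) : ℝ) : ℂ) *
      (Complex.cos (((x - π) / 2 : ℝ) : ℂ) + Complex.sin (((x - π) / 2 : ℝ) : ℂ) * Complex.I) := by
    have e1 : Real.cos ((x - π) / 2) = Real.sin (x / 2) := by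
      rw [← Real.cos_pi_div_two_sub, ← Real.cos_neg]; congr 1; ring
    have e2 : Real.sin ((x - π) / 2) = - Real.cos (x / 2) := by
      rw [← Real.sin_pi_div_two_sub, ← Real.sin_neg]; congr 1; ring
    have e3 : Real.cos x = 1 - 2 * Real.sin (x / 2) ^ 2 := by
      rw [← Real.cos_sq_add_sin_sq (x / 2), show x = 2 * (x / 2) by ring, Real.cos_two_mul]
      have := Real.cos_sq_add_sin_sq (x / 2)
      ring_nf at this ⊢
      linarith
    have e4 : Real.sin x = 2 * Real.sin (x / 2) * Real.cos (x / 2) := by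
      rw [← Real.sin_two_mul]; congr 1; ring
    rw [Complex.exp_mul_I, ← Complex.ofReal_cos, ← Complex.ofReal_sin, ← Complex.ofReal_cos,
      ← Complex.ofReal_sin, e1, e2, e3, e4]
    push_cast
    ring
  rw [key, Complex.arg_mul_cos_add_sin_mul_I]
  · have : 0 < Real.sin (x / 2) := Real.sin_pos_of_pos_of_lt_pi (by linarith) (by linarith)
    linarith
  · constructor <;> linarith

lemma norm_root (U : Matrix m m ℂ) (hU : U ∈ Matrix.unitaryGroup m ℂ) (l : ℂ)
    (hl : l ∈ U.charpoly.roots) : ‖l‖ = 1 := by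
  have h := (Polynomial.mem_roots'.mp hl).2
  rw [Polynomial.IsRoot.def, Matrix.eval_charpoly] at h
  obtain ⟨v, hv, hv0⟩ := Matrix.exists_mulVec_eq_zero_iff.mpr h
  have hs : (Matrix.scalar m l).mulVec v = l • v := by
    ext i; simp [Matrix.mulVec_diagonal]
  rw [Matrix.sub_mulVec, hs, sub_eq_zero] at hv0
  have h1 : ‖l‖ ^ 2 * qn v = qn v := by rw [← qn_smul, hv0, qn_mulVec U hU]
  have h3 := qn_pos v hv
  have h4 : ‖l‖ ^ 2 = 1 := by
    have : (‖l‖ ^ 2 - 1) * qn v = 0 := by linarith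
    rcases mul_eq_zero.mp this with h | h <;> linarith
  nlinarith [norm_nonneg l]

lemma smul_mem_unitary (w : ℂ) (hw : ‖w‖ = 1) (U : Matrix m m ℂ)
    (hU : U ∈ Matrix.unitaryGroup m ℂ) : w • U ∈ Matrix.unitaryGroup m ℂ := by
  rw [Matrix.mem_unitaryGroup_iff] at hU ⊢
  rw [star_smul, Matrix.smul_mul, Matrix.mul_smul, smul_smul, hU]
  have : w * star w = 1 := by
    rw [RCLike.star_def, Complex.mul_conj, Complex.normSq_eq_norm_sq, hw]; simp
  rw [this, one_smul]

def ang (z : ℂ) : ℝ := if 0 ≤ Complex.arg z then Complex.arg z else Complex.arg z + 2 * π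

lemma ang_nonneg (z : ℂ) : 0 ≤ ang z := by
  unfold ang; split_ifs with h
  · exact h
  · have := Complex.neg_pi_lt_arg z; have := Real.pi_pos; linarith

lemma ang_lt (z : ℂ) : ang z < 2 * π := by
  unfold ang; split_ifs with h
  · have := Complex.arg_le_pi z; have := Real.pi_pos; linarith
  · push Not at h; linarith

lemma exp_ang (z : ℂ) (hz : ‖z‖ = 1) : Complex.exp (ang z * Complex.I) = z := by
  have h : Complex.exp (Complex.arg z * Complex.I) = z := by
    have := Complex.norm_mul_exp_arg_mul_I z
    rwa [hz, Complex.ofReal_one, one_mul] at this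
  unfold ang; split_ifs with h'
  · exact h
  · push_cast
    rw [add_mul, Complex.exp_add, h, Complex.exp_two_pi_mul_I, mul_one]

lemma arg_diff (z : ℂ) (hz : ‖z‖ = 1) (f : ℝ) (hf0 : 0 < f) (hf1 : f ≤ 2 * π) (h1 : z ≠ 1)
    (h2 : Complex.exp (-f * Complex.I) * z ≠ 1) :
    Complex.arg (1 - Complex.exp (-f * Complex.I) * z) - Complex.arg (1 - z) =
      -f / 2 + (if ang z ≤ f then π else 0) := by
  have hz' := exp_ang z hz
  have hn := ang_nonneg z
  have hl := ang_lt z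
  have hpos : 0 < ang z := by
    rcases hn.lt_or_eq with h | h
    · exact h
    · exfalso; apply h1; rw [← hz', ← h]; simp
  have hne : ang z ≠ f := by
    intro h
    apply h2
    rw [← hz', h, ← Complex.exp_add]
    simp
  have e0 : Complex.arg (1 - z) = (ang z - π) / 2 := by
    have := arg_one_sub_exp _ hpos hl
    rwa [hz'] at this
  have e1 : Complex.exp (-f * Complex.I) * z = Complex.exp (((ang z - f : ℝ) : ℂ) * Complex.I) := by
    conv_lhs => rw [← hz']
    rw [← Complex.exp_add]
    congr 1; push_cast; ring
  split_ifs with h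
  · have hlt := lt_of_le_of_ne h hne
    have e2 : Complex.exp (((ang z - f : ℝ) : ℂ) * Complex.I) =
        Complex.exp (((ang z - f + 2 * π : ℝ) : ℂ) * Complex.I) := by
      have : ((ang z - f + 2 * π : ℝ) : ℂ) * Complex.I =
        ((ang z - f : ℝ) : ℂ) * Complex.I + 2 * π * Complex.I := by push_cast; ring
      rw [this, Complex.exp_add, Complex.exp_two_pi_mul_I, mul_one]
    rw [e1, e2, arg_one_sub_exp _ (by linarith) (by linarith), e0]
    ring
  · push Not at h
    rw [e1, arg_one_sub_exp _ (by linarith) (by linarith), e0]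
    ring

lemma S_eq_sum (A : Matrix m m ℂ) (hA : A ∈ Matrix.unitaryGroup m ℂ) (h1 : (1 - A).det ≠ 0)
    (Λ : Multiset ℂ) (hΛ : ∀ z : ℂ, (1 - z • A).det = (Λ.map (fun l => 1 - z * l)).prod) :
    S A = (Λ.map (fun l => Complex.arg (1 - l))).sum := by
  rw [S, logDet_eq A Λ hΛ (dfun_ne_of_unitary A hA h1), ← Complex.coe_imAddGroupHom,
    map_multiset_sum, Multiset.map_map]
  simp [Complex.log_im]

lemma msum_aux (s : Multiset ℂ) (w : ℂ) (f : ℝ)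
    (h : ∀ l ∈ s, Complex.arg (1 - w * l) - Complex.arg (1 - l) =
      -f / 2 + (if ang l ≤ f then π else 0)) :
    (s.map (fun l => Complex.arg (1 - w * l))).sum - (s.map (fun l => Complex.arg (1 - l))).sum
      = - (s.card : ℝ) * f / 2 + π * ((s.filter (fun l => ang l ≤ f)).card : ℝ) := by
  induction s using Multiset.induction_on with
  | empty => simp
  | cons a s ih =>
    have ha := h a (Multiset.mem_cons_self a s)
    have ih' := ih fun l hl => h l (Multiset.mem_cons_of_mem hl)
    simp only [Multiset.map_cons, Multiset.sum_cons, Multiset.card_cons, Multiset.filter_cons]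
    split_ifs at ha ⊢ with hc
    · simp; linarith
    · simp; linarith

theorem count_identity (N : ℕ) (U : Matrix.unitaryGroup (Fin N) ℂ) (f : ℝ) (hf0 : 0 < f)
    (hf1 : f ≤ 2 * π) (h1 : (1 - (U : Matrix (Fin N) (Fin N) ℂ)).det ≠ 0)
    (h2 : (1 - Complex.exp (-f * Complex.I) • (U : Matrix (Fin N) (Fin N) ℂ)).det ≠ 0) :
    S (Complex.exp (-f * Complex.I) • (U : Matrix (Fin N) (Fin N) ℂ)) -
      S (U : Matrix (Fin N) (Fin N) ℂ) = - N * f / 2 + π * countFun N U f := by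
  set w := Complex.exp (-f * Complex.I) with hw
  set A := (U : Matrix (Fin N) (Fin N) ℂ)
  have hA : A ∈ Matrix.unitaryGroup (Fin N) ℂ := U.2
  have hwn : ‖w‖ = 1 := by
    rw [hw, ← Complex.ofReal_neg, Complex.norm_exp_ofReal_mul_I]
  rw [S_eq_sum A hA h1 _ (det_eq_roots A),
    S_eq_sum (w • A) (smul_mem_unitary w hwn A hA) h2 (A.charpoly.roots.map (fun l => w * l)) (by
      intro z
      rw [smul_smul, det_eq_roots, Multiset.map_map]
      simp only [Function.comp_def, mul_assoc])]
  rw [Multiset.map_map]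
  have hcard : (A.charpoly.roots.card : ℝ) = N := by
    rw [← (IsAlgClosed.splits A.charpoly).natDegree_eq_card_roots, A.charpoly_natDegree_eq_dim]
    simp
  have hcount : countFun N U f = (A.charpoly.roots.filter (fun l => ang l ≤ f)).card := by
    have : eigenAngles N U = A.charpoly.roots.map ang := rfl
    rw [countFun, countAngles, this, Multiset.filter_map, Multiset.card_map]
    congr! 2 with x hx
    simp [ang_nonneg]
  rw [hcount, ← hcard]
  apply msum_aux
  intro l hl
  have hnz : ∀ z : ℂ, (1 - z • A).det ≠ 0 → z * l ≠ 1 := by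
    intro z hz h
    apply hz
    rw [det_eq_roots, Multiset.prod_eq_zero_iff, Multiset.mem_map]
    exact ⟨l, hl, by rw [h, sub_self]⟩
  refine arg_diff l (norm_root A hA l hl) f hf0 hf1 ?_ (hnz _ h2)
  have := hnz 1 (by simpa using h1)
  simpa using this

end HaarDev
end

noncomputable section
namespace HaarDev

abbrev G (N : ℕ) := Matrix.unitaryGroup (Fin N) ℂ
abbrev Mat (N : ℕ) := Matrix (Fin N) (Fin N) ℂ

instance secondCountable_G (N : ℕ) : SecondCountableTopology (G N) := by
  have : SecondCountableTopology (Mat N) := inferInstanceAs (SecondCountableTopology (Fin N → Fin N → ℂ))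
  exact Topology.IsEmbedding.subtypeVal.secondCountableTopology

instance topGroup_G (N : ℕ) : IsTopologicalGroup (G N) :=
  inferInstanceAs (IsTopologicalGroup (unitary (Mat N)))

instance compact_G (N : ℕ) : CompactSpace (G N) := by
  have hc : IsClosed {x : Mat N | x ∈ Matrix.unitaryGroup (Fin N) ℂ} := isClosed_unitary
  have hb : {x : Mat N | x ∈ Matrix.unitaryGroup (Fin N) ℂ} ⊆
      Set.pi Set.univ (fun _ : Fin N => Set.pi Set.univ (fun _ : Fin N => Metric.closedBall (0:ℂ) 1)) := by
    intro U hU i _ j _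
    simpa using entry_norm_bound_of_unitary hU i j
  have hk : IsCompact (Set.pi Set.univ (fun _ : Fin N => Set.pi Set.univ
      (fun _ : Fin N => Metric.closedBall (0:ℂ) 1))) :=
    isCompact_univ_pi fun _ => isCompact_univ_pi fun _ => isCompact_closedBall _ _
  exact isCompact_iff_compactSpace.mp (IsCompact.of_isClosed_subset hk hc hb)

lemma continuous_val (N : ℕ) : Continuous (fun U : G N => (U : Mat N)) := continuous_subtype_val

lemma continuous_entry (N : ℕ) (i j : Fin N) : Continuous (fun U : G N => (U : Mat N) i j) :=
  (continuous_val N).matrix_elem i j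

lemma measurable_S (N : ℕ) : Measurable (fun U : G N => S (U : Mat N)) := by
  have hc : Continuous (fun p : G N × ℝ => dfun (p.1 : Mat N) p.2) :=
    continuous_dfun.comp (((continuous_val N).comp continuous_fst).prodMk continuous_snd)
  have h1 : Measurable (fun p : G N × ℝ => deriv (dfun (p.1 : Mat N)) p.2) :=
    measurable_deriv_with_param (f := fun (U : G N) z => dfun (U : Mat N) z) hc
  have h2 : Measurable (fun p : G N × ℝ => logDer (p.1 : Mat N) p.2) := h1.div hc.measurable
  have h3 : StronglyMeasurable (fun U : G N => ∫ z, logDer (U : Mat N) z ∂(volume.restrict (Set.Ioc (0:ℝ) 1))) :=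
    h2.stronglyMeasurable.integral_prod_right'
  have h4 : (fun U : G N => S (U : Mat N)) = fun U : G N => (∫ z, logDer (U : Mat N) z ∂(volume.restrict (Set.Ioc (0:ℝ) 1))).im := by
    ext U
    rw [S, logDet, intervalIntegral.integral_of_le zero_le_one]
  rw [h4]
  exact Complex.measurable_im.comp h3.measurable

/-- a scalar as a unitary matrix times U -/
def rot {N : ℕ} (w : ℂ) (hw : ‖w‖ = 1) : G N := ⟨w • 1, smul_mem_unitary w hw 1 (one_mem _)⟩

lemma coe_rot_mul {N : ℕ} (w : ℂ) (hw : ‖w‖ = 1) (U : G N) :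
    ((rot w hw * U : G N) : Mat N) = w • (U : Mat N) := by
  show (w • (1 : Mat N)) * (U : Mat N) = _
  rw [Matrix.smul_mul, Matrix.one_mul]

lemma countable_slice {N : ℕ} (A : Mat N) :
    {x : ℝ | (1 - Complex.exp (x * Complex.I) • A).det = 0}.Countable := by
  have hsub : {x : ℝ | (1 - Complex.exp (x * Complex.I) • A).det = 0} ⊆
      ⋃ l ∈ A.charpoly.roots.toFinset, {x : ℝ | Complex.exp (x * Complex.I) * l = 1} := by
    intro x hx
    rw [Set.mem_ofPred_eq, det_eq_roots, Multiset.prod_eq_zero_iff, Multiset.mem_map] at hx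
    obtain ⟨l, hl, h⟩ := hx
    simp only [Set.mem_iUnion]
    exact ⟨l, Multiset.mem_toFinset.mpr hl, (sub_eq_zero.mp h).symm⟩
  refine Set.Countable.mono hsub (Set.Countable.biUnion (Finset.countable_toSet _) ?_)
  intro l _
  by_cases hne : ∃ x0 : ℝ, Complex.exp (x0 * Complex.I) * l = 1
  · obtain ⟨x0, hx0⟩ := hne
    refine Set.Countable.mono ?_ (Set.countable_range (fun n : ℤ => x0 + n * (2 * π)))
    intro x hx
    have hl : l ≠ 0 := by rintro rfl; simp at hx0
    have he : Complex.exp (x * Complex.I) = Complex.exp (x0 * Complex.I) := by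
      apply mul_right_cancel₀ hl
      rw [hx0]; exact hx
    obtain ⟨n, hn⟩ := Complex.exp_eq_exp_iff_exists_int.mp he
    refine ⟨n, ?_⟩
    have := congrArg Complex.im hn
    simp at this
    simp [this]
  · convert Set.countable_empty
    ext x
    simp only [Set.mem_ofPred_eq, Set.mem_empty_iff_false, iff_false]
    exact fun h => hne ⟨x, h⟩

lemma ae_det {N : ℕ} (μ : Measure (G N)) [IsProbabilityMeasure μ] [μ.IsMulLeftInvariant]
    (w : ℂ) (hw : ‖w‖ = 1) : ∀ᵐ U : G N ∂μ, (1 - w • (U : Mat N)).det ≠ 0 := by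
  let s : Set (G N × ℝ) := {p | (1 - Complex.exp (p.2 * Complex.I) • (p.1 : Mat N)).det = 0}
  have hcf : Continuous fun p : G N × ℝ => (1 - Complex.exp (p.2 * Complex.I) • (p.1 : Mat N)).det := by
    apply Continuous.matrix_det
    apply Continuous.sub continuous_const
    have h1 : Continuous fun p : G N × ℝ => Complex.exp (p.2 * Complex.I) := by fun_prop
    exact h1.smul ((continuous_val N).comp continuous_fst)
  have hs : MeasurableSet s := (isClosed_singleton.preimage hcf).measurableSet
  have h0 : (μ.prod volume) s = 0 := by
    rw [Measure.measure_prod_null hs]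
    filter_upwards with U
    exact (countable_slice (U : Mat N)).measure_zero volume
  have h1 := h0
  rw [← Measure.prod_swap, Measure.map_apply measurable_swap hs,
    Measure.measure_prod_null (measurable_swap hs)] at h1
  obtain ⟨x, hx⟩ := h1.exists
  have hx' : ∀ᵐ U : G N ∂μ, (1 - Complex.exp (x * Complex.I) • (U : Mat N)).det ≠ 0 := by
    rw [ae_iff]
    simpa [s] using hx
  have hxn : ‖Complex.exp (x * Complex.I)‖ = 1 := Complex.norm_exp_ofReal_mul_I x
  have hwn : ‖w * (Complex.exp (x * Complex.I))⁻¹‖ = 1 := by rw [norm_mul, norm_inv, hw, hxn]; simp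
  have := (measurePreserving_mul_left μ (rot (w * (Complex.exp (x * Complex.I))⁻¹) hwn)).quasiMeasurePreserving.ae hx'
  filter_upwards [this] with U hU
  rw [coe_rot_mul, smul_smul] at hU
  have e : Complex.exp (x * Complex.I) * (w * (Complex.exp (x * Complex.I))⁻¹) = w := by
    field_simp
  rwa [e] at hU

lemma ae_det_one {N : ℕ} (μ : Measure (G N)) [IsProbabilityMeasure μ] [μ.IsMulLeftInvariant] :
    ∀ᵐ U : G N ∂μ, (1 - (U : Mat N)).det ≠ 0 := by
  simpa using ae_det μ 1 (by simp)

lemma exists_haar (N : ℕ) : ∃ ν : Measure (G N), IsProbabilityMeasure ν ∧ ν.IsMulLeftInvariant := by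
  let K : TopologicalSpace.PositiveCompacts (G N) := ⊤
  refine ⟨Measure.haarMeasure K, ⟨?_⟩, inferInstance⟩
  exact Measure.haarMeasure_self (K₀ := K)

lemma integral_inv {N : ℕ} (μ : Measure (G N)) [IsProbabilityMeasure μ] [μ.IsMulLeftInvariant]
    (f : G N → ℝ) (hf : Measurable f) (C : ℝ) (hC : ∀ U, ‖f U‖ ≤ C) :
    ∫ U, f U⁻¹ ∂μ = ∫ U, f U ∂μ := by
  have hIntg : Integrable (Function.uncurry fun (V U : G N) => f (U⁻¹ * V)) (μ.prod μ) := by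
    refine Integrable.of_bound (C := C) ?_ ?_
    · apply Measurable.aestronglyMeasurable
      exact hf.comp ((measurable_snd.inv).mul measurable_fst)
    · filter_upwards with p; exact hC _
  calc ∫ U, f U⁻¹ ∂μ = ∫ V, (∫ U, f U⁻¹ ∂μ) ∂μ := by simp
    _ = ∫ V, (∫ U, f (U⁻¹ * V) ∂μ) ∂μ := by
        congr 1; ext V
        rw [← integral_mul_left_eq_self _ V⁻¹]
        simp [mul_inv_rev]
    _ = ∫ U, (∫ V, f (U⁻¹ * V) ∂μ) ∂μ := integral_integral_swap hIntg
    _ = ∫ U, (∫ V, f V ∂μ) ∂μ := by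
        congr 1; ext U
        exact integral_mul_left_eq_self f U⁻¹
    _ = ∫ U, f U ∂μ := by simp

end HaarDev
end

noncomputable section
namespace HaarDev

def eqv (n : ℕ) : Unit ⊕ Fin n ≃ Fin (n + 1) where
  toFun := Sum.elim (fun _ => 0) Fin.succ
  invFun := Fin.cases (Sum.inl ()) Sum.inr
  left_inv := by rintro (x | x) <;> simp
  right_inv := by intro x; refine Fin.cases ?_ (fun i => ?_) x <;> simp

def R {n : ℕ} (A : Mat (n + 1)) : Matrix (Unit ⊕ Fin n) (Unit ⊕ Fin n) ℂ :=
  A.submatrix (eqv n) (eqv n)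

lemma R_entry {n : ℕ} (A : Mat (n + 1)) : R A (Sum.inl ()) (Sum.inl ()) = A 0 0 := rfl

lemma det_R {n : ℕ} (A : Mat (n + 1)) (z : ℂ) : (1 - z • A).det = (1 - z • R A).det := by
  have : 1 - z • R A = (1 - z • A).submatrix (eqv n) (eqv n) := by
    rw [R, ← Matrix.submatrix_one_equiv (eqv n)]
    rfl
  rw [this, Matrix.det_submatrix_equiv_self]

lemma S_R {n : ℕ} (A : Mat (n + 1)) : S A = S (R A) := logDet_congr _ _ (det_R A)

lemma R_mul {n : ℕ} (A B : Mat (n + 1)) : R (A * B) = R A * R B := by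
  simp [R, Matrix.submatrix_mul_equiv]

lemma R_unitary {n : ℕ} (A : Mat (n + 1)) (hA : A ∈ Matrix.unitaryGroup (Fin (n + 1)) ℂ) :
    R A ∈ Matrix.unitaryGroup (Unit ⊕ Fin n) ℂ := by
  rw [Matrix.mem_unitaryGroup_iff] at hA ⊢
  have : star (R A) = R (star A) := rfl
  rw [this, ← R_mul, hA, R, Matrix.submatrix_one_equiv]

def blk {n : ℕ} (V : Mat n) : Matrix (Unit ⊕ Fin n) (Unit ⊕ Fin n) ℂ :=
  Matrix.fromBlocks 1 0 0 V

lemma blk_star {n : ℕ} (V : Mat n) : star (blk V) = blk (star V) := by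
  rw [Matrix.star_eq_conjTranspose, blk, Matrix.fromBlocks_conjTranspose]
  simp [blk, Matrix.star_eq_conjTranspose]

lemma blk_mul {n : ℕ} (V W : Mat n) : blk V * blk W = blk (V * W) := by
  simp [blk, Matrix.fromBlocks_multiply]

lemma blk_one {n : ℕ} : blk (1 : Mat n) = 1 := Matrix.fromBlocks_one

def embM {n : ℕ} (V : Mat n) : Mat (n + 1) := (blk V).submatrix (eqv n).symm (eqv n).symm

lemma R_embM {n : ℕ} (V : Mat n) : R (embM V) = blk V := by
  simp [R, embM]

def emb {n : ℕ} (V : G n) : G (n + 1) := ⟨embM (V : Mat n), by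
  rw [Matrix.mem_unitaryGroup_iff]
  have h1 : star (embM (V : Mat n)) = (star (blk (V : Mat n))).submatrix (eqv n).symm (eqv n).symm := rfl
  rw [h1, embM, Matrix.submatrix_mul_equiv, blk_star, blk_mul, Matrix.mem_unitaryGroup_iff.mp V.2,
    blk_one, Matrix.submatrix_one_equiv]⟩

lemma continuous_emb (n : ℕ) : Continuous (emb : G n → G (n + 1)) := by
  refine Continuous.subtype_mk ?_ _
  refine Continuous.matrix_submatrix ?_ _ _
  exact Continuous.matrix_fromBlocks continuous_const continuous_const continuous_const (continuous_val n)

lemma blk_mul_entry {n : ℕ} (V : Mat n) (M : Matrix (Unit ⊕ Fin n) (Unit ⊕ Fin n) ℂ) :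
    (blk V * M) (Sum.inl ()) (Sum.inl ()) = M (Sum.inl ()) (Sum.inl ()) := by
  simp [blk, Matrix.mul_apply]

lemma Wt_blk_mul {n : ℕ} (V : Mat n) (M : Matrix (Unit ⊕ Fin n) (Unit ⊕ Fin n) ℂ) :
    Wt (blk V * M) = V * Wt M := by
  have h : blk V * M = Matrix.fromBlocks M.toBlocks₁₁ M.toBlocks₁₂ (V * M.toBlocks₂₁) (V * M.toBlocks₂₂) := by
    conv_lhs => rw [← Matrix.fromBlocks_toBlocks M]
    rw [blk, Matrix.fromBlocks_multiply]
    simp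
  have he := blk_mul_entry V M
  rw [Wt, he, Wt, h]
  simp [Matrix.mul_add, Matrix.mul_assoc]

lemma entry_ne_one {n : ℕ} (U : G (n + 1)) (h : (1 - (U : Mat (n + 1))).det ≠ 0) :
    (U : Mat (n + 1)) 0 0 ≠ 1 := by
  intro h1
  apply h
  have hcol : ∀ i, i ≠ 0 → (U : Mat (n + 1)) i 0 = 0 := by
    have := Matrix.mem_unitaryGroup_iff'.mp U.2
    have h2 := congrFun (congrFun this 0) 0
    rw [Matrix.mul_apply, Fin.sum_univ_succ] at h2
    simp only [Matrix.star_apply, h1, Matrix.one_apply_eq] at h2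
    have h3 : ∑ i : Fin n, ‖(U : Mat (n + 1)) i.succ 0‖ ^ 2 = 0 := by
      have : ((∑ i : Fin n, ‖(U : Mat (n + 1)) i.succ 0‖ ^ 2 : ℝ) : ℂ) = 0 := by
        have h4 : ∀ z : ℂ, star z * z = ((‖z‖ ^ 2 : ℝ) : ℂ) := by
          intro z; rw [Complex.star_def, Complex.conj_mul']; simp
        simp only [h4] at h2
        push_cast at h2 ⊢
        simpa using h2
      exact_mod_cast this
    intro i hi
    obtain ⟨j, rfl⟩ := Fin.exists_succ_eq.mpr hi
    have := (Finset.sum_eq_zero_iff_of_nonneg (fun i _ => by positivity)).mp h3 j (Finset.mem_univ _)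
    simpa using this
  apply Matrix.det_eq_zero_of_column_eq_zero 0
  intro i
  by_cases hi : i = 0
  · subst hi; simp [h1]
  · simp [hcol i hi, hi]

lemma S_emb {n : ℕ} (V : G n) (U : G (n + 1)) (hg : (U : Mat (n + 1)) 0 0 ≠ 1)
    (hd : (1 - (V : Mat n) * Wt (R (U : Mat (n + 1)))).det ≠ 0) :
    S ((emb V * U : G (n + 1)) : Mat (n + 1)) = Complex.arg (1 - (U : Mat (n + 1)) 0 0)
      + S (Wt (R (U : Mat (n + 1))) * (V : Mat n)) := by
  have hR : R ((emb V * U : G (n + 1)) : Mat (n + 1)) = blk (V : Mat n) * R (U : Mat (n + 1)) := by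
    show R (embM (V : Mat n) * (U : Mat (n + 1))) = _
    rw [R_mul, R_embM]
  have hen : R ((emb V * U : G (n + 1)) : Mat (n + 1)) (Sum.inl ()) (Sum.inl ()) = (U : Mat (n + 1)) 0 0 := by
    rw [hR, blk_mul_entry, R_entry]
  have hW : Wt (R ((emb V * U : G (n + 1)) : Mat (n + 1))) = (V : Mat n) * Wt (R (U : Mat (n + 1))) := by
    rw [hR, Wt_blk_mul]
  have hg' : R ((emb V * U : G (n + 1)) : Mat (n + 1)) (Sum.inl ()) (Sum.inl ()) ≠ 1 := by rwa [hen]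
  rw [S_R, S_rec _ (R_unitary _ (emb V * U).2) hg', hen, hW]
  · congr 1
    apply logDet_congr
    intro z
    rw [← Matrix.smul_mul, ← Matrix.mul_smul]
    exact Matrix.det_one_sub_mul_comm _ _
  · have := det_Us _ hg' 1
    rw [show Ts (1:ℂ) = (1 : Matrix (Unit ⊕ Fin n) (Unit ⊕ Fin n) ℂ) by simp [Ts], mul_one, one_smul, hW, hen] at this
    rw [this]
    exact mul_ne_zero (sub_ne_zero.mpr (Ne.symm hg)) hd

lemma moment_rec {n : ℕ} (μ : Measure (G (n + 1))) [IsProbabilityMeasure μ] [μ.IsMulLeftInvariant]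
    (ν : Measure (G n)) [IsProbabilityMeasure ν] [ν.IsMulLeftInvariant] (t : ℝ) :
    ∫⁻ U, ENNReal.ofReal (Real.exp (t * S (U : Mat (n + 1)))) ∂μ =
      (∫⁻ U, ENNReal.ofReal (Real.exp (t * Complex.arg (1 - (U : Mat (n + 1)) 0 0))) ∂μ) *
      ∫⁻ V, ENNReal.ofReal (Real.exp (t * S (V : Mat n))) ∂ν := by
  have hm : ∀ k : ℕ, Measurable fun U : G k => ENNReal.ofReal (Real.exp (t * S (U : Mat k))) := fun k =>
    (Real.measurable_exp.comp ((measurable_S k).const_mul t)).ennreal_ofReal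
  set F : G (n + 1) → ENNReal := fun U => ENNReal.ofReal (Real.exp (t * S (U : Mat (n + 1)))) with hF
  have hFm : Measurable F := hm (n + 1)
  have hFm2 : Measurable (Function.uncurry fun (V : G n) (U : G (n + 1)) => F (emb V * U)) := by
    apply hFm.comp
    exact ((continuous_emb n).measurable.comp measurable_fst).mul measurable_snd
  calc ∫⁻ U, F U ∂μ = ∫⁻ V, (∫⁻ U, F U ∂μ) ∂ν := by simp
    _ = ∫⁻ V, (∫⁻ U, F (emb V * U) ∂μ) ∂ν := by
        congr 1; ext V
        exact (lintegral_mul_left_eq_self F (emb V)).symm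
    _ = ∫⁻ U, (∫⁻ V, F (emb V * U) ∂ν) ∂μ := lintegral_lintegral_swap hFm2.aemeasurable
    _ = ∫⁻ U : G (n + 1), ENNReal.ofReal (Real.exp (t * Complex.arg (1 - (U : Mat (n + 1)) 0 0))) *
          (∫⁻ V, ENNReal.ofReal (Real.exp (t * S (V : Mat n))) ∂ν) ∂μ := by
        apply lintegral_congr_ae
        filter_upwards [ae_det_one μ] with U hU
        have hg := entry_ne_one U hU
        have hWu := Wt_unitary _ (R_unitary _ U.2) (by rw [R_entry]; exact hg)
        let W : G n := ⟨Wt (R (U : Mat (n + 1))), hWu⟩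
        have hae : ∀ᵐ V : G n ∂ν, (1 - ((W * V : G n) : Mat n)).det ≠ 0 :=
          (measurePreserving_mul_left ν W).quasiMeasurePreserving.ae (ae_det_one ν)
        rw [← lintegral_mul_left_eq_self (fun V : G n => ENNReal.ofReal (Real.exp (t * S (V : Mat n)))) W, ← lintegral_const_mul]
        · apply lintegral_congr_ae
          filter_upwards [hae] with V hV
          have hV' : (1 - (V : Mat n) * Wt (R (U : Mat (n + 1)))).det ≠ 0 := by
            rw [Matrix.det_one_sub_mul_comm]; exact hV
          rw [hF]
          simp only
          rw [S_emb V U hg hV', mul_add, Real.exp_add, ENNReal.ofReal_mul (Real.exp_pos _).le]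
          rfl
        · exact (hm n).comp (measurable_const_mul W)
    _ = _ := by
        apply lintegral_mul_const
        have h1 : Continuous fun U : G (n + 1) => 1 - (U : Mat (n + 1)) 0 0 :=
          continuous_const.sub (continuous_entry _ 0 0)
        exact (Real.measurable_exp.comp ((Complex.measurable_arg.comp h1.measurable).const_mul t)).ennreal_ofReal

end HaarDev
end

noncomputable section
namespace HaarDev

lemma arg_bounds (g : ℂ) (hg : ‖g‖ ≤ 1) :
    |Complex.arg (1 - g)| ≤ π / 2 ∧ |Complex.arg (1 - g)| ≤ π / 2 * ‖g‖ := by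
  have hre : 0 ≤ (1 - g).re := by
    have := Complex.re_le_norm g
    simp; linarith
  have h1 : |Complex.arg (1 - g)| ≤ π / 2 := Complex.abs_arg_le_pi_div_two_iff.mpr hre
  refine ⟨h1, ?_⟩
  by_cases hz : 1 - g = 0
  · rw [hz]; simp; positivity
  have hzn : 0 < ‖1 - g‖ := norm_pos_iff.mpr hz
  have him : |g.im| ≤ ‖g‖ * ‖1 - g‖ := by
    have h2 : |((starRingEnd ℂ) g * (1 - g)).im| ≤ ‖(starRingEnd ℂ) g * (1 - g)‖ := Complex.abs_im_le_norm _
    rw [norm_mul, Complex.norm_conj] at h2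
    have h3 : ((starRingEnd ℂ) g * (1 - g)).im = - g.im := by
      simp [Complex.mul_im]; ring
    rwa [h3, abs_neg] at h2
  have hs : |Real.sin (Complex.arg (1 - g))| ≤ ‖g‖ := by
    rw [Complex.sin_arg, abs_div, abs_of_pos hzn, div_le_iff₀ hzn]
    simpa using him
  have hj : 2 / π * |Complex.arg (1 - g)| ≤ Real.sin |Complex.arg (1 - g)| :=
    Real.mul_le_sin (abs_nonneg _) h1
  have hs2 : Real.sin |Complex.arg (1 - g)| ≤ |Real.sin (Complex.arg (1 - g))| := by
    rcases abs_choice (Complex.arg (1 - g)) with h | h <;> rw [h]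
    · exact le_abs_self _
    · rw [Real.sin_neg]; exact neg_le_abs _
  have h5 := hj.trans (hs2.trans hs)
  have hpi := Real.pi_pos
  calc |Complex.arg (1 - g)| = π / 2 * (2 / π * |Complex.arg (1 - g)|) := by field_simp
    _ ≤ _ := by gcongr

def permU {N : ℕ} (σ : Equiv.Perm (Fin N)) : G N := ⟨(1 : Mat N).submatrix σ id, by
  rw [Matrix.mem_unitaryGroup_iff]
  have h : star ((1 : Mat N).submatrix σ id) = (star (1 : Mat N)).submatrix id σ := rfl
  rw [h, star_one]
  have := Matrix.submatrix_mul_equiv (1 : Mat N) (1 : Mat N) σ (Equiv.refl (Fin N)) σ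
  rw [Equiv.coe_refl] at this
  rw [this, Matrix.mul_one, Matrix.submatrix_one_equiv]⟩

lemma permU_mul {N : ℕ} (σ : Equiv.Perm (Fin N)) (U : G N) (i j : Fin N) :
    ((permU σ * U : G N) : Mat N) i j = (U : Mat N) (σ i) j := by
  show (((1 : Mat N).submatrix σ id) * (U : Mat N)) i j = _
  simp [Matrix.mul_apply, Matrix.one_apply]

lemma entry_le {N : ℕ} (U : G N) (i j : Fin N) : ‖(U : Mat N) i j‖ ≤ 1 :=
  entry_norm_bound_of_unitary U.2 i j

lemma second_moment {n : ℕ} (μ : Measure (G (n + 1))) [IsProbabilityMeasure μ] [μ.IsMulLeftInvariant] :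
    ∫ U : G (n + 1), ‖(U : Mat (n + 1)) 0 0‖ ^ 2 ∂μ = 1 / (n + 1) := by
  have hsame : ∀ i, ∫ U : G (n + 1), ‖(U : Mat (n + 1)) i 0‖ ^ 2 ∂μ = ∫ U : G (n + 1), ‖(U : Mat (n + 1)) 0 0‖ ^ 2 ∂μ := by
    intro i
    rw [← integral_mul_left_eq_self (fun U : G (n + 1) => ‖(U : Mat (n + 1)) 0 0‖ ^ 2) (permU (Equiv.swap 0 i))]
    congr 1; ext U
    rw [permU_mul, Equiv.swap_apply_left]
  have hIntg : ∀ i ∈ (Finset.univ : Finset (Fin (n + 1))), Integrable (fun U : G (n + 1) => ‖(U : Mat (n + 1)) i 0‖ ^ 2) μ := by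
    intro i _
    refine Integrable.of_bound (C := 1) ((continuous_entry _ i 0).norm.pow 2).aestronglyMeasurable ?_
    filter_upwards with U
    have := entry_le U i 0
    rw [Real.norm_of_nonneg (by positivity)]
    exact pow_le_one₀ (norm_nonneg _) this
  have hsum : ∀ U : G (n + 1), ∑ i, ‖(U : Mat (n + 1)) i 0‖ ^ 2 = 1 := by
    intro U
    have h2 := congrFun (congrFun (Matrix.mem_unitaryGroup_iff'.mp U.2) 0) 0
    rw [Matrix.mul_apply] at h2
    have h4 : ∀ z : ℂ, star z * z = ((‖z‖ ^ 2 : ℝ) : ℂ) := by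
      intro z; rw [Complex.star_def, Complex.conj_mul']; simp
    simp only [Matrix.star_apply, h4, Matrix.one_apply_eq] at h2
    exact_mod_cast h2
  have h := integral_finsetSum _ hIntg
  simp only [hsum, hsame] at h
  simp at h
  field_simp
  linarith

lemma mean_zero {n : ℕ} (μ : Measure (G (n + 1))) [IsProbabilityMeasure μ] [μ.IsMulLeftInvariant] :
    ∫ U : G (n + 1), Complex.arg (1 - (U : Mat (n + 1)) 0 0) ∂μ = 0 := by
  have hm : Measurable fun U : G (n + 1) => Complex.arg (1 - (U : Mat (n + 1)) 0 0) :=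
    Complex.measurable_arg.comp (continuous_const.sub (continuous_entry _ 0 0)).measurable
  have h := integral_inv μ _ hm (π / 2) (fun U => (arg_bounds _ (entry_le U 0 0)).1)
  have h2 : ∀ U : G (n + 1), Complex.arg (1 - ((U⁻¹ : G (n + 1)) : Mat (n + 1)) 0 0) =
      - Complex.arg (1 - (U : Mat (n + 1)) 0 0) := by
    intro U
    have e : 1 - ((U⁻¹ : G (n + 1)) : Mat (n + 1)) 0 0 = (starRingEnd ℂ) (1 - (U : Mat (n + 1)) 0 0) := by
      rw [map_sub, map_one]; rfl
    rw [e, Complex.arg_conj, if_neg]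
    intro h3
    have := (arg_bounds _ (entry_le U 0 0)).1
    rw [h3, abs_of_pos Real.pi_pos] at this
    linarith [Real.pi_pos]
  simp only [h2, integral_neg] at h
  linarith

lemma one_step {n : ℕ} (μ : Measure (G (n + 1))) [IsProbabilityMeasure μ] [μ.IsMulLeftInvariant]
    (t : ℝ) (ht : |t| ≤ 1 / 2) :
    ∫⁻ U : G (n + 1), ENNReal.ofReal (Real.exp (t * Complex.arg (1 - (U : Mat (n + 1)) 0 0))) ∂μ
      ≤ ENNReal.ofReal (Real.exp (5 / 8 * (1 / (n + 1)))) := by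
  have hm : Measurable fun U : G (n + 1) => Complex.arg (1 - (U : Mat (n + 1)) 0 0) :=
    Complex.measurable_arg.comp (continuous_const.sub (continuous_entry _ 0 0)).measurable
  have hpi : π < 3.15 := Real.pi_lt_d2
  have hpi0 := Real.pi_pos
  have ha : Integrable (fun U : G (n + 1) => Complex.arg (1 - (U : Mat (n + 1)) 0 0)) μ :=
    Integrable.of_bound hm.aestronglyMeasurable (π / 2) (by
      filter_upwards with U; exact (arg_bounds _ (entry_le U 0 0)).1)
  have hsq : Integrable (fun U : G (n + 1) => ‖(U : Mat (n + 1)) 0 0‖ ^ 2) μ := by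
    refine Integrable.of_bound (C := 1) ((continuous_entry _ 0 0).norm.pow 2).aestronglyMeasurable ?_
    filter_upwards with U
    rw [Real.norm_of_nonneg (by positivity)]
    exact pow_le_one₀ (norm_nonneg _) (entry_le U 0 0)
  have htb : ∀ U : G (n + 1), |t * Complex.arg (1 - (U : Mat (n + 1)) 0 0)| ≤ 1 := by
    intro U
    rw [abs_mul]
    have := (arg_bounds _ (entry_le U 0 0)).1
    calc _ ≤ 1 / 2 * (π / 2) := by gcongr
      _ ≤ 1 := by linarith
  have he : Integrable (fun U : G (n + 1) => Real.exp (t * Complex.arg (1 - (U : Mat (n + 1)) 0 0))) μ := by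
    refine Integrable.of_bound (C := Real.exp 1) (Real.measurable_exp.comp (hm.const_mul t)).aestronglyMeasurable ?_
    filter_upwards with U
    rw [Real.norm_of_nonneg (Real.exp_pos _).le]
    exact Real.exp_le_exp.mpr ((le_abs_self _).trans (htb U))
  rw [← ofReal_integral_eq_lintegral_ofReal he (by filter_upwards with U; exact (Real.exp_pos _).le)]
  apply ENNReal.ofReal_le_ofReal
  have hpt : ∀ U : G (n + 1), Real.exp (t * Complex.arg (1 - (U : Mat (n + 1)) 0 0)) ≤
      1 + t * Complex.arg (1 - (U : Mat (n + 1)) 0 0) + 5 / 8 * ‖(U : Mat (n + 1)) 0 0‖ ^ 2 := by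
    intro U
    have h1 := Real.abs_exp_sub_one_sub_id_le (htb U)
    have h2 := (abs_le.mp h1).2
    have h3 : (t * Complex.arg (1 - (U : Mat (n + 1)) 0 0)) ^ 2 ≤ 5 / 8 * ‖(U : Mat (n + 1)) 0 0‖ ^ 2 := by
      rw [← sq_abs, abs_mul]
      have h4 := (arg_bounds _ (entry_le U 0 0)).2
      calc (|t| * |Complex.arg (1 - (U : Mat (n + 1)) 0 0)|) ^ 2
          ≤ (1 / 2 * (π / 2 * ‖(U : Mat (n + 1)) 0 0‖)) ^ 2 := by gcongr
        _ = π ^ 2 / 16 * ‖(U : Mat (n + 1)) 0 0‖ ^ 2 := by ring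
        _ ≤ _ := by
          have hq : π ^ 2 / 16 ≤ 5 / 8 := by nlinarith
          exact mul_le_mul_of_nonneg_right hq (by positivity)
    linarith
  calc _ ≤ ∫ U : G (n + 1), (1 + t * Complex.arg (1 - (U : Mat (n + 1)) 0 0) + 5 / 8 * ‖(U : Mat (n + 1)) 0 0‖ ^ 2) ∂μ :=
        integral_mono he (((integrable_const 1).add (ha.const_mul t)).add (hsq.const_mul _)) hpt
    _ = 1 + 5 / 8 * (1 / (n + 1)) := by
        have hi : Integrable (fun U : G (n + 1) => 1 + t * Complex.arg (1 - (U : Mat (n + 1)) 0 0)) μ :=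
          (integrable_const 1).add (ha.const_mul t)
        rw [integral_add hi (hsq.const_mul _),
          integral_add (integrable_const 1) (ha.const_mul t), integral_const_mul, integral_const_mul,
          mean_zero, second_moment]
        simp
    _ ≤ _ := by
        have := Real.add_one_le_exp (5 / 8 * (1 / ((n : ℝ) + 1)))
        linarith

end HaarDev
end

noncomputable section
namespace HaarDev

lemma S_zero (A : Mat 0) : S A = 0 := by
  have h : dfun A = fun _ => 1 := by
    ext z; simp [dfun]
  simp [S, logDet, logDer, h]

lemma moment_bound (t : ℝ) (ht : |t| ≤ 1 / 2) (N : ℕ) : ∀ (μ : Measure (G N)) [IsProbabilityMeasure μ]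
    [μ.IsMulLeftInvariant], ∫⁻ U : G N, ENNReal.ofReal (Real.exp (t * S (U : Mat N))) ∂μ
      ≤ ENNReal.ofReal (Real.exp (5 / 8 * (harmonic N : ℝ))) := by
  induction N with
  | zero =>
    intro μ _ _
    simp [S_zero]
  | succ n ih =>
    intro μ _ _
    obtain ⟨ν, hν1, hν2⟩ := exists_haar n
    rw [moment_rec μ ν t]
    calc _ ≤ ENNReal.ofReal (Real.exp (5 / 8 * (1 / (n + 1)))) *
          ENNReal.ofReal (Real.exp (5 / 8 * (harmonic n : ℝ))) := mul_le_mul' (one_step μ t ht) (ih ν)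
      _ = _ := by
        rw [← ENNReal.ofReal_mul (Real.exp_pos _).le, ← Real.exp_add, harmonic_succ]
        push_cast
        congr 2
        rw [one_div]; ring

def wk (N k : ℕ) : ℂ := Complex.exp (-((2 * π * k / N : ℝ) : ℂ) * Complex.I)

lemma norm_wk (N k : ℕ) : ‖wk N k‖ = 1 := by
  rw [wk, ← Complex.ofReal_neg, Complex.norm_exp_ofReal_mul_I]

lemma wk_self (N : ℕ) (hN : 1 ≤ N) : wk N N = 1 := by
  have : (N : ℝ) ≠ 0 := by positivity
  rw [wk, mul_div_assoc, div_self this, mul_one]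
  push_cast
  rw [neg_mul, Complex.exp_neg, Complex.exp_two_pi_mul_I, inv_one]

def F (N : ℕ) (U : G N) : ℝ := ∑ k ∈ Finset.Icc 1 N,
  (Real.exp (1 / 2 * S (wk N k • (U : Mat N))) + Real.exp (-(1 / 2) * S (wk N k • (U : Mat N))))

lemma F_pos_term (N : ℕ) (U : G N) (k : ℕ) (hk : k ∈ Finset.Icc 1 N) :
    Real.exp (1 / 2 * |S (wk N k • (U : Mat N))|) ≤ F N U := by
  have h1 : Real.exp (1 / 2 * |S (wk N k • (U : Mat N))|) ≤
      (Real.exp (1 / 2 * S (wk N k • (U : Mat N))) + Real.exp (-(1 / 2) * S (wk N k • (U : Mat N)))) := by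
    rcases abs_choice (S (wk N k • (U : Mat N))) with h | h <;> rw [h]
    · linarith [Real.exp_pos (-(1 / 2) * S (wk N k • (U : Mat N)))]
    · have : 1 / 2 * -S (wk N k • (U : Mat N)) = -(1 / 2) * S (wk N k • (U : Mat N)) := by ring
      rw [this]
      linarith [Real.exp_pos (1 / 2 * S (wk N k • (U : Mat N)))]
  refine h1.trans ?_
  exact Finset.single_le_sum (f := fun k => Real.exp (1 / 2 * S (wk N k • (U : Mat N))) +
    Real.exp (-(1 / 2) * S (wk N k • (U : Mat N)))) (fun i _ => by positivity) hk

lemma measurable_term (N : ℕ) (t : ℝ) (k : ℕ) :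
    Measurable fun U : G N => Real.exp (t * S (wk N k • (U : Mat N))) := by
  have h : (fun U : G N => S (wk N k • (U : Mat N))) =
      (fun U : G N => S (U : Mat N)) ∘ (fun U => rot (wk N k) (norm_wk N k) * U) := by
    ext U; simp only [Function.comp, coe_rot_mul]
  have h2 : Measurable (fun U : G N => S (wk N k • (U : Mat N))) := by
    rw [h]; exact (measurable_S N).comp (measurable_const_mul _)
  exact Real.measurable_exp.comp (h2.const_mul t)

lemma term_bound (N : ℕ) (t : ℝ) (ht : |t| ≤ 1 / 2) (k : ℕ) (μ : Measure (G N)) [IsProbabilityMeasure μ]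
    [μ.IsMulLeftInvariant] :
    Integrable (fun U : G N => Real.exp (t * S (wk N k • (U : Mat N)))) μ ∧
    ∫ U : G N, Real.exp (t * S (wk N k • (U : Mat N))) ∂μ ≤ Real.exp (5 / 8 * (harmonic N : ℝ)) := by
  have h0 : ∫⁻ U : G N, ENNReal.ofReal (Real.exp (t * S (wk N k • (U : Mat N)))) ∂μ ≤
      ENNReal.ofReal (Real.exp (5 / 8 * (harmonic N : ℝ))) := by
    have h := lintegral_mul_left_eq_self (μ := μ) (fun U : G N => ENNReal.ofReal (Real.exp (t * S (U : Mat N))))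
      (rot (wk N k) (norm_wk N k))
    simp only [coe_rot_mul] at h
    rw [h]
    exact moment_bound t ht N μ
  have hnn : 0 ≤ᵐ[μ] (fun U : G N => Real.exp (t * S (wk N k • (U : Mat N)))) := by
    filter_upwards with U; exact (Real.exp_pos _).le
  have hi : Integrable (fun U : G N => Real.exp (t * S (wk N k • (U : Mat N)))) μ := by
    refine ⟨(measurable_term N t k).aestronglyMeasurable, ?_⟩
    rw [hasFiniteIntegral_iff_ofReal hnn]
    exact h0.trans_lt ENNReal.ofReal_lt_top
  refine ⟨hi, ?_⟩
  rw [← ofReal_integral_eq_lintegral_ofReal hi hnn] at h0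
  exact (ENNReal.ofReal_le_ofReal_iff (Real.exp_pos _).le).mp h0

lemma F_bound (N : ℕ) (μ : Measure (G N)) [IsProbabilityMeasure μ] [μ.IsMulLeftInvariant] :
    Integrable (F N) μ ∧ ∫ U, F N U ∂μ ≤ N * (2 * Real.exp (5 / 8 * (harmonic N : ℝ))) := by
  have hp := fun k => term_bound N (1 / 2) (by norm_num [abs_of_pos]) k μ
  have hn := fun k => term_bound N (-(1 / 2)) (by rw [abs_neg]; norm_num [abs_of_pos]) k μ
  have hi : ∀ k ∈ Finset.Icc 1 N, Integrable (fun U : G N => Real.exp (1 / 2 * S (wk N k • (U : Mat N))) +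
      Real.exp (-(1 / 2) * S (wk N k • (U : Mat N)))) μ := fun k _ => (hp k).1.add (hn k).1
  refine ⟨integrable_finsetSum _ hi, ?_⟩
  unfold F
  rw [integral_finsetSum _ hi]
  calc _ ≤ ∑ k ∈ Finset.Icc 1 N, (2 * Real.exp (5 / 8 * (harmonic N : ℝ))) := by
        apply Finset.sum_le_sum
        intro k _
        rw [integral_add (hp k).1 (hn k).1]
        linarith [(hp k).2, (hn k).2]
    _ = _ := by simp

lemma maxDev_bound (N : ℕ) (hN : 1 ≤ N) (U : G N)
    (h : ∀ k, (1 - wk N k • (U : Mat N)).det ≠ 0) :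
    Real.exp (π / 4 * maxDev N U) ≤ F N U := by
  have hNmem : N ∈ Finset.Icc 1 N := Finset.mem_Icc.mpr ⟨hN, le_rfl⟩
  have : Nonempty (Finset.Icc 1 N : Finset ℕ) := ⟨⟨N, hNmem⟩⟩
  obtain ⟨k, hk⟩ := exists_eq_ciSup_of_finite
    (f := fun k : (Finset.Icc 1 N : Finset ℕ) => |(countFun N U (2 * π * (k : ℕ) / N) : ℝ) - ((k : ℕ) : ℝ)|)
  have hmd : maxDev N U = |(countFun N U (2 * π * (k : ℕ) / N) : ℝ) - ((k : ℕ) : ℝ)| := hk.symm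
  have hk1 := Finset.mem_Icc.mp k.2
  have hNpos : (0 : ℝ) < N := by positivity
  have hkpos : (0 : ℝ) < (k : ℕ) := by exact_mod_cast hk1.1
  have hkN : ((k : ℕ) : ℝ) ≤ N := by exact_mod_cast hk1.2
  have hpi := Real.pi_pos
  have h1 := h N
  rw [wk_self N hN, one_smul] at h1
  have hc := count_identity N U (2 * π * (k : ℕ) / N) (by positivity)
    (by rw [div_le_iff₀ hNpos]; gcongr) h1 (h k)
  have hc2 : S (wk N k • (U : Mat N)) - S (U : Mat N) =
      π * ((countFun N U (2 * π * (k : ℕ) / N) : ℝ) - ((k : ℕ) : ℝ)) := by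
    rw [show wk N k = Complex.exp (-((2 * π * (k : ℕ) / N : ℝ) : ℂ) * Complex.I) from rfl, hc]
    field_simp
    ring
  have habs : |S (wk N k • (U : Mat N)) - S (U : Mat N)| = π * maxDev N U := by
    rw [hc2, abs_mul, abs_of_pos hpi, hmd]
  have hle := abs_sub (S (wk N k • (U : Mat N))) (S (U : Mat N))
  have hFN := F_pos_term N U N hNmem
  rw [wk_self N hN, one_smul] at hFN
  have hFk := F_pos_term N U k k.2
  rcases le_total |S (wk N k • (U : Mat N))| |S (U : Mat N)| with hh | hh
  · refine le_trans (Real.exp_le_exp.mpr ?_) hFN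
    linarith
  · refine le_trans (Real.exp_le_exp.mpr ?_) hFk
    linarith

theorem final (N : ℕ) (hN : 1 ≤ N) (μ : Measure (G N)) [IsProbabilityMeasure μ] [μ.IsMulLeftInvariant] :
    ∫ U, maxDev N U ∂μ ≤ 4 * Real.log (Real.exp 1 * N) + 2 / Real.exp 1 ^ 2 := by
  have hNpos : (1 : ℝ) ≤ N := by exact_mod_cast hN
  have hlN : 0 ≤ Real.log N := Real.log_nonneg hNpos
  have hlog : Real.log (Real.exp 1 * N) = 1 + Real.log N := by
    rw [Real.log_mul (Real.exp_pos _).ne' (by positivity), Real.log_exp]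
  rw [hlog]
  have he2 : 0 < 2 / Real.exp 1 ^ 2 := by positivity
  by_cases hIntg : Integrable (maxDev N) μ
  swap
  · rw [integral_undef hIntg]; linarith
  set a : ℝ := N * (2 * Real.exp (5 / 8 * (harmonic N : ℝ))) with ha
  have hapos : 0 < a := by positivity
  obtain ⟨hFi, hFb⟩ := F_bound N μ
  have hdet : ∀ᵐ U : G N ∂μ, ∀ k, (1 - wk N k • (U : Mat N)).det ≠ 0 :=
    ae_all_iff.mpr fun k => ae_det μ (wk N k) (norm_wk N k)
  have hpt : ∀ᵐ U : G N ∂μ, π / 4 * maxDev N U ≤ (Real.log a - 1) + a⁻¹ * F N U := by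
    filter_upwards [hdet] with U hU
    have h1 := maxDev_bound N hN U hU
    have h2 := Real.add_one_le_exp (π / 4 * maxDev N U - Real.log a)
    rw [Real.exp_sub, Real.exp_log hapos] at h2
    have h3 : Real.exp (π / 4 * maxDev N U) / a ≤ a⁻¹ * F N U := by
      rw [div_eq_inv_mul]; gcongr
    linarith
  have h4 := integral_mono_ae (hIntg.const_mul (π / 4)) ((integrable_const (Real.log a - 1)).add (hFi.const_mul a⁻¹)) hpt
  have h5 : ∫ U, ((Real.log a - 1) + a⁻¹ * F N U) ∂μ = (Real.log a - 1) + a⁻¹ * ∫ U, F N U ∂μ := by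
    rw [integral_add (integrable_const _) (hFi.const_mul _), integral_const_mul]
    simp
  have h6 : a⁻¹ * ∫ U, F N U ∂μ ≤ 1 := by
    rw [inv_mul_le_iff₀ hapos, mul_one]; exact hFb
  have h7 : π / 4 * ∫ U, maxDev N U ∂μ ≤ Real.log a := by
    rw [integral_const_mul] at h4
    have h4' : π / 4 * ∫ U, maxDev N U ∂μ ≤ ∫ U, ((Real.log a - 1) + a⁻¹ * F N U) ∂μ := h4
    rw [h5] at h4'
    linarith
  have h8 : Real.log a = Real.log N + (Real.log 2 + 5 / 8 * (harmonic N : ℝ)) := by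
    rw [ha, Real.log_mul (by positivity) (by positivity), Real.log_mul (by norm_num) (Real.exp_pos _).ne', Real.log_exp]
  have h9 := harmonic_le_one_add_log N
  have hpi := Real.pi_gt_three
  have hl2 := Real.log_two_lt_d9
  have hX : 0 ≤ ∫ U, maxDev N U ∂μ := integral_nonneg fun U => Real.iSup_nonneg fun k => abs_nonneg _
  have h10 : 3 / 4 * ∫ U, maxDev N U ∂μ ≤ π / 4 * ∫ U, maxDev N U ∂μ := by gcongr
  linarith

end HaarDev
end

/-- For a Haar-distributed `N × N` unitary matrix,
`𝔼[max_{1 ≤ k ≤ N} |𝒩_{2πk/N} − k|] ≤ 4 log(eN) + 2/e²`. -/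
theorem expected_max_deviation_bound
    (N : ℕ) (hN : 1 ≤ N) (ℙ : Measure (Matrix.unitaryGroup (Fin N) ℂ))
    (hprob : IsProbabilityMeasure ℙ) (hhaar : ℙ.IsHaarMeasure) :
    ∫ U, maxDev N U ∂ℙ ≤ 4 * Real.log (Real.exp 1 * N) + 2 / Real.exp 1 ^ 2 := by
  have := hprob
  have := hhaar
  exact HaarDev.final N hN ℙ
end
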